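/- arXiv:1910.03036 — 4 statements merged into one kernel-verified Lean document; each statement's English description precedes it below -/
import Mathlib

section
/- (Ingham's Tauberian theorem, real-axis variant.) Let D, \delta(t), \varphi, \chi, A, f, \psi be as in Ingham's Tauberian theorem, and suppose conditions (a) \varphi, \chi holomorphic on D and positive on (0,h]; (b) -t\varphi'(t) \to \infty as t \to 0^+; (c) -\delta(t)\varphi'(t)/(t\sqrt{\varphi''(t)}) \to \infty as t \to 0^+; (d) \varphi''(t+z) = O(\varphi''(t)) and \chi(t+z) = O(\chi(t)) uniformly over |z| < \delta(t) as t \to 0^+, all hold, and additionally that for some fixed k \in \mathbb{R} the function t \mapsto -t^k \varphi'(t) decreases to 0 as t \to 0^+. Assume (i') f(t) \sim \chi(t) e^{\varphi(t)} as t \to 0^+ along the positive reals, and (ii) for each fixed \Delta > 0, f(z) = O(\chi(|z|) e^{\varphi(|z|)}) as z \to 0 in the region |Im(z)| \le \Delta\,Re(z). Then A(x) \sim \frac{\chi(\psi(x)) e^{\varphi(\psi(x)) + x\psi(x)}}{\psi(x) \sqrt{2\pi \varphi''(\psi(x))}} as x \to \infty. -/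
open Filter Topology MeasureTheory Set

noncomputable section

/-- The squared modulus of `∫ ξ in 0..1, exp (ξ * (1 + i u))`. It is band limited, strictly
positive, and of exact order `1 / (1 + u ^ 2)`. -/
def bandKernel (u : ℝ) : ℝ :=
  ‖∫ ξ in (0:ℝ)..1, Complex.exp ((1 + u * Complex.I) * ξ)‖ ^ 2

lemma one_add_mul_I_ne_zero (u : ℝ) : (1 + u * Complex.I : ℂ) ≠ 0 := by
  intro h
  simpa using congrArg Complex.re h

lemma bandKernel_eq (u : ℝ) :
    bandKernel u = ‖Complex.exp (1 + u * Complex.I) - 1‖ ^ 2 / (1 + u ^ 2) := by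
  have h1 : ‖(1 + u * Complex.I : ℂ)‖ ^ 2 = 1 + u ^ 2 := by
    rw [Complex.sq_norm, Complex.normSq_apply]; simp; ring
  rw [bandKernel, integral_exp_mul_complex (one_add_mul_I_ne_zero u), norm_div, div_pow, h1]
  simp

lemma norm_exp_one_add_mul_I (u : ℝ) : ‖Complex.exp (1 + u * Complex.I)‖ = Real.exp 1 := by
  rw [Complex.norm_exp]; simp

lemma one_div_le_bandKernel (u : ℝ) : 1 / (1 + u ^ 2) ≤ bandKernel u := by
  rw [bandKernel_eq]
  have h := norm_sub_norm_le (Complex.exp (1 + u * Complex.I)) 1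
  rw [norm_exp_one_add_mul_I, norm_one] at h
  have h2 := Real.add_one_le_exp (1:ℝ)
  gcongr
  nlinarith

lemma bandKernel_le (u : ℝ) : bandKernel u ≤ (Real.exp 1 + 1) ^ 2 * (1 + u ^ 2)⁻¹ := by
  rw [bandKernel_eq, div_eq_mul_inv]
  have h := norm_sub_le (Complex.exp (1 + u * Complex.I)) 1
  rw [norm_exp_one_add_mul_I, norm_one] at h
  gcongr

lemma bandKernel_pos (u : ℝ) : 0 < bandKernel u :=
  lt_of_lt_of_le (by positivity) (one_div_le_bandKernel u)

lemma continuous_bandKernel : Continuous bandKernel := by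
  have : bandKernel = fun u : ℝ => ‖Complex.exp (1 + u * Complex.I) - 1‖ ^ 2 / (1 + u ^ 2) :=
    funext bandKernel_eq
  rw [this]
  refine Continuous.div (by fun_prop) (by fun_prop) fun u => by positivity

lemma integrable_bandKernel : Integrable bandKernel := by
  refine Integrable.mono' (integrable_inv_one_add_sq.const_mul ((Real.exp 1 + 1) ^ 2))
    continuous_bandKernel.aestronglyMeasurable (Eventually.of_forall fun u => ?_)
  rw [Real.norm_of_nonneg (bandKernel_pos u).le]
  exact bandKernel_le u

lemma bandKernel_le_const (u : ℝ) : bandKernel u ≤ (Real.exp 1 + 1) ^ 2 :=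
  (bandKernel_le u).trans (mul_le_of_le_one_right (by positivity)
    (inv_le_one_of_one_le₀ (by nlinarith [sq_nonneg u])))

lemma integrable_bandKernel_of_isFiniteMeasure (m : Measure ℝ) [IsFiniteMeasure m] :
    Integrable bandKernel m := by
  refine Integrable.of_bound continuous_bandKernel.aestronglyMeasurable ((Real.exp 1 + 1) ^ 2)
    (Eventually.of_forall fun u => ?_)
  rw [Real.norm_of_nonneg (bandKernel_pos u).le]
  exact bandKernel_le_const u

/-- The uniform probability measure on the unit square. -/
def unitSquareMeasure : Measure (ℝ × ℝ) :=
  (volume.restrict (Ioc (0:ℝ) 1)).prod (volume.restrict (Ioc (0:ℝ) 1))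

instance : IsFiniteMeasure unitSquareMeasure := by
  unfold unitSquareMeasure; infer_instance

lemma ae_mem_unitSquare :
    ∀ᵐ p ∂unitSquareMeasure, p ∈ Ioc (0:ℝ) 1 ×ˢ Ioc (0:ℝ) 1 := by
  rw [unitSquareMeasure, Measure.prod_restrict]
  exact ae_restrict_mem (measurableSet_Ioc.prod measurableSet_Ioc)

lemma bandKernel_mul_exp (u ζ : ℝ) :
    (bandKernel u : ℂ) * Complex.exp (ζ * u * Complex.I) =
      ∫ p, (Real.exp (p.1 + p.2) : ℂ) * Complex.exp (((p.1 - p.2 + ζ : ℝ) : ℂ) * u * Complex.I)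
        ∂unitSquareMeasure := by
  have h1 : (bandKernel u : ℂ) = (∫ ξ in Ioc (0:ℝ) 1, Complex.exp ((1 + u * Complex.I) * ξ)) *
      ∫ ξ in Ioc (0:ℝ) 1, Complex.exp ((1 - u * Complex.I) * ξ) := by
    have h2 : ∫ ξ in Ioc (0:ℝ) 1, Complex.exp ((1 - u * Complex.I) * ξ) =
        (starRingEnd ℂ) (∫ ξ in Ioc (0:ℝ) 1, Complex.exp ((1 + u * Complex.I) * ξ)) := by
      rw [← integral_conj]
      congr 1
      ext ξ
      rw [← Complex.exp_conj]
      simp [sub_eq_add_neg]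
    rw [h2, Complex.mul_conj, bandKernel, intervalIntegral.integral_of_le zero_le_one,
      Complex.normSq_eq_norm_sq]
  rw [h1, ← integral_prod_mul, ← integral_mul_const]
  refine integral_congr_ae (Eventually.of_forall fun p => ?_)
  simp only [Complex.ofReal_exp, ← Complex.exp_add]
  congr 1
  push_cast
  ring

lemma integral_bandKernel_mul_exp (m : Measure ℝ) [IsFiniteMeasure m] (ζ : ℝ) :
    ∫ u, (bandKernel u : ℂ) * Complex.exp (ζ * u * Complex.I) ∂m =
      ∫ p, (Real.exp (p.1 + p.2) : ℂ) * charFun m (p.1 - p.2 + ζ) ∂unitSquareMeasure := by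
  simp_rw [bandKernel_mul_exp, charFun_apply_real, ← integral_const_mul]
  rw [integral_integral_swap]
  refine Integrable.of_bound (C := Real.exp 2) (Continuous.aestronglyMeasurable ?_) ?_
  · simp only [Function.uncurry_def]
    fun_prop
  · have h := (Measure.ae_prod_iff_ae_ae (μ := m) (ν := unitSquareMeasure)
      (p := fun z : ℝ × ℝ × ℝ => z.2 ∈ Ioc (0:ℝ) 1 ×ˢ Ioc (0:ℝ) 1)
      (measurable_snd (measurableSet_Ioc.prod measurableSet_Ioc))).2
      (Eventually.of_forall fun _ => ae_mem_unitSquare)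
    filter_upwards [h] with z hz
    obtain ⟨⟨_, h1⟩, ⟨_, h2⟩⟩ := hz
    simp only [Function.uncurry_def, norm_mul, Complex.norm_real, Real.norm_eq_abs, Real.abs_exp]
    rw [← Complex.ofReal_mul, Complex.norm_exp_ofReal_mul_I, mul_one]
    gcongr
    linarith

/-- Band-limited averages of two probability measures differ by at most the `L¹` distance of their
characteristic functions on a bounded interval. -/
lemma norm_integral_bandKernel_sub_le (m m' : Measure ℝ) [IsProbabilityMeasure m]
    [IsProbabilityMeasure m'] (ζ : ℝ) :
    ‖(∫ u, (bandKernel u : ℂ) * Complex.exp (ζ * u * Complex.I) ∂m) -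
        ∫ u, (bandKernel u : ℂ) * Complex.exp (ζ * u * Complex.I) ∂m'‖ ≤
      Real.exp 2 * ∫ ξ, (Icc (-(1 + |ζ|)) (1 + |ζ|)).indicator
        (fun ξ => ‖charFun m ξ - charFun m' ξ‖) ξ := by
  set g : ℝ → ℝ := (Icc (-(1 + |ζ|)) (1 + |ζ|)).indicator
    (fun ξ => ‖charFun m ξ - charFun m' ξ‖) with hg
  have hm : ∀ (m : Measure ℝ) [IsProbabilityMeasure m], Measurable (charFun m) := fun m _ =>
    measurable_charFun
  have hg0 : ∀ ξ, 0 ≤ g ξ := fun ξ => indicator_nonneg (fun _ _ => norm_nonneg _) _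
  have hgm : Measurable g :=
    Measurable.indicator ((hm m).sub (hm m')).norm measurableSet_Icc
  have hb : ∀ ξ, ‖charFun m ξ - charFun m' ξ‖ ≤ 2 := fun ξ =>
    (norm_sub_le _ _).trans (by
      have h1 := norm_charFun_le_one (μ := m) ξ
      have h2 := norm_charFun_le_one (μ := m') ξ
      linarith)
  have hgb : ∀ ξ, g ξ ≤ 2 := fun ξ =>
    (indicator_le_self' (fun _ _ => norm_nonneg _) ξ).trans (hb ξ)
  have hgi : Integrable g := by
    rw [hg, integrable_indicator_iff measurableSet_Icc]
    refine Integrable.of_bound ((hm m).sub (hm m')).norm.aestronglyMeasurable 2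
      (Eventually.of_forall fun ξ => ?_)
    simpa using hb ξ
  have hInt : ∀ (m : Measure ℝ) [IsProbabilityMeasure m], Integrable (fun p : ℝ × ℝ =>
      (Real.exp (p.1 + p.2) : ℂ) * charFun m (p.1 - p.2 + ζ)) unitSquareMeasure := by
    intro m _
    refine Integrable.of_bound (C := Real.exp 2) (Measurable.aestronglyMeasurable ?_) ?_
    · exact (by fun_prop : Measurable fun p : ℝ × ℝ => (Real.exp (p.1 + p.2) : ℂ)).mul
        ((hm m).comp (by fun_prop))
    · filter_upwards [ae_mem_unitSquare] with p hp
      obtain ⟨⟨_, h1⟩, ⟨_, h2⟩⟩ := hp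
      rw [norm_mul, Complex.norm_real, Real.norm_eq_abs, Real.abs_exp]
      calc _ ≤ Real.exp 2 * 1 := by
            gcongr
            · linarith
            · exact norm_charFun_le_one _
        _ = _ := mul_one _
  rw [integral_bandKernel_mul_exp, integral_bandKernel_mul_exp, ← integral_sub (hInt m) (hInt m')]
  have hgi2 : Integrable (fun p : ℝ × ℝ => g (p.1 - p.2 + ζ)) unitSquareMeasure := by
    refine Integrable.of_bound (C := 2) (hgm.comp (by fun_prop)).aestronglyMeasurable
      (Eventually.of_forall fun p => ?_)
    rw [Real.norm_of_nonneg (hg0 _)]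
    exact hgb _
  calc _ ≤ ∫ p, Real.exp 2 * g (p.1 - p.2 + ζ) ∂unitSquareMeasure := by
        refine norm_integral_le_of_norm_le (hgi2.const_mul _) ?_
        filter_upwards [ae_mem_unitSquare] with p hp
        obtain ⟨⟨h1', h1⟩, ⟨h2', h2⟩⟩ := hp
        rw [← mul_sub, norm_mul, Complex.norm_real, Real.norm_eq_abs, Real.abs_exp, hg,
          indicator_of_mem]
        · gcongr
          linarith
        · have := abs_le.1 (le_refl |ζ|)
          constructor <;> linarith [this.1, this.2]
    _ = Real.exp 2 * ∫ p, g (p.1 - p.2 + ζ) ∂unitSquareMeasure := integral_const_mul _ _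
    _ ≤ _ := by
        gcongr
        rw [unitSquareMeasure, integral_prod_symm _ hgi2]
        calc _ ≤ ∫ η in Ioc (0:ℝ) 1, ∫ ξ, g ξ := by
              refine integral_mono_of_nonneg (Eventually.of_forall fun η => ?_)
                (integrable_const _) (Eventually.of_forall fun η => ?_)
              · exact integral_nonneg fun _ => hg0 _
              · have h3 : ∫ ξ, g ξ = ∫ ξ, g (ξ - η + ζ) := by
                  simp_rw [sub_add]
                  exact (integral_sub_right_eq_self g (η - ζ)).symm
                simp only
                rw [h3]
                have h4 : Integrable fun ξ => g (ξ - η + ζ) := by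
                  simp_rw [sub_add]
                  exact hgi.comp_sub_right _
                exact setIntegral_le_integral h4 (Eventually.of_forall fun _ => hg0 _)
          _ = _ := by simp

lemma charFun_gaussianReal_sq (N ξ : ℝ) :
    charFun (ProbabilityTheory.gaussianReal 0 (N ^ 2).toNNReal) ξ =
      (Real.exp (-(N * ξ) ^ 2 / 2) : ℂ) := by
  rw [ProbabilityTheory.charFun_gaussianReal, Complex.ofReal_exp]
  congr 1
  rw [Real.coe_toNNReal _ (sq_nonneg N)]
  push_cast
  ring

section LocalLimit

variable {μ : ℕ → Measure ℝ} {N : ℕ → ℝ}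

lemma tendsto_integral_bandKernel_sub_gaussian [∀ n, IsProbabilityMeasure (μ n)]
    (hN : Tendsto N atTop atTop)
    (hlim : ∀ y : ℝ, Tendsto (fun n => charFun (μ n) (y / N n)) atTop
      (𝓝 (Real.exp (-y ^ 2 / 2) : ℂ)))
    (hdom : ∀ Δ : ℝ, 0 < Δ → ∃ C c : ℝ, 0 < c ∧ ∀ᶠ n in atTop, ∀ ξ : ℝ, |ξ| ≤ Δ →
      ‖charFun (μ n) ξ‖ ≤ C * Real.exp (-c * (N n * ξ) ^ 2)) (ζ : ℝ) :
    Tendsto (fun n => (N n : ℂ) * ((∫ u, (bandKernel u : ℂ) * Complex.exp (ζ * u * Complex.I) ∂μ n) -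
      ∫ u, (bandKernel u : ℂ) * Complex.exp (ζ * u * Complex.I)
        ∂ProbabilityTheory.gaussianReal 0 (N n ^ 2).toNNReal)) atTop (𝓝 0) := by
  set Δ : ℝ := 1 + |ζ| with hΔ
  have hΔ0 : 0 < Δ := by positivity
  set γ : ℕ → Measure ℝ := fun n => ProbabilityTheory.gaussianReal 0 (N n ^ 2).toNNReal with hγ
  set g : ℕ → ℝ → ℝ := fun n =>
    (Icc (-Δ) Δ).indicator (fun ξ => ‖charFun (μ n) ξ - charFun (γ n) ξ‖) with hg
  have hgm : ∀ n, Measurable (g n) := fun n =>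
    (measurable_charFun.sub measurable_charFun).norm.indicator measurableSet_Icc
  obtain ⟨C, c, hc, hC⟩ := hdom Δ hΔ0
  have key : Tendsto (fun n => ∫ y, g n (y / N n)) atTop (𝓝 (∫ _ : ℝ, (0:ℝ))) := by
    refine tendsto_integral_filter_of_dominated_convergence
      (fun y => |C| * Real.exp (-c * y ^ 2) + Real.exp (-(1/2) * y ^ 2))
      (Eventually.of_forall fun n =>
        ((hgm n).comp (measurable_id.div_const _)).aestronglyMeasurable) ?_
      (((integrable_exp_neg_mul_sq hc).const_mul _).add (integrable_exp_neg_mul_sq (by norm_num)))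
      (Eventually.of_forall fun y => ?_)
    · filter_upwards [hC, hN.eventually_gt_atTop 0] with n hn hNn
      refine Eventually.of_forall fun y => ?_
      have hy : N n * (y / N n) = y := mul_div_cancel₀ y hNn.ne'
      rw [Real.norm_of_nonneg (indicator_nonneg (fun _ _ => norm_nonneg _) _)]
      by_cases hmem : y / N n ∈ Icc (-Δ) Δ
      · simp only [indicator_of_mem hmem]
        refine (norm_sub_le _ _).trans (add_le_add ?_ ?_)
        · have h1 := hn (y / N n) (abs_le.2 hmem)
          rw [hy] at h1
          exact h1.trans (by gcongr; exact le_abs_self C)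
        · simp only [hγ]
          rw [charFun_gaussianReal_sq, hy, Complex.norm_real, Real.norm_eq_abs, Real.abs_exp]
          exact le_of_eq (by ring_nf)
      · simp only [indicator_of_notMem hmem]
        positivity
    · have h1 : Tendsto (fun n => ‖charFun (μ n) (y / N n) - (Real.exp (-y ^ 2 / 2) : ℂ)‖)
          atTop (𝓝 0) := by
        have := ((hlim y).sub_const (Real.exp (-y ^ 2 / 2) : ℂ)).norm
        simpa using this
      refine squeeze_zero' (Eventually.of_forall fun n =>
        indicator_nonneg (fun _ _ => norm_nonneg _) _) ?_ h1
      filter_upwards [hN.eventually_gt_atTop 0] with n hNn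
      refine (indicator_le_self' (fun _ _ => norm_nonneg _) _).trans (le_of_eq ?_)
      simp only [hγ]
      rw [charFun_gaussianReal_sq, mul_div_cancel₀ y hNn.ne']
  simp only [integral_zero] at key
  have key2 := key.const_mul (Real.exp 2)
  rw [mul_zero] at key2
  refine squeeze_zero_norm' ?_ key2
  filter_upwards [hN.eventually_gt_atTop 0] with n hNn
  rw [norm_mul, Complex.norm_real, Real.norm_of_nonneg hNn.le, Measure.integral_comp_div,
    smul_eq_mul, abs_of_pos hNn]
  calc _ ≤ N n * (Real.exp 2 * ∫ ξ, g n ξ) := by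
        gcongr
        exact norm_integral_bandKernel_sub_le (μ n) (γ n) ζ
    _ = _ := by ring

lemma tendsto_integral_bandKernel_gaussian (hN : Tendsto N atTop atTop) (ζ : ℝ) :
    Tendsto (fun n => (N n : ℂ) * ∫ u, (bandKernel u : ℂ) * Complex.exp (ζ * u * Complex.I)
        ∂ProbabilityTheory.gaussianReal 0 (N n ^ 2).toNNReal) atTop
      (𝓝 ((√(2 * Real.pi))⁻¹ * ∫ u, (bandKernel u : ℂ) * Complex.exp (ζ * u * Complex.I))) := by
  have hnorm : ∀ u : ℝ, ‖(bandKernel u : ℂ) * Complex.exp (ζ * u * Complex.I)‖ = bandKernel u := by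
    intro u
    rw [norm_mul, ← Complex.ofReal_mul, Complex.norm_exp_ofReal_mul_I, Complex.norm_real,
      Real.norm_of_nonneg (bandKernel_pos u).le, mul_one]
  have hcont : Continuous fun u : ℝ => (bandKernel u : ℂ) * Complex.exp (ζ * u * Complex.I) :=
    (Complex.continuous_ofReal.comp continuous_bandKernel).mul (by fun_prop)
  have key : Tendsto (fun n => ∫ u : ℝ, (Real.exp (-u ^ 2 / (2 * N n ^ 2)) : ℂ) *
      ((bandKernel u : ℂ) * Complex.exp (ζ * u * Complex.I))) atTop
      (𝓝 (∫ u, (bandKernel u : ℂ) * Complex.exp (ζ * u * Complex.I))) := by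
    refine tendsto_integral_of_dominated_convergence bandKernel
      (fun n => (Continuous.mul (by fun_prop) hcont).aestronglyMeasurable) integrable_bandKernel
      (fun n => Eventually.of_forall fun u => ?_) (Eventually.of_forall fun u => ?_)
    · rw [norm_mul, hnorm, Complex.norm_real, Real.norm_eq_abs, Real.abs_exp]
      refine mul_le_of_le_one_left (bandKernel_pos u).le (Real.exp_le_one_iff.2 ?_)
      rw [neg_div]
      have : 0 ≤ u ^ 2 / (2 * N n ^ 2) := by positivity
      linarith
    · have h1 : Tendsto (fun n => -u ^ 2 / (2 * N n ^ 2)) atTop (𝓝 0) := by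
        refine Tendsto.div_atTop tendsto_const_nhds (Tendsto.const_mul_atTop two_pos ?_)
        exact (tendsto_pow_atTop two_ne_zero).comp hN
      have h2 := (Complex.continuous_ofReal.tendsto _).comp ((Real.continuous_exp.tendsto _).comp h1)
      simpa using h2.mul_const ((bandKernel u : ℂ) * Complex.exp (ζ * u * Complex.I))
  refine (key.const_mul _).congr' ?_
  filter_upwards [hN.eventually_gt_atTop 0] with n hNn
  have hv : (N n ^ 2).toNNReal ≠ 0 := by
    rw [Ne, Real.toNNReal_eq_zero, not_le]; positivity
  rw [ProbabilityTheory.integral_gaussianReal_eq_integral_smul hv, ← integral_const_mul,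
    ← integral_const_mul]
  congr 1
  ext u
  rw [ProbabilityTheory.gaussianPDFReal, Real.coe_toNNReal _ (sq_nonneg _), sub_zero,
    Real.sqrt_mul (by positivity : (0:ℝ) ≤ 2 * Real.pi) (N n ^ 2), Real.sqrt_sq hNn.le, Complex.real_smul]
  have : (N n : ℂ) ≠ 0 := by exact_mod_cast hNn.ne'
  have h2 : (√(2 * Real.pi) : ℂ) ≠ 0 := by
    exact_mod_cast (by positivity : √(2 * Real.pi) ≠ 0)
  push_cast
  field_simp

lemma charFun_tilted_log_bandKernel (m : Measure ℝ) (ζ : ℝ) :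
    charFun (m.tilted (fun u => Real.log (bandKernel u))) ζ =
      (∫ u, (bandKernel u : ℂ) * Complex.exp (ζ * u * Complex.I) ∂m) /
        ((∫ u, bandKernel u ∂m : ℝ) : ℂ) := by
  rw [charFun_apply_real, integral_tilted, ← integral_div]
  simp_rw [Real.exp_log (bandKernel_pos _)]
  congr 1
  ext u
  rw [Complex.real_smul]
  push_cast
  ring

/-- Vague convergence of the rescaled measures `N n • μ n` to a multiple of Lebesgue measure, tested
against continuous functions dominated by the band-limited kernel. -/
lemma tendsto_mul_integral_of_le_bandKernel [∀ n, IsProbabilityMeasure (μ n)]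
    (hN : Tendsto N atTop atTop)
    (hlim : ∀ y : ℝ, Tendsto (fun n => charFun (μ n) (y / N n)) atTop
      (𝓝 (Real.exp (-y ^ 2 / 2) : ℂ)))
    (hdom : ∀ Δ : ℝ, 0 < Δ → ∃ C c : ℝ, 0 < c ∧ ∀ᶠ n in atTop, ∀ ξ : ℝ, |ξ| ≤ Δ →
      ‖charFun (μ n) ξ‖ ≤ C * Real.exp (-c * (N n * ξ) ^ 2))
    {g : ℝ → ℝ} (hg : Continuous g) {K : ℝ} (hgK : ∀ u, |g u| ≤ K * bandKernel u) :
    Tendsto (fun n => N n * ∫ u, g u ∂μ n) atTop (𝓝 ((√(2 * Real.pi))⁻¹ * ∫ u, g u)) := by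
  have hbc : ∀ ζ : ℝ, Tendsto (fun n => (N n : ℂ) *
      ∫ u, (bandKernel u : ℂ) * Complex.exp (ζ * u * Complex.I) ∂μ n) atTop
      (𝓝 ((√(2 * Real.pi))⁻¹ * ∫ u, (bandKernel u : ℂ) * Complex.exp (ζ * u * Complex.I))) := by
    intro ζ
    have := (tendsto_integral_bandKernel_sub_gaussian hN hlim hdom ζ).add
      (tendsto_integral_bandKernel_gaussian hN ζ)
    rw [zero_add] at this
    refine this.congr fun n => ?_
    ring
  have hmass : Tendsto (fun n => N n * ∫ u, bandKernel u ∂μ n) atTop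
      (𝓝 ((√(2 * Real.pi))⁻¹ * ∫ u, bandKernel u)) := by
    have := hbc 0
    simp only [Complex.ofReal_zero, zero_mul, Complex.exp_zero, mul_one, integral_complex_ofReal]
      at this
    have h2 := (Complex.continuous_re.tendsto _).comp this
    refine (h2.congr fun n => ?_).trans (le_of_eq ?_)
    · simp [← Complex.ofReal_mul]
    · rw [← Complex.ofReal_mul, Complex.ofReal_re]
  have hpos : ∀ m : Measure ℝ, [NeZero m] → Integrable bandKernel m → 0 < ∫ u, bandKernel u ∂m := by
    intro m _ hm
    rw [integral_pos_iff_support_of_nonneg (fun u => (bandKernel_pos u).le) hm]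
    have : Function.support bandKernel = univ := by
      ext u; simp [(bandKernel_pos u).ne']
    rw [this]
    exact Measure.measure_univ_pos.2 (NeZero.ne m)
  have hM : 0 < ∫ u, bandKernel u := hpos _ integrable_bandKernel
  have hmn : ∀ n, 0 < ∫ u, bandKernel u ∂μ n := fun n =>
    hpos _ (integrable_bandKernel_of_isFiniteMeasure _)
  have hπ : 0 < √(2 * Real.pi) := by positivity
  have htilt : ∀ m : Measure ℝ, [NeZero m] → Integrable bandKernel m →
      IsProbabilityMeasure (m.tilted (fun u => Real.log (bandKernel u))) := by
    intro m _ hm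
    refine isProbabilityMeasure_tilted ?_
    simpa only [Real.exp_log (bandKernel_pos _)] using hm
  let ρ : ℕ → ProbabilityMeasure ℝ := fun n =>
    ⟨_, htilt (μ n) (integrable_bandKernel_of_isFiniteMeasure _)⟩
  let ρ₀ : ProbabilityMeasure ℝ := ⟨_, htilt volume integrable_bandKernel⟩
  have hconv : Tendsto ρ atTop (𝓝 ρ₀) := by
    refine ProbabilityMeasure.tendsto_of_tendsto_charFun fun ζ => ?_
    change Tendsto (fun n => charFun ((μ n).tilted (fun u => Real.log (bandKernel u))) ζ) atTop
      (𝓝 (charFun ((volume : Measure ℝ).tilted (fun u => Real.log (bandKernel u))) ζ))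
    simp_rw [charFun_tilted_log_bandKernel]
    have h1 := (hbc ζ).div ((Complex.continuous_ofReal.tendsto _).comp hmass)
      (Complex.ofReal_ne_zero.2 (mul_pos (inv_pos.2 hπ) hM).ne')
    refine (h1.congr' ?_).trans (le_of_eq ?_)
    · filter_upwards [hN.eventually_gt_atTop 0] with n hNn
      have h2 : (N n : ℂ) ≠ 0 := by exact_mod_cast hNn.ne'
      simp only [Pi.div_apply, Function.comp_apply, Complex.ofReal_mul]
      exact mul_div_mul_left _ _ h2
    · congr 1
      rw [Complex.ofReal_mul]
      exact mul_div_mul_left _ _ (Complex.ofReal_ne_zero.2 (inv_pos.2 hπ).ne')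
  have hcont : Continuous fun u => g u / bandKernel u :=
    hg.div continuous_bandKernel fun u => (bandKernel_pos u).ne'
  let b : BoundedContinuousFunction ℝ ℝ := BoundedContinuousFunction.ofNormedAddCommGroup
    (fun u => g u / bandKernel u) hcont K fun u => by
      rw [norm_div, Real.norm_of_nonneg (bandKernel_pos u).le, div_le_iff₀ (bandKernel_pos u)]
      exact hgK u
  have hInt := (ProbabilityMeasure.tendsto_iff_forall_integral_tendsto.1 hconv) b
  have hb : ∀ m : Measure ℝ, ∫ u, b u ∂(m.tilted (fun u => Real.log (bandKernel u))) =
      (∫ u, g u ∂m) / ∫ u, bandKernel u ∂m := by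
    intro m
    rw [integral_tilted, ← integral_div]
    simp_rw [Real.exp_log (bandKernel_pos _)]
    congr 1
    ext u
    have := (bandKernel_pos u).ne'
    simp only [b, BoundedContinuousFunction.coe_ofNormedAddCommGroup, smul_eq_mul]
    field_simp
  change Tendsto (fun n => ∫ u, b u ∂((μ n).tilted (fun u => Real.log (bandKernel u)))) atTop
      (𝓝 (∫ u, b u ∂((volume : Measure ℝ).tilted (fun u => Real.log (bandKernel u))))) at hInt
  simp_rw [hb] at hInt
  refine ((hmass.mul hInt).congr fun n => ?_).trans (le_of_eq ?_)
  · have := (hmn n).ne'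
    field_simp
  · congr 1
    field_simp

/-- A continuous cutoff equal to `1` on `(-∞, a]` and to `0` on `[b, ∞)`. -/
def rampCutoff (a b u : ℝ) : ℝ := max 0 (min 1 ((b - u) / (b - a)))

lemma rampCutoff_nonneg (a b u : ℝ) : 0 ≤ rampCutoff a b u := le_max_left _ _

lemma rampCutoff_le_one (a b u : ℝ) : rampCutoff a b u ≤ 1 :=
  max_le zero_le_one (min_le_left _ _)

lemma rampCutoff_of_le {a b u : ℝ} (hab : a < b) (hu : u ≤ a) : rampCutoff a b u = 1 := by
  have : 1 ≤ (b - u) / (b - a) := by rw [one_le_div (by linarith)]; linarith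
  rw [rampCutoff, min_eq_left this, max_eq_right zero_le_one]

lemma rampCutoff_of_ge {a b u : ℝ} (hab : a < b) (hu : b ≤ u) : rampCutoff a b u = 0 := by
  have : (b - u) / (b - a) ≤ 0 := div_nonpos_of_nonpos_of_nonneg (by linarith) (by linarith)
  rw [rampCutoff, max_eq_left ((min_le_right _ _).trans this)]

lemma continuous_rampCutoff (a b : ℝ) : Continuous (rampCutoff a b) := by
  unfold rampCutoff; fun_prop

lemma exp_mul_rampCutoff_le {a b : ℝ} (hab : a < b) (hb : b ≤ 1) (u : ℝ) :
    |Real.exp u * rampCutoff a b u| ≤ 2 * Real.exp 1 * bandKernel u := by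
  have h0 : 0 ≤ Real.exp u * rampCutoff a b u :=
    mul_nonneg (Real.exp_pos u).le (rampCutoff_nonneg _ _ _)
  rw [abs_of_nonneg h0]
  have hk := one_div_le_bandKernel u
  rcases le_total b u with h | h
  · rw [rampCutoff_of_ge hab h, mul_zero]
    have := bandKernel_pos u
    positivity
  · calc _ ≤ Real.exp u * 1 := by gcongr; exact rampCutoff_le_one _ _ _
      _ ≤ 2 * Real.exp 1 * (1 / (1 + u ^ 2)) := by
        rw [mul_one, mul_one_div, le_div_iff₀ (by positivity)]
        rcases le_total u 0 with hu | hu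
        · have h1 := Real.quadratic_le_exp_of_nonneg (neg_nonneg.2 hu)
          have h2 : 1 + u ^ 2 ≤ 2 * Real.exp (-u) := by nlinarith
          have h3 : 1 ≤ Real.exp 1 := Real.one_le_exp zero_le_one
          calc Real.exp u * (1 + u ^ 2) ≤ Real.exp u * (2 * Real.exp (-u)) := by gcongr
            _ = 2 := by rw [mul_left_comm, ← Real.exp_add]; simp
            _ ≤ _ := by linarith
        · have h1 : Real.exp u ≤ Real.exp 1 := Real.exp_le_exp.2 (h.trans hb)
          have h2 : 1 + u ^ 2 ≤ 2 := by nlinarith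
          calc Real.exp u * (1 + u ^ 2) ≤ Real.exp 1 * 2 := by gcongr
            _ = _ := by ring
      _ ≤ _ := by gcongr

lemma integrable_exp_mul_rampCutoff {a b : ℝ} (hab : a < b) (hb : b ≤ 1) (m : Measure ℝ)
    (hm : Integrable bandKernel m) : Integrable (fun u => Real.exp u * rampCutoff a b u) m :=
  (hm.const_mul _).mono'
    (Real.continuous_exp.mul (continuous_rampCutoff a b)).aestronglyMeasurable
    (Eventually.of_forall fun u => exp_mul_rampCutoff_le hab hb u)

lemma exp_le_integral_exp_mul_rampCutoff {a b : ℝ} (hab : a < b) (hb : b ≤ 1) :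
    Real.exp a ≤ ∫ u, Real.exp u * rampCutoff a b u := by
  rw [← integral_exp_Iic a, ← integral_indicator measurableSet_Iic]
  refine integral_mono ((integrableOn_exp_Iic a).integrable_indicator measurableSet_Iic)
    (integrable_exp_mul_rampCutoff hab hb _ integrable_bandKernel) fun u => ?_
  refine indicator_apply_le' (fun hx => ?_) (fun _ => ?_)
  · rw [rampCutoff_of_le hab hx, mul_one]
  · exact mul_nonneg (Real.exp_pos _).le (rampCutoff_nonneg _ _ _)

lemma integral_exp_mul_rampCutoff_le {a b : ℝ} (hab : a < b) (hb : b ≤ 1) :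
    ∫ u, Real.exp u * rampCutoff a b u ≤ Real.exp b := by
  rw [← integral_exp_Iic b, ← integral_indicator measurableSet_Iic]
  refine integral_mono (integrable_exp_mul_rampCutoff hab hb _ integrable_bandKernel)
    ((integrableOn_exp_Iic b).integrable_indicator measurableSet_Iic) fun u => ?_
  refine le_indicator_apply (fun _ => ?_) (fun hx => ?_)
  · exact mul_le_of_le_one_right (Real.exp_pos _).le (rampCutoff_le_one _ _ _)
  · rw [rampCutoff_of_ge hab (not_le.1 hx).le, mul_zero]

/-- Local limit theorem for half lines: the exponential moment on `(-∞, 0]` or `(-∞, 0)` of measures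
whose characteristic functions are nearly Gaussian with standard deviation `N n → ∞`. -/
theorem tendsto_mul_setIntegral_exp [∀ n, IsProbabilityMeasure (μ n)]
    (hN : Tendsto N atTop atTop)
    (hlim : ∀ y : ℝ, Tendsto (fun n => charFun (μ n) (y / N n)) atTop
      (𝓝 (Real.exp (-y ^ 2 / 2) : ℂ)))
    (hdom : ∀ Δ : ℝ, 0 < Δ → ∃ C c : ℝ, 0 < c ∧ ∀ᶠ n in atTop, ∀ ξ : ℝ, |ξ| ≤ Δ →
      ‖charFun (μ n) ξ‖ ≤ C * Real.exp (-c * (N n * ξ) ^ 2))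
    {S : Set ℝ} (hS : MeasurableSet S) (hS1 : Iio 0 ⊆ S) (hS2 : S ⊆ Iic 0) :
    Tendsto (fun n => N n * ∫ u in S, Real.exp u ∂μ n) atTop (𝓝 (√(2 * Real.pi))⁻¹) := by
  have hπ : 0 < (√(2 * Real.pi))⁻¹ := by positivity
  have hlim' : ∀ a b : ℝ, a < b → b ≤ 1 →
      Tendsto (fun n => N n * ∫ u, Real.exp u * rampCutoff a b u ∂μ n) atTop
        (𝓝 ((√(2 * Real.pi))⁻¹ * ∫ u, Real.exp u * rampCutoff a b u)) := fun a b hab hb =>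
    tendsto_mul_integral_of_le_bandKernel hN hlim hdom
      (Real.continuous_exp.mul (continuous_rampCutoff a b)) (exp_mul_rampCutoff_le hab hb)
  have hInt : ∀ n, IntegrableOn Real.exp S (μ n) := by
    intro n
    refine Measure.integrableOn_of_bounded (measure_ne_top _ _)
      Real.continuous_exp.aestronglyMeasurable (M := 1) ?_
    filter_upwards [ae_restrict_mem hS] with u hu
    rw [Real.norm_eq_abs, Real.abs_exp]
    exact Real.exp_le_one_iff.2 (hS2 hu)
  have hbk : ∀ n, Integrable bandKernel (μ n) := fun n =>
    integrable_bandKernel_of_isFiniteMeasure _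
  have hcontexp : ∀ s : ℝ, Tendsto (fun ε : ℝ => (√(2 * Real.pi))⁻¹ * Real.exp (s * ε)) (𝓝[>] 0)
      (𝓝 (√(2 * Real.pi))⁻¹) := by
    intro s
    have : Continuous fun ε : ℝ => (√(2 * Real.pi))⁻¹ * Real.exp (s * ε) := by fun_prop
    simpa using (this.tendsto 0).mono_left nhdsWithin_le_nhds
  rw [tendsto_order]
  constructor
  · intro r hr
    obtain ⟨ε, hε1, hε⟩ := (((hcontexp (-1)).eventually (lt_mem_nhds hr)).and
      self_mem_nhdsWithin).exists
    have h1 : r < (√(2 * Real.pi))⁻¹ * ∫ u, Real.exp u * rampCutoff (-ε) 0 u := by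
      refine hε1.trans_le ?_
      gcongr
      simpa using exp_le_integral_exp_mul_rampCutoff (neg_lt_zero.2 hε) zero_le_one
    filter_upwards [(hlim' (-ε) 0 (by linarith) zero_le_one).eventually (lt_mem_nhds h1),
      hN.eventually_gt_atTop 0] with n hn hNn
    refine hn.trans_le ?_
    gcongr
    rw [← integral_indicator hS]
    refine integral_mono (integrable_exp_mul_rampCutoff (by linarith) zero_le_one _ (hbk n))
      ((hInt n).integrable_indicator hS) fun u => ?_
    refine le_indicator_apply (fun _ => ?_) (fun hx => ?_)
    · exact mul_le_of_le_one_right (Real.exp_pos _).le (rampCutoff_le_one _ _ _)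
    · rw [rampCutoff_of_ge (by linarith) (not_lt.1 fun h => hx (hS1 h)), mul_zero]
  · intro r hr
    obtain ⟨ε, hε1, hε, hε2⟩ := (((hcontexp 1).eventually (gt_mem_nhds hr)).and
      (Ioc_mem_nhdsGT (zero_lt_one (α := ℝ)))).exists
    have h1 : (√(2 * Real.pi))⁻¹ * ∫ u, Real.exp u * rampCutoff 0 ε u < r := by
      refine lt_of_le_of_lt ?_ hε1
      gcongr
      simpa using integral_exp_mul_rampCutoff_le hε hε2
    filter_upwards [(hlim' 0 ε hε hε2).eventually (gt_mem_nhds h1),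
      hN.eventually_gt_atTop 0] with n hn hNn
    refine lt_of_le_of_lt ?_ hn
    gcongr
    rw [← integral_indicator hS]
    refine integral_mono ((hInt n).integrable_indicator hS)
      (integrable_exp_mul_rampCutoff hε hε2 _ (hbk n)) fun u => ?_
    refine indicator_apply_le' (fun hx => ?_) (fun _ => ?_)
    · rw [rampCutoff_of_le hε (hS2 hx), mul_one]
    · exact mul_nonneg (Real.exp_pos _).le (rampCutoff_nonneg _ _ _)

end LocalLimit

section Vitali

lemma tendsto_apply_zero_of_tendsto_ofReal {K : ℕ → ℂ → ℂ} {M R : ℝ} (hR : 0 < R)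
    (hK : ∀ᶠ n in atTop, DifferentiableOn ℂ (K n) (Metric.ball 0 R) ∧
      ∀ z ∈ Metric.ball (0 : ℂ) R, ‖K n z‖ ≤ M)
    (hs : ∀ s : ℝ, s ≠ 0 → |s| < R → Tendsto (fun n => K n s) atTop (𝓝 0)) :
    Tendsto (fun n => K n 0) atTop (𝓝 0) := by
  rw [NormedAddGroup.tendsto_nhds_zero]
  intro ε hε
  have hM : 0 ≤ M := by
    obtain ⟨n, -, hn⟩ := hK.exists
    exact (norm_nonneg _).trans (hn 0 (Metric.mem_ball_self hR))
  have hcont : Tendsto (fun s : ℝ => 2 * M / R * s) (𝓝[>] 0) (𝓝 0) := by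
    have : Continuous fun s : ℝ => 2 * M / R * s := by fun_prop
    simpa using (this.tendsto 0).mono_left nhdsWithin_le_nhds
  obtain ⟨s, hs1, hs0, hsR⟩ := ((hcont.eventually (gt_mem_nhds (half_pos hε))).and
    (Ioo_mem_nhdsGT hR)).exists
  have hsR' : |s| < R := by rwa [abs_of_pos hs0]
  filter_upwards [hK, NormedAddGroup.tendsto_nhds_zero.1 (hs s hs0.ne' hsR') _ (half_pos hε)]
    with n ⟨hd, hb⟩ hn
  have hmem : (s : ℂ) ∈ Metric.ball (0 : ℂ) R := by simpa using hsR'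
  have h1 := Complex.dist_le_div_mul_dist_of_mapsTo_ball (R₂ := 2 * M) hd (fun z hz => by
    rw [Metric.mem_closedBall, dist_eq_norm]
    have := norm_sub_le (K n z) (K n 0)
    have := hb z hz
    have := hb 0 (Metric.mem_ball_self hR)
    linarith) hmem
  rw [dist_eq_norm, dist_zero_right, Complex.norm_real, Real.norm_of_nonneg hs0.le] at h1
  have h2 := norm_sub_norm_le (K n 0) (K n s)
  rw [norm_sub_rev] at h2
  linarith

lemma eventually_norm_le_of_tendsto_ofReal {R : ℝ} (hR : 0 < R) {z : ℂ} (hz : ‖z‖ < R) (J : ℕ) :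
    ∀ (K : ℕ → ℂ → ℂ) (M : ℝ),
    (∀ᶠ n in atTop, DifferentiableOn ℂ (K n) (Metric.ball 0 R) ∧
      ∀ z ∈ Metric.ball (0 : ℂ) R, ‖K n z‖ ≤ M) →
    (∀ s : ℝ, s ≠ 0 → |s| < R → Tendsto (fun n => K n s) atTop (𝓝 0)) →
    ∀ ε > 0, ∀ᶠ n in atTop, ‖K n z‖ ≤ M * (2 * ‖z‖ / R) ^ J + ε := by
  have hzR : z ∈ Metric.ball (0 : ℂ) R := by simpa using hz
  induction J with
  | zero =>
    intro K M hK _ ε hε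
    filter_upwards [hK] with n ⟨_, hb⟩
    have := hb z hzR
    rw [pow_zero, mul_one]
    linarith
  | succ J ih =>
    intro K M hK hs ε hε
    have h0 := tendsto_apply_zero_of_tendsto_ofReal hR hK hs
    have hL := ih (fun n => dslope (K n) 0) (2 * M / R) (by
      filter_upwards [hK] with n ⟨hd, hb⟩
      refine ⟨(Complex.differentiableOn_dslope (Metric.ball_mem_nhds _ hR)).2 hd, fun w hw => ?_⟩
      refine Complex.norm_dslope_le_div_of_mapsTo_ball hd (fun z hz => ?_) hw
      rw [Metric.mem_closedBall, dist_eq_norm]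
      have := norm_sub_le (K n z) (K n 0)
      have := hb z hz
      have := hb 0 (Metric.mem_ball_self hR)
      linarith) (fun s hs0 hsR => by
      have h1 := ((hs s hs0 hsR).sub h0).const_mul ((s : ℂ)⁻¹)
      rw [sub_zero, mul_zero] at h1
      refine h1.congr fun n => ?_
      rw [dslope_of_ne _ (Complex.ofReal_ne_zero.2 hs0), slope_def_field, sub_zero]
      field_simp) (ε / (2 * (‖z‖ + 1))) (by positivity)
    filter_upwards [hL, NormedAddGroup.tendsto_nhds_zero.1 h0 _ (half_pos hε)] with n hn hn0
    have h1 : K n z = K n 0 + z * dslope (K n) 0 z := by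
      have := sub_smul_dslope (K n) 0 z
      rw [sub_zero, smul_eq_mul] at this
      rw [this]; ring
    have h2 : ‖z‖ * (ε / (2 * (‖z‖ + 1))) ≤ ε / 2 := by
      rw [mul_div_assoc', div_le_div_iff₀ (by positivity) two_pos]
      nlinarith [norm_nonneg z]
    calc ‖K n z‖ ≤ ‖K n 0‖ + ‖z‖ * ‖dslope (K n) 0 z‖ := by
          rw [h1, ← norm_mul]; exact norm_add_le _ _
      _ ≤ ε / 2 + ‖z‖ * (2 * M / R * (2 * ‖z‖ / R) ^ J + ε / (2 * (‖z‖ + 1))) := by gcongr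
      _ = ε / 2 + M * (2 * ‖z‖ / R) ^ (J + 1) + ‖z‖ * (ε / (2 * (‖z‖ + 1))) := by ring
      _ ≤ _ := by linarith

/-- A quantitative Vitali theorem: a bounded sequence of holomorphic functions tending to `0` at real
points tends to `0` on the disc of half the radius. -/
theorem tendsto_zero_of_tendsto_ofReal {K : ℕ → ℂ → ℂ} {M R : ℝ} (hR : 0 < R)
    (hK : ∀ᶠ n in atTop, DifferentiableOn ℂ (K n) (Metric.ball 0 R) ∧
      ∀ z ∈ Metric.ball (0 : ℂ) R, ‖K n z‖ ≤ M)
    (hs : ∀ s : ℝ, s ≠ 0 → |s| < R → Tendsto (fun n => K n s) atTop (𝓝 0)) {z : ℂ}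
    (hz : ‖z‖ < R / 2) : Tendsto (fun n => K n z) atTop (𝓝 0) := by
  rw [NormedAddGroup.tendsto_nhds_zero]
  intro ε hε
  have hlt : 2 * ‖z‖ / R < 1 := by rw [div_lt_one hR]; linarith
  have hpow := (tendsto_pow_atTop_nhds_zero_of_lt_one (by positivity) hlt).const_mul M
  rw [mul_zero] at hpow
  obtain ⟨J, hJ⟩ := (hpow.eventually (gt_mem_nhds (half_pos hε))).exists
  filter_upwards [eventually_norm_le_of_tendsto_ofReal hR (by linarith) J K M hK hs (ε / 3)
    (by positivity)] with n hn
  linarith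

end Vitali

lemma hasDerivAt_im_comp_ofReal {g : ℂ → ℂ} {g' : ℂ} {t : ℝ} (hg : HasDerivAt g g' t) :
    HasDerivAt (fun r : ℝ => (g r).im) g'.im t :=
  Complex.imCLM.hasFDerivAt.comp_hasDerivAt t hg.comp_ofReal

lemma im_deriv_eq_zero {g : ℂ → ℂ} {t : ℝ} (hg : DifferentiableAt ℂ g t)
    (him : ∀ᶠ r : ℝ in 𝓝 t, (g r).im = 0) : (deriv g t).im = 0 :=
  (hasDerivAt_im_comp_ofReal hg.hasDerivAt).unique
    ((hasDerivAt_const t (0 : ℝ)).congr_of_eventuallyEq him)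

/-- The regularity of `φ` and `χ` near `0` in Ingham's theorem, on an interval `(0, T]` where all
the asymptotic conditions are in force. -/
structure InghamLocal (D : Set ℂ) (T C k : ℝ) (δ : ℝ → ℝ) (φ χ : ℂ → ℂ) : Prop where
  isOpen : IsOpen D
  differentiableOn_phi : DifferentiableOn ℂ φ D
  differentiableOn_chi : DifferentiableOn ℂ χ D
  T_pos : 0 < T
  one_le_C : 1 ≤ C
  k_pos : 0 < k
  δ_pos : ∀ t ∈ Ioc 0 T, 0 < δ t
  δ_le : ∀ t ∈ Ioc 0 T, δ t ≤ t
  ball_subset : ∀ t ∈ Ioc 0 T, Metric.ball (t : ℂ) (δ t) ⊆ D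
  phi_im : ∀ t ∈ Ioc 0 T, (φ t).im = 0
  chi_im : ∀ t ∈ Ioc 0 T, (χ t).im = 0
  chi_pos : ∀ t ∈ Ioc 0 T, 0 < (χ t).re
  deriv_im : ∀ t ∈ Ioc 0 T, (deriv φ t).im = 0
  deriv_neg : ∀ t ∈ Ioc 0 T, (deriv φ t).re < 0
  deriv2_im : ∀ t ∈ Ioc 0 T, (iteratedDeriv 2 φ t).im = 0
  deriv2_pos : ∀ t ∈ Ioc 0 T, 0 < (iteratedDeriv 2 φ t).re
  norm_deriv2_le : ∀ t ∈ Ioc 0 T, ∀ z : ℂ, ‖z‖ < δ t →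
    ‖iteratedDeriv 2 φ (t + z)‖ ≤ C * (iteratedDeriv 2 φ t).re
  norm_chi_le : ∀ t ∈ Ioc 0 T, ∀ z : ℂ, ‖z‖ < δ t → ‖χ (t + z)‖ ≤ C * (χ t).re
  deriv2_le : ∀ t ∈ Ioc 0 T, t * (iteratedDeriv 2 φ t).re ≤ k * -(deriv φ t).re
  deriv_growth : ∀ t r : ℝ, 0 < t → t ≤ r → r ≤ T →
    -(deriv φ t).re * (t / r) ^ k ≤ -(deriv φ r).re
  tendsto_neg_mul_deriv : Tendsto (fun t : ℝ => -t * (deriv φ t).re) (𝓝[>] 0) atTop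
  tendsto_div_sqrt : Tendsto (fun t : ℝ =>
    -δ t * (deriv φ t).re / (t * √(iteratedDeriv 2 φ t).re)) (𝓝[>] 0) atTop

lemma exists_inghamLocal {D : Set ℂ} (hDopen : IsOpen D) {h : ℝ} (hh : 0 < h)
    (hD : ∀ t : ℝ, 0 < t → t ≤ h → (t : ℂ) ∈ D)
    {δ : ℝ → ℝ} (hδ : ∀ t : ℝ, 0 < t → t ≤ h → δ t = Metric.infDist (t : ℂ) Dᶜ)
    {φ χ : ℂ → ℂ} (hφdiff : DifferentiableOn ℂ φ D) (hχdiff : DifferentiableOn ℂ χ D)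
    (hφpos : ∀ t : ℝ, 0 < t → t ≤ h → (φ (t : ℂ)).im = 0 ∧ 0 < (φ (t : ℂ)).re)
    (hχpos : ∀ t : ℝ, 0 < t → t ≤ h → (χ (t : ℂ)).im = 0 ∧ 0 < (χ (t : ℂ)).re)
    (hb : Tendsto (fun t : ℝ => -t * (deriv φ (t : ℂ)).re) (𝓝[>] (0:ℝ)) atTop)
    (hc : Tendsto (fun t : ℝ =>
        -δ t * (deriv φ (t : ℂ)).re / (t * Real.sqrt ((iteratedDeriv 2 φ (t : ℂ)).re)))
      (𝓝[>] (0:ℝ)) atTop)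
    (hd : ∃ C t₀ : ℝ, 0 < t₀ ∧ ∀ t : ℝ, 0 < t → t ≤ t₀ → ∀ z : ℂ, ‖z‖ < δ t →
        ‖iteratedDeriv 2 φ ((t : ℂ) + z)‖ ≤ C * ‖iteratedDeriv 2 φ (t : ℂ)‖ ∧
        ‖χ ((t : ℂ) + z)‖ ≤ C * ‖χ (t : ℂ)‖)
    {k : ℝ} (hk : MonotoneOn (fun t : ℝ => -(t ^ k) * (deriv φ (t : ℂ)).re) (Ioc (0:ℝ) h)) :
    ∃ T C : ℝ, T ≤ h ∧ InghamLocal D T C k δ φ χ := by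
  obtain ⟨C, t₀, ht₀, hC⟩ := hd
  have hdiff1 : DifferentiableOn ℂ (deriv φ) D := hφdiff.deriv hDopen
  have hit : iteratedDeriv 2 φ = deriv (deriv φ) := by
    rw [iteratedDeriv_succ, iteratedDeriv_one]
  have hφ0 : ∀ t ∈ Ioo 0 h, HasDerivAt φ (deriv φ t) (t : ℂ) := fun t ht =>
    (hφdiff.differentiableAt (hDopen.mem_nhds (hD t ht.1 ht.2.le))).hasDerivAt
  have hφ1 : ∀ t ∈ Ioo 0 h, HasDerivAt (deriv φ) (iteratedDeriv 2 φ t) (t : ℂ) := fun t ht => by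
    rw [hit]
    exact (hdiff1.differentiableAt (hDopen.mem_nhds (hD t ht.1 ht.2.le))).hasDerivAt
  have him1 : ∀ t ∈ Ioo 0 h, (deriv φ t).im = 0 := fun t ht => by
    refine im_deriv_eq_zero (hφ0 t ht).differentiableAt ?_
    filter_upwards [isOpen_Ioo.mem_nhds ht] with r hr using (hφpos r hr.1 hr.2.le).1
  have him2 : ∀ t ∈ Ioo 0 h, (iteratedDeriv 2 φ t).im = 0 := fun t ht => by
    rw [hit]
    refine im_deriv_eq_zero (hφ1 t ht).differentiableAt ?_
    filter_upwards [isOpen_Ioo.mem_nhds ht] with r hr using him1 r hr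
  have hdiv : ∀ᶠ t in 𝓝[>] (0:ℝ), t < h ∧ t ≤ t₀ ∧ 0 < -t * (deriv φ (t : ℂ)).re ∧
      0 < -δ t * (deriv φ (t : ℂ)).re / (t * √(iteratedDeriv 2 φ (t : ℂ)).re) := by
    filter_upwards [Ioo_mem_nhdsGT hh, Ioc_mem_nhdsGT ht₀, hb.eventually_gt_atTop 0,
      hc.eventually_gt_atTop 0] with t h1 h2 h3 h4 using ⟨h1.2, h2.2, h3, h4⟩
  obtain ⟨T, hT0, hT⟩ := mem_nhdsGT_iff_exists_Ioc_subset.1 hdiv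
  have hT0 : 0 < T := hT0
  have hIoo : ∀ t ∈ Ioc 0 T, t ∈ Ioo 0 h := fun t ht => ⟨ht.1, (hT ht).1⟩
  have hneg : ∀ t ∈ Ioc 0 T, (deriv φ t).re < 0 := fun t ht => by
    have := (hT ht).2.2.1
    have := ht.1
    by_contra! hcon
    nlinarith
  have hsqrt : ∀ t ∈ Ioc 0 T, δ t ≠ 0 ∧ √(iteratedDeriv 2 φ (t : ℂ)).re ≠ 0 := fun t ht => by
    have := (hT ht).2.2.2
    constructor <;> intro h0 <;> simp [h0] at this
  have hpos2 : ∀ t ∈ Ioc 0 T, 0 < (iteratedDeriv 2 φ t).re := fun t ht => by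
    by_contra! hcon
    exact (hsqrt t ht).2 (Real.sqrt_eq_zero_of_nonpos hcon)
  have hδpos : ∀ t ∈ Ioc 0 T, 0 < δ t := fun t ht => by
    refine lt_of_le_of_ne ?_ (hsqrt t ht).1.symm
    rw [hδ t ht.1 (hIoo t ht).2.le]
    exact Metric.infDist_nonneg
  have h0D : (0 : ℂ) ∉ D := fun h0 => by
    have h1 : Tendsto (fun t : ℝ => -t * (deriv φ (t : ℂ)).re) (𝓝[>] 0)
        (𝓝 (-0 * (deriv φ ((0 : ℝ) : ℂ)).re)) := by
      have hct : ContinuousAt (deriv φ) ((0 : ℝ) : ℂ) := by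
        simpa using (hdiff1.differentiableAt (hDopen.mem_nhds h0)).continuousAt
      have h2 : ContinuousAt (fun t : ℝ => -t * (deriv φ (t : ℂ)).re) 0 :=
        continuous_neg.continuousAt.mul
          (Complex.continuous_re.continuousAt.comp (ContinuousAt.comp hct (by fun_prop)))
      exact h2.tendsto.mono_left nhdsWithin_le_nhds
    exact not_tendsto_nhds_of_tendsto_atTop hb _ h1
  have hderiv2 : ∀ t ∈ Ioc 0 T, t * (iteratedDeriv 2 φ t).re ≤ k * -(deriv φ t).re :=
    fun t ht => by
    have h1 : HasDerivAt (fun r : ℝ => -(r ^ k) * (deriv φ (r : ℂ)).re)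
        (-(k * t ^ (k - 1)) * (deriv φ t).re + -(t ^ k) * (iteratedDeriv 2 φ t).re) t :=
      (Real.hasDerivAt_rpow_const (Or.inl ht.1.ne')).neg.mul (hφ1 t (hIoo t ht)).real_of_complex
    have h2 := hk.derivWithin_nonneg (x := t)
    rw [derivWithin_of_mem_nhds (Ioc_mem_nhds ht.1 (hIoo t ht).2), h1.deriv,
      Real.rpow_sub_one ht.1.ne'] at h2
    have h3 : 0 < t ^ k := Real.rpow_pos_of_pos ht.1 k
    have h4 : -(k * (t ^ k / t)) * (deriv φ t).re + -(t ^ k) * (iteratedDeriv 2 φ t).re =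
        (t ^ k / t) * (k * -(deriv φ t).re - t * (iteratedDeriv 2 φ t).re) := by
      have := ht.1.ne'
      field_simp
      ring
    rw [h4] at h2
    linarith [nonneg_of_mul_nonneg_right h2 (div_pos h3 ht.1)]
  refine ⟨T, max C 1, (hIoo T ⟨hT0, le_rfl⟩).2.le,
    { isOpen := hDopen
      differentiableOn_phi := hφdiff
      differentiableOn_chi := hχdiff
      T_pos := hT0
      one_le_C := le_max_right _ _
      k_pos := ?_
      δ_pos := hδpos
      δ_le := fun t ht => ?_
      ball_subset := fun t ht z hz => ?_
      phi_im := fun t ht => (hφpos t ht.1 (hIoo t ht).2.le).1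
      chi_im := fun t ht => (hχpos t ht.1 (hIoo t ht).2.le).1
      chi_pos := fun t ht => (hχpos t ht.1 (hIoo t ht).2.le).2
      deriv_im := fun t ht => him1 t (hIoo t ht)
      deriv_neg := hneg
      deriv2_im := fun t ht => him2 t (hIoo t ht)
      deriv2_pos := hpos2
      norm_deriv2_le := fun t ht z hz => ?_
      norm_chi_le := fun t ht z hz => ?_
      deriv2_le := hderiv2
      deriv_growth := fun t r ht htr hr => ?_
      tendsto_neg_mul_deriv := hb
      tendsto_div_sqrt := hc }⟩
  · have hTm : T ∈ Ioc 0 T := ⟨hT0, le_rfl⟩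
    have h1 := hderiv2 T hTm
    have h2 := mul_pos hT0 (hpos2 T hTm)
    have h3 := hneg T hTm
    by_contra! hcon
    nlinarith
  · rw [hδ t ht.1 (hIoo t ht).2.le]
    refine (Metric.infDist_le_dist_of_mem (show (0 : ℂ) ∈ Dᶜ from h0D)).trans (le_of_eq ?_)
    rw [dist_zero_right, Complex.norm_real, Real.norm_of_nonneg ht.1.le]
  · rw [Metric.mem_ball, hδ t ht.1 (hIoo t ht).2.le, dist_comm] at hz
    exact not_not.1 (Metric.notMem_of_dist_lt_infDist hz)
  · refine ((hC t ht.1 (hT ht).2.1 z hz).1).trans ?_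
    rw [← Complex.abs_re_eq_norm.2 (him2 t (hIoo t ht)), abs_of_pos (hpos2 t ht)]
    exact mul_le_mul_of_nonneg_right (le_max_left _ _) (hpos2 t ht).le
  · obtain ⟨h1, h2⟩ := hχpos t ht.1 (hIoo t ht).2.le
    refine ((hC t ht.1 (hT ht).2.1 z hz).2).trans ?_
    rw [← Complex.abs_re_eq_norm.2 h1, abs_of_pos h2]
    exact mul_le_mul_of_nonneg_right (le_max_left _ _) h2.le
  · have hr0 : 0 < r := ht.trans_le htr
    have h1 := hk ⟨ht, htr.trans (hIoo r ⟨hr0, hr⟩).2.le⟩ ⟨hr0, (hIoo r ⟨hr0, hr⟩).2.le⟩ htr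
    have h2 : 0 < r ^ k := Real.rpow_pos_of_pos hr0 k
    rw [Real.div_rpow ht.le hr0.le, mul_div_assoc', div_le_iff₀ h2]
    simp only at h1
    linarith

/-- Second-order Taylor estimate on a disc where the second derivative is close to a constant. -/
lemma norm_sub_taylor_two_le {g g₁ g₂ : ℂ → ℂ} {R ε : ℝ} {a : ℂ}
    (hg : ∀ z ∈ Metric.ball (0 : ℂ) R, HasDerivAt g (g₁ z) z)
    (hg₁ : ∀ z ∈ Metric.ball (0 : ℂ) R, HasDerivAt g₁ (g₂ z) z)
    (hb : ∀ z ∈ Metric.ball (0 : ℂ) R, ‖g₂ z - a‖ ≤ ε) {z : ℂ} (hz : ‖z‖ < R) :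
    ‖g z - g 0 - g₁ 0 * z - a * z ^ 2 / 2‖ ≤ ε * ‖z‖ ^ 2 := by
  have hR : 0 < R := (norm_nonneg z).trans_lt hz
  have h0 : (0 : ℂ) ∈ Metric.ball (0 : ℂ) R := Metric.mem_ball_self hR
  have hε : 0 ≤ ε := (norm_nonneg _).trans (hb 0 h0)
  have h1 : ∀ w ∈ Metric.ball (0 : ℂ) R, ‖g₁ w - g₁ 0 - a * w‖ ≤ ε * ‖w‖ := by
    intro w hw
    have := (convex_ball (0 : ℂ) R).norm_image_sub_le_of_norm_hasDerivWithin_le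
      (f := fun w => g₁ w - a * w) (f' := fun w => g₂ w - a * 1)
      (fun x hx => ((hg₁ x hx).sub ((hasDerivAt_id x).const_mul a)).hasDerivWithinAt)
      (fun x hx => by simpa using hb x hx) h0 hw
    simp only [mul_zero, sub_zero] at this
    rwa [sub_right_comm]
  have hsub : Metric.closedBall (0 : ℂ) ‖z‖ ⊆ Metric.ball (0 : ℂ) R :=
    Metric.closedBall_subset_ball hz
  have h2 := (convex_closedBall (0 : ℂ) ‖z‖).norm_image_sub_le_of_norm_hasDerivWithin_le
      (f := fun w => g w - g₁ 0 * w - a / 2 * w ^ 2)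
      (f' := fun w => g₁ w - g₁ 0 * 1 - a / 2 * ((2 : ℕ) * w ^ (2 - 1))) (C := ε * ‖z‖)
      (fun x hx => (((hg x (hsub hx)).sub ((hasDerivAt_id x).const_mul _)).sub
        ((hasDerivAt_pow 2 x).const_mul _)).hasDerivWithinAt)
      (fun x hx => by
        have h3 := h1 x (hsub hx)
        rw [mem_closedBall_zero_iff] at hx
        refine (le_of_eq ?_).trans (h3.trans (by gcongr))
        congr 1
        push_cast
        ring)
      (Metric.mem_closedBall_self (norm_nonneg z)) (show z ∈ Metric.closedBall 0 ‖z‖ by simp)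
  refine (le_of_eq ?_).trans (h2.trans (le_of_eq ?_))
  · congr 1
    ring
  · rw [sub_zero]; ring

namespace InghamLocal

variable {D : Set ℂ} {T C k : ℝ} {δ : ℝ → ℝ} {φ χ : ℂ → ℂ}

lemma add_mem (H : InghamLocal D T C k δ φ χ) {t : ℝ} (ht : t ∈ Ioc 0 T) {z : ℂ}
    (hz : ‖z‖ < δ t) : (t : ℂ) + z ∈ D :=
  H.ball_subset t ht (by simpa [dist_eq_norm] using hz)

lemma mem (H : InghamLocal D T C k δ φ χ) {t : ℝ} (ht : t ∈ Ioc 0 T) : (t : ℂ) ∈ D := by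
  simpa using H.add_mem ht (z := 0) (by simpa using H.δ_pos t ht)

lemma hasDerivAt_phi (H : InghamLocal D T C k δ φ χ) {z : ℂ} (hz : z ∈ D) :
    HasDerivAt φ (deriv φ z) z :=
  (H.differentiableOn_phi.differentiableAt (H.isOpen.mem_nhds hz)).hasDerivAt

lemma hasDerivAt_chi (H : InghamLocal D T C k δ φ χ) {z : ℂ} (hz : z ∈ D) :
    HasDerivAt χ (deriv χ z) z :=
  (H.differentiableOn_chi.differentiableAt (H.isOpen.mem_nhds hz)).hasDerivAt

lemma differentiableOn_deriv (H : InghamLocal D T C k δ φ χ) : DifferentiableOn ℂ (deriv φ) D :=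
  H.differentiableOn_phi.deriv H.isOpen

lemma hasDerivAt_deriv (H : InghamLocal D T C k δ φ χ) {z : ℂ} (hz : z ∈ D) :
    HasDerivAt (deriv φ) (iteratedDeriv 2 φ z) z := by
  rw [iteratedDeriv_succ, iteratedDeriv_one]
  exact (H.differentiableOn_deriv.differentiableAt (H.isOpen.mem_nhds hz)).hasDerivAt

lemma differentiableOn_deriv2 (H : InghamLocal D T C k δ φ χ) :
    DifferentiableOn ℂ (iteratedDeriv 2 φ) D := by
  rw [iteratedDeriv_succ, iteratedDeriv_one]
  exact H.differentiableOn_deriv.deriv H.isOpen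

lemma norm_phi_sub_taylor_le (H : InghamLocal D T C k δ φ χ) {t : ℝ} (ht : t ∈ Ioc 0 T)
    {a : ℂ} {R ε : ℝ} (hR : R ≤ δ t)
    (ha : ∀ z : ℂ, ‖z‖ < R → ‖iteratedDeriv 2 φ (t + z) - a‖ ≤ ε) {z : ℂ} (hz : ‖z‖ < R) :
    ‖φ (t + z) - φ t - deriv φ t * z - a * z ^ 2 / 2‖ ≤ ε * ‖z‖ ^ 2 := by
  have := norm_sub_taylor_two_le (g := fun z => φ (t + z)) (g₁ := fun z => deriv φ (t + z))
    (g₂ := fun z => iteratedDeriv 2 φ (t + z)) (a := a) (ε := ε) (R := R)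
    (fun z hz => (H.hasDerivAt_phi (H.add_mem ht
      ((mem_ball_zero_iff.1 hz).trans_le hR))).comp_const_add _ _)
    (fun z hz => (H.hasDerivAt_deriv (H.add_mem ht
      ((mem_ball_zero_iff.1 hz).trans_le hR))).comp_const_add _ _)
    (fun z hz => ha z (mem_ball_zero_iff.1 hz)) hz
  simpa using this

lemma re_phi_le (H : InghamLocal D T C k δ φ χ) {t : ℝ} (ht : t ∈ Ioc 0 T) {s : ℝ}
    (hs : |s| < δ t) : (φ ((t + s : ℝ) : ℂ)).re ≤
      (φ t).re + (deriv φ t).re * s + C * (iteratedDeriv 2 φ t).re * s ^ 2 := by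
  have h1 := H.norm_phi_sub_taylor_le ht (a := 0) (ε := C * (iteratedDeriv 2 φ t).re) le_rfl
    (fun z hz => by rw [sub_zero]; exact H.norm_deriv2_le t ht z hz) (z := s)
    (by rwa [Complex.norm_real])
  have h2 := (Complex.re_le_norm _).trans h1
  rw [Complex.norm_real, Real.norm_eq_abs, sq_abs] at h2
  simp only [zero_mul, zero_div, sub_zero, Complex.sub_re, Complex.re_mul_ofReal] at h2
  push_cast
  linarith

end InghamLocal

namespace InghamLocal

variable {D : Set ℂ} {T C k : ℝ} {δ : ℝ → ℝ} {φ χ f : ℂ → ℂ}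

lemma norm_chi (H : InghamLocal D T C k δ φ χ) {t : ℝ} (ht : t ∈ Ioc 0 T) :
    ‖χ t‖ = (χ t).re := by
  rw [← Complex.abs_re_eq_norm.2 (H.chi_im t ht), abs_of_pos (H.chi_pos t ht)]

/-- The a priori bound near the real axis coming from the sector condition with opening `1`. -/
lemma norm_le_of_sector_bound (H : InghamLocal D T C k δ φ χ) {C₁ ρ : ℝ} (hC₁ : 0 ≤ C₁)
    (hf : ∀ z : ℂ, 0 < z.re → |z.im| ≤ 1 * z.re → ‖z‖ < ρ →
      ‖f z‖ ≤ C₁ * ‖χ ((‖z‖ : ℝ) : ℂ)‖ * Real.exp ((φ ((‖z‖ : ℝ) : ℂ)).re))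
    {t r : ℝ} (ht : 0 < t) (htT : 2 * t ≤ T) (htρ : 2 * t < ρ) (hrt : r ≤ t / 2) (hrδ : r < δ t)
    {z : ℂ} (hz : ‖z‖ ≤ r) :
    ‖f (t + z)‖ ≤ C₁ * C * ((χ t).re * Real.exp ((φ t).re + (deriv φ t).re *
      (z.re + z.im ^ 2 / (3 * t)) + C * (iteratedDeriv 2 φ t).re * r ^ 2)) := by
  have htm : t ∈ Ioc 0 T := ⟨ht, by linarith⟩
  have hre := (Complex.abs_re_le_norm z).trans hz
  have him := (Complex.abs_im_le_norm z).trans hz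
  have hre' := abs_le.1 hre
  have him' := abs_le.1 him
  set w : ℝ := ‖(t : ℂ) + z‖ with hw
  have hwt : |w - t| ≤ r := by
    have := abs_norm_sub_norm_le ((t : ℂ) + z) t
    rw [add_sub_cancel_left, Complex.norm_real, Real.norm_of_nonneg ht.le] at this
    exact this.trans hz
  have hwt' := abs_le.1 hwt
  have hw0 : 0 < w := by linarith
  have hwsq : w ^ 2 = (t + z.re) ^ 2 + z.im ^ 2 := by
    rw [hw, Complex.sq_norm, Complex.normSq_apply]
    simp only [Complex.add_re, Complex.ofReal_re, Complex.add_im, Complex.ofReal_im, zero_add]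
    ring
  have hwge : z.re + z.im ^ 2 / (3 * t) ≤ w - t := by
    have h1 : t + z.re ≤ w := abs_le_of_sq_le_sq' (by nlinarith [sq_nonneg z.im]) hw0.le |>.2
    have h2 : z.im ^ 2 / (3 * t) ≤ w - (t + z.re) := by
      rw [div_le_iff₀ (by positivity)]
      have h3 : z.im ^ 2 = (w - (t + z.re)) * (w + (t + z.re)) := by linear_combination -hwsq
      rw [h3]
      refine mul_le_mul_of_nonneg_left ?_ (by linarith)
      linarith
    linarith
  have h1 := hf (t + z) (by simp; linarith) (by
    simp only [Complex.add_im, Complex.ofReal_im, zero_add, Complex.add_re, Complex.ofReal_re]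
    linarith) (by linarith)
  have hδw : |w - t| < δ t := hwt.trans_lt hrδ
  have h2 : ‖χ (w : ℂ)‖ ≤ C * (χ t).re := by
    have := H.norm_chi_le t htm ((w - t : ℝ) : ℂ) (by rwa [Complex.norm_real])
    simpa using this
  have h3 : (φ (w : ℂ)).re ≤ (φ t).re + (deriv φ t).re *
      (z.re + z.im ^ 2 / (3 * t)) + C * (iteratedDeriv 2 φ t).re * r ^ 2 := by
    have h4 := H.re_phi_le htm hδw
    rw [add_sub_cancel] at h4
    have h5 := mul_le_mul_of_nonpos_left hwge (H.deriv_neg t htm).le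
    have h6 : C * (iteratedDeriv 2 φ t).re * (w - t) ^ 2 ≤
        C * (iteratedDeriv 2 φ t).re * r ^ 2 := by
      have := H.deriv2_pos t htm
      have := H.one_le_C
      refine mul_le_mul_of_nonneg_left ?_ (by positivity)
      exact sq_le_sq' (by linarith) (by linarith)
    linarith
  have h7 : 0 ≤ C₁ * (C * (χ t).re) :=
    mul_nonneg hC₁ (mul_nonneg (zero_le_one.trans H.one_le_C) (H.chi_pos t htm).le)
  calc ‖f (t + z)‖ ≤ C₁ * ‖χ (w : ℂ)‖ * Real.exp (φ (w : ℂ)).re := h1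
    _ ≤ C₁ * (C * (χ t).re) * Real.exp ((φ t).re + (deriv φ t).re *
      (z.re + z.im ^ 2 / (3 * t)) + C * (iteratedDeriv 2 φ t).re * r ^ 2) := by gcongr
    _ = _ := by ring

/-- Maximum modulus argument: `t φ''(t)` cannot be exactly a small multiple of `-φ'(t)`. -/
lemma norm_le_of_mul_deriv2_eq (H : InghamLocal D T C k δ φ χ)
    (hfd : DifferentiableOn ℂ f {z | 0 < z.re}) {C₁ ρ : ℝ} (hC₁ : 0 ≤ C₁)
    (hf : ∀ z : ℂ, 0 < z.re → |z.im| ≤ 1 * z.re → ‖z‖ < ρ →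
      ‖f z‖ ≤ C₁ * ‖χ ((‖z‖ : ℝ) : ℂ)‖ * Real.exp ((φ ((‖z‖ : ℝ) : ℂ)).re))
    {t R : ℝ} (ht : 0 < t) (htT : 2 * t ≤ T) (htρ : 2 * t < ρ) (hR : 0 < R)
    (hPR : 2 * R ≤ √(-t * (deriv φ t).re)) (hδR : t * R / √(-t * (deriv φ t).re) < δ t)
    (heq : t * (iteratedDeriv 2 φ t).re = 1 / (12 * C) * -(deriv φ t).re) :
    ‖f t‖ ≤ C₁ * C * Real.exp (-R ^ 2 / 12) * ((χ t).re * Real.exp (φ t).re) := by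
  have htm : t ∈ Ioc 0 T := ⟨ht, by linarith⟩
  have hC := H.one_le_C
  have hP1 := H.deriv_neg t htm
  set P : ℝ := -t * (deriv φ t).re with hP
  have hP0 : 0 < P := mul_pos_of_neg_of_neg (by linarith) hP1
  have hsP : 0 < √P := Real.sqrt_pos.2 hP0
  set r : ℝ := t * R / √P with hr
  have hr0 : 0 < r := by positivity
  have hrt : r ≤ t / 2 := by
    rw [hr, div_le_div_iff₀ hsP two_pos]
    nlinarith
  set b : ℝ := P / (6 * t ^ 2) with hb
  have hp1 : (deriv φ t).re = -P / t := by rw [hP]; field_simp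
  have hr2 : P * r ^ 2 = t ^ 2 * R ^ 2 := by
    rw [hr, div_pow, Real.sq_sqrt hP0.le]
    field_simp
  have hp2 : C * (iteratedDeriv 2 φ t).re * r ^ 2 = R ^ 2 / 12 := by
    have : (iteratedDeriv 2 φ t).re = P / (12 * C * t ^ 2) := by
      rw [hP]
      field_simp at heq ⊢
      linarith
    rw [this]
    calc _ = P * r ^ 2 / (12 * t ^ 2) := by field_simp
      _ = _ := by rw [hr2]; field_simp
  let G : ℂ → ℂ := fun z => f (t + z) * Complex.exp (-(deriv φ t).re * z - b * z ^ 2)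
  have hdiff : DiffContOnCl ℂ G (Metric.ball 0 r) := by
    refine DifferentiableOn.diffContOnCl ?_
    rw [closure_ball _ hr0.ne']
    refine DifferentiableOn.mul (hfd.comp (by fun_prop) fun z hz => ?_) (by fun_prop)
    have := (Complex.abs_re_le_norm z).trans (mem_closedBall_zero_iff.1 hz)
    have := (abs_le.1 this).1
    simp only [mem_ofPred_eq, Complex.add_re, Complex.ofReal_re]
    linarith
  have hbound : ∀ z ∈ frontier (Metric.ball (0 : ℂ) r),
      ‖G z‖ ≤ C₁ * C * Real.exp (-R ^ 2 / 12) * ((χ t).re * Real.exp (φ t).re) := by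
    intro z hz
    rw [frontier_ball _ hr0.ne', mem_sphere_zero_iff_norm] at hz
    have h1 := H.norm_le_of_sector_bound hC₁ hf ht htT htρ hrt hδR hz.le
    have hzsq : z.re ^ 2 + z.im ^ 2 = r ^ 2 := by
      rw [← hz, Complex.sq_norm, Complex.normSq_apply]; ring
    have h2 : (-((deriv φ t).re : ℂ) * z - b * z ^ 2).re =
        -(deriv φ t).re * z.re - b * (z.re ^ 2 - z.im ^ 2) := by
      simp [pow_two]
    rw [norm_mul, Complex.norm_exp, h2]
    refine (mul_le_mul_of_nonneg_right h1 (Real.exp_pos _).le).trans (le_of_eq ?_)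
    have h3 : (φ t).re + (deriv φ t).re * (z.re + z.im ^ 2 / (3 * t)) +
        C * (iteratedDeriv 2 φ t).re * r ^ 2 + (-(deriv φ t).re * z.re -
          b * (z.re ^ 2 - z.im ^ 2)) = -R ^ 2 / 12 + (φ t).re := by
      have h4 : P * (z.re ^ 2 + z.im ^ 2) = t ^ 2 * R ^ 2 := by rw [hzsq, hr2]
      rw [hp2, hp1, hb]
      field_simp
      linear_combination (-36 : ℝ) * h4
    calc _ = C₁ * C * ((χ t).re * (Real.exp ((φ t).re + (deriv φ t).re *
          (z.re + z.im ^ 2 / (3 * t)) + C * (iteratedDeriv 2 φ t).re * r ^ 2) *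
            Real.exp (-(deriv φ t).re * z.re - b * (z.re ^ 2 - z.im ^ 2)))) := by ring
      _ = _ := by rw [← Real.exp_add, h3, Real.exp_add]; ring
  have := Complex.norm_le_of_forall_mem_frontier_norm_le Metric.isBounded_ball hdiff hbound
    (subset_closure (Metric.mem_ball_self hr0))
  simpa [G] using this

end InghamLocal

namespace InghamLocal

variable {D : Set ℂ} {T C k : ℝ} {δ : ℝ → ℝ} {φ χ f : ℂ → ℂ}

lemma eventually_mul_deriv2_ne (H : InghamLocal D T C k δ φ χ)
    (hfd : DifferentiableOn ℂ f {z | 0 < z.re})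
    (hfa : Tendsto (fun t : ℝ => ‖f t‖ / ((χ t).re * Real.exp (φ t).re)) (𝓝[>] 0) (𝓝 1))
    (hf : ∃ C ρ : ℝ, 0 < C ∧ 0 < ρ ∧ ∀ z : ℂ, 0 < z.re → |z.im| ≤ 1 * z.re → ‖z‖ < ρ →
      ‖f z‖ ≤ C * ‖χ ((‖z‖ : ℝ) : ℂ)‖ * Real.exp ((φ ((‖z‖ : ℝ) : ℂ)).re)) :
    ∀ᶠ t : ℝ in 𝓝[>] 0,
      t * (iteratedDeriv 2 φ t).re ≠ 1 / (12 * C) * -(deriv φ t).re := by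
  obtain ⟨C₁, ρ, hC₁, hρ, hf⟩ := hf
  have hC : 0 < C := zero_lt_one.trans_le H.one_le_C
  have hlim : Tendsto (fun R : ℝ => C₁ * C * Real.exp (-R ^ 2 / 12)) atTop (𝓝 0) := by
    have h1 : Tendsto (fun R : ℝ => -R ^ 2 / 12) atTop atBot := by
      have h2 : Tendsto (fun R : ℝ => R ^ 2 / 12) atTop atTop :=
        (tendsto_pow_atTop two_ne_zero).atTop_div_const (by norm_num)
      simp only [neg_div]
      exact tendsto_neg_atTop_atBot.comp h2
    simpa using (Real.tendsto_exp_atBot.comp h1).const_mul (C₁ * C)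
  obtain ⟨R, hR1, hR⟩ := ((hlim.eventually (gt_mem_nhds (by norm_num : (0:ℝ) < 1 / 2))).and
    (eventually_gt_atTop 0)).exists
  have hsq : Tendsto (fun t : ℝ => √(-t * (deriv φ (t : ℂ)).re)) (𝓝[>] 0) atTop :=
    Real.tendsto_sqrt_atTop.comp H.tendsto_neg_mul_deriv
  filter_upwards [Ioo_mem_nhdsGT (half_pos H.T_pos), Ioo_mem_nhdsGT (half_pos hρ),
    hsq.eventually_ge_atTop (2 * R), H.tendsto_div_sqrt.eventually_gt_atTop (R * √(12 * C)),
    hfa.eventually (lt_mem_nhds (by norm_num : (1 / 2 : ℝ) < 1))] with t ht htρ hPR hQ hft heq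
  have htm : t ∈ Ioc 0 T := ⟨ht.1, by linarith [ht.2, H.T_pos]⟩
  have hP1 := H.deriv_neg t htm
  have ht0 : 0 < t := ht.1
  have hχ := H.chi_pos t htm
  have hP0 : 0 < -t * (deriv φ (t : ℂ)).re := mul_pos_of_neg_of_neg (by linarith) hP1
  have hsP : 0 < √(-t * (deriv φ (t : ℂ)).re) := Real.sqrt_pos.2 hP0
  have hs12 : 0 < √(12 * C) := by positivity
  have hδR : t * R / √(-t * (deriv φ (t : ℂ)).re) < δ t := by
    have h2 : √(iteratedDeriv 2 φ t).re = √(-t * (deriv φ (t : ℂ)).re) / (√(12 * C) * t) := by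
      have : (iteratedDeriv 2 φ t).re = -t * (deriv φ (t : ℂ)).re / (12 * C * t ^ 2) := by
        field_simp at heq ⊢
        linarith
      rw [this, Real.sqrt_div hP0.le, Real.sqrt_mul (by positivity : 0 ≤ 12 * C),
        Real.sqrt_sq ht0.le]
    have h3 : -(δ t) * (deriv φ (t : ℂ)).re =
        δ t / t * (√(-t * (deriv φ (t : ℂ)).re) * √(-t * (deriv φ (t : ℂ)).re)) := by
      rw [Real.mul_self_sqrt hP0.le]
      field_simp
    rw [h2, h3] at hQ
    set s := √(-t * (deriv φ (t : ℂ)).re) with hs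
    have h4 : δ t / t * (s * s) / (t * (s / (√(12 * C) * t))) = √(12 * C) * (δ t / t * s) := by
      field_simp
    rw [h4, mul_comm R, mul_lt_mul_iff_right₀ hs12, div_mul_eq_mul_div, lt_div_iff₀ ht0] at hQ
    rw [div_lt_iff₀ hsP]
    linarith
  have h5 := H.norm_le_of_mul_deriv2_eq hfd hC₁.le hf ht0 (by linarith [ht.2])
    (by linarith [htρ.2]) hR hPR hδR heq
  rw [lt_div_iff₀ (by positivity)] at hft
  have h6 := mul_lt_mul_of_pos_right hR1 (mul_pos hχ (Real.exp_pos (φ (t : ℂ)).re))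
  linarith

lemma hasDerivAt_re_phi (H : InghamLocal D T C k δ φ χ) {t : ℝ} (ht : t ∈ Ioc 0 T) :
    HasDerivAt (fun r : ℝ => (φ r).re) (deriv φ t).re t :=
  (H.hasDerivAt_phi (H.mem ht)).real_of_complex

lemma hasDerivAt_re_deriv (H : InghamLocal D T C k δ φ χ) {t : ℝ} (ht : t ∈ Ioc 0 T) :
    HasDerivAt (fun r : ℝ => (deriv φ r).re) (iteratedDeriv 2 φ t).re t :=
  (H.hasDerivAt_deriv (H.mem ht)).real_of_complex

lemma eventually_le_mul_deriv2 (H : InghamLocal D T C k δ φ χ)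
    (hfd : DifferentiableOn ℂ f {z | 0 < z.re})
    (hfa : Tendsto (fun t : ℝ => ‖f t‖ / ((χ t).re * Real.exp (φ t).re)) (𝓝[>] 0) (𝓝 1))
    (hf : ∃ C ρ : ℝ, 0 < C ∧ 0 < ρ ∧ ∀ z : ℂ, 0 < z.re → |z.im| ≤ 1 * z.re → ‖z‖ < ρ →
      ‖f z‖ ≤ C * ‖χ ((‖z‖ : ℝ) : ℂ)‖ * Real.exp ((φ ((‖z‖ : ℝ) : ℂ)).re)) :
    ∀ᶠ t : ℝ in 𝓝[>] 0,
      1 / (12 * C) * -(deriv φ t).re ≤ t * (iteratedDeriv 2 φ t).re := by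
  set q : ℝ → ℝ := fun t => t * (iteratedDeriv 2 φ t).re - 1 / (12 * C) * -(deriv φ t).re with hq
  obtain ⟨t₁, ht₁, hne⟩ := mem_nhdsGT_iff_exists_Ioc_subset.1
    ((H.eventually_mul_deriv2_ne hfd hfa hf).and (Ioc_mem_nhdsGT H.T_pos))
  have hne' : ∀ t ∈ Ioc 0 t₁, q t ≠ 0 := fun t ht => sub_ne_zero.2 (hne ht).1
  have hT : ∀ t ∈ Ioc 0 t₁, t ∈ Ioc 0 T := fun t ht => (hne ht).2
  have hqc : ContinuousOn q (Ioc 0 t₁) := fun t ht => by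
    have h1 : ContinuousAt (fun t : ℝ => iteratedDeriv 2 φ t) t :=
      ContinuousAt.comp (f := fun t : ℝ => (t : ℂ))
        (H.differentiableOn_deriv2.differentiableAt
          (H.isOpen.mem_nhds (H.mem (hT t ht)))).continuousAt (by fun_prop)
    have h2 := (H.hasDerivAt_re_deriv (hT t ht)).continuousAt
    exact ((continuousAt_id.mul (Complex.continuous_re.continuousAt.comp h1)).sub
      (h2.neg.const_mul _)).continuousWithinAt
  by_cases hpos : ∃ t₂ ∈ Ioc 0 t₁, 0 < q t₂
  · obtain ⟨t₂, ht₂, hq₂⟩ := hpos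
    filter_upwards [Ioc_mem_nhdsGT (show (0:ℝ) < t₁ from ht₁)] with t ht
    by_contra! hcon
    have hlt : q t < 0 := sub_neg.2 hcon
    obtain ⟨s, hs, hs0⟩ := isPreconnected_Ioc.intermediate_value ht ht₂ hqc ⟨hlt.le, hq₂.le⟩
    exact hne' s hs hs0
  · exfalso
    push Not at hpos
    have hC := H.one_le_C
    have hder : ∀ t ∈ Ioc 0 t₁, HasDerivAt (fun t : ℝ => -t * (deriv φ t).re)
        (-1 * (deriv φ t).re + -t * (iteratedDeriv 2 φ t).re) t := fun t ht =>
      (hasDerivAt_neg t).mul (H.hasDerivAt_re_deriv (hT t ht))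
    have hmono : MonotoneOn (fun t : ℝ => -t * (deriv φ t).re) (Ioc 0 t₁) := by
      refine monotoneOn_of_deriv_nonneg (convex_Ioc _ _)
        (fun t ht => (hder t ht).continuousAt.continuousWithinAt)
        (fun t ht => (hder t (interior_subset ht)).differentiableAt.differentiableWithinAt)
        fun t ht => ?_
      have ht := interior_subset ht
      rw [(hder t ht).deriv]
      have h1 := hpos t ht
      have h2 := H.deriv_neg t (hT t ht)
      have h3 : 1 / (12 * C) ≤ 1 := by
        rw [div_le_one (by positivity)]; linarith
      simp only [hq] at h1
      nlinarith
    have hlarge := H.tendsto_neg_mul_deriv.eventually_gt_atTop (-t₁ * (deriv φ t₁).re)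
    obtain ⟨t, ht, htl⟩ := (hlarge.and (Ioc_mem_nhdsGT (show (0:ℝ) < t₁ from ht₁))).exists
    exact absurd (hmono htl ⟨ht₁, le_rfl⟩ htl.2) (not_le.2 ht)

lemma tendsto_delta_mul_sqrt (H : InghamLocal D T C k δ φ χ)
    (hle : ∀ᶠ t : ℝ in 𝓝[>] 0,
      1 / (12 * C) * -(deriv φ t).re ≤ t * (iteratedDeriv 2 φ t).re) :
    Tendsto (fun t : ℝ => δ t * √(iteratedDeriv 2 φ t).re) (𝓝[>] 0) atTop := by
  have hC : 0 < 12 * C := by linarith [H.one_le_C]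
  refine tendsto_atTop_mono' _ ?_ (H.tendsto_div_sqrt.const_mul_atTop (inv_pos.2 hC))
  filter_upwards [hle, Ioc_mem_nhdsGT H.T_pos] with t h1 ht
  have h2 := H.deriv2_pos t ht
  have h3 : 0 < √(iteratedDeriv 2 φ t).re := Real.sqrt_pos.2 h2
  have h4 := ht.1
  have h5 := H.δ_pos t ht
  rw [← div_eq_inv_mul, div_div, div_le_iff₀ (by positivity)]
  have h6 : -(deriv φ t).re ≤ 12 * C * (t * (iteratedDeriv 2 φ t).re) := by
    rwa [one_div, inv_mul_le_iff₀ hC] at h1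
  calc -δ t * (deriv φ t).re = δ t * -(deriv φ t).re := by ring
    _ ≤ δ t * (12 * C * (t * (√(iteratedDeriv 2 φ t).re * √(iteratedDeriv 2 φ t).re))) := by
      rw [Real.mul_self_sqrt h2.le]
      gcongr
    _ = _ := by ring

lemma tendsto_mul_sqrt (H : InghamLocal D T C k δ φ χ)
    (hδ : Tendsto (fun t : ℝ => δ t * √(iteratedDeriv 2 φ t).re) (𝓝[>] 0) atTop) :
    Tendsto (fun t : ℝ => t * √(iteratedDeriv 2 φ t).re) (𝓝[>] 0) atTop := by
  refine tendsto_atTop_mono' _ ?_ hδ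
  filter_upwards [Ioc_mem_nhdsGT H.T_pos] with t ht
  gcongr
  exact H.δ_le t ht

lemma tendsto_delta_mul_deriv (H : InghamLocal D T C k δ φ χ)
    (hδ : Tendsto (fun t : ℝ => δ t * √(iteratedDeriv 2 φ t).re) (𝓝[>] 0) atTop) :
    Tendsto (fun t : ℝ => δ t * -(deriv φ t).re) (𝓝[>] 0) atTop := by
  refine (H.tendsto_div_sqrt.atTop_mul_atTop₀ (H.tendsto_mul_sqrt hδ)).congr' ?_
  filter_upwards [Ioc_mem_nhdsGT H.T_pos] with t ht
  have h3 : √(iteratedDeriv 2 φ t).re ≠ 0 := (Real.sqrt_pos.2 (H.deriv2_pos t ht)).ne'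
  have h4 := ht.1.ne'
  field_simp

end InghamLocal

namespace InghamLocal

variable {D : Set ℂ} {T C k : ℝ} {δ : ℝ → ℝ} {φ χ f : ℂ → ℂ}

lemma mapsTo_chi (H : InghamLocal D T C k δ φ χ) {t : ℝ} (ht : t ∈ Ioc 0 T) :
    MapsTo χ (Metric.ball (t : ℂ) (δ t)) (Metric.closedBall (χ t) ((C + 1) * (χ t).re)) := by
  intro z hz
  rw [Metric.mem_closedBall, dist_eq_norm]
  have h1 := H.norm_chi_le t ht (z - t) (by rwa [← dist_eq_norm])
  rw [add_sub_cancel] at h1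
  have h2 := norm_sub_le (χ z) (χ t)
  rw [H.norm_chi ht] at h2
  linarith

lemma norm_chi_sub_le (H : InghamLocal D T C k δ φ χ) {t : ℝ} (ht : t ∈ Ioc 0 T) {z : ℂ}
    (hz : ‖z‖ < δ t) : ‖χ (t + z) - χ t‖ ≤ (C + 1) * (χ t).re / δ t * ‖z‖ := by
  have h1 := Complex.dist_le_div_mul_dist_of_mapsTo_ball (z := t + z)
    (H.differentiableOn_chi.mono (H.ball_subset t ht)) (H.mapsTo_chi ht)
    (by simpa [dist_eq_norm] using hz)
  simpa [dist_eq_norm] using h1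

lemma norm_deriv_chi_le (H : InghamLocal D T C k δ φ χ) {t : ℝ} (ht : t ∈ Ioc 0 T) :
    ‖deriv χ t‖ ≤ (C + 1) * (χ t).re / δ t :=
  Complex.norm_deriv_le_div_of_mapsTo_ball (H.differentiableOn_chi.mono (H.ball_subset t ht))
    (H.mapsTo_chi ht) (H.δ_pos t ht)

lemma norm_deriv2_sub_le (H : InghamLocal D T C k δ φ χ) {t : ℝ} (ht : t ∈ Ioc 0 T) {z : ℂ}
    (hz : ‖z‖ < δ t) : ‖iteratedDeriv 2 φ (t + z) - iteratedDeriv 2 φ t‖ ≤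
      (C + 1) * (iteratedDeriv 2 φ t).re / δ t * ‖z‖ := by
  have h1 := Complex.dist_le_div_mul_dist_of_mapsTo_ball (z := t + z)
    (R₂ := (C + 1) * (iteratedDeriv 2 φ t).re)
    (H.differentiableOn_deriv2.mono (H.ball_subset t ht)) (fun z hz => by
      rw [Metric.mem_closedBall, dist_eq_norm]
      have h1 := H.norm_deriv2_le t ht (z - t) (by rwa [← dist_eq_norm])
      rw [add_sub_cancel] at h1
      have h2 := norm_sub_le (iteratedDeriv 2 φ z) (iteratedDeriv 2 φ t)
      rw [← Complex.abs_re_eq_norm.2 (H.deriv2_im t ht), abs_of_pos (H.deriv2_pos t ht)] at h2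
      linarith)
    (by simpa [dist_eq_norm] using hz)
  simpa [dist_eq_norm] using h1

lemma eventually_abs_div_lt_delta (H : InghamLocal D T C k δ φ χ)
    (hδ : Tendsto (fun t : ℝ => δ t * √(iteratedDeriv 2 φ t).re) (𝓝[>] 0) atTop) (s : ℝ) :
    ∀ᶠ t : ℝ in 𝓝[>] 0, |s| / √(iteratedDeriv 2 φ t).re < δ t := by
  filter_upwards [hδ.eventually_gt_atTop |s|, Ioc_mem_nhdsGT H.T_pos] with t h1 ht
  rwa [div_lt_iff₀ (Real.sqrt_pos.2 (H.deriv2_pos t ht))]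

lemma tendsto_add_div_sqrt (H : InghamLocal D T C k δ φ χ)
    (hδ : Tendsto (fun t : ℝ => δ t * √(iteratedDeriv 2 φ t).re) (𝓝[>] 0) atTop) (s : ℝ) :
    Tendsto (fun t : ℝ => t + s / √(iteratedDeriv 2 φ t).re) (𝓝[>] 0) (𝓝[>] 0) := by
  have hev : ∀ᶠ t : ℝ in 𝓝[>] 0, t + s / √(iteratedDeriv 2 φ t).re ∈ Ioo 0 (2 * t) := by
    filter_upwards [H.eventually_abs_div_lt_delta hδ s, Ioc_mem_nhdsGT H.T_pos] with t h1 ht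
    have h2 : |s / √(iteratedDeriv 2 φ t).re| < t := by
      rw [abs_div, abs_of_nonneg (Real.sqrt_nonneg _)]
      exact h1.trans_le (H.δ_le t ht)
    obtain ⟨h3, h4⟩ := abs_lt.1 h2
    constructor <;> linarith
  refine tendsto_nhdsWithin_iff.2 ⟨?_, hev.mono fun t ht => ht.1⟩
  have h2 : Tendsto (fun t : ℝ => 2 * t) (𝓝[>] 0) (𝓝 0) := by
    have : Continuous fun t : ℝ => 2 * t := by fun_prop
    simpa using (this.tendsto 0).mono_left nhdsWithin_le_nhds
  exact squeeze_zero' (hev.mono fun t ht => ht.1.le) (hev.mono fun t ht => ht.2.le) h2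

lemma tendsto_chi_ratio (H : InghamLocal D T C k δ φ χ)
    (hδ : Tendsto (fun t : ℝ => δ t * √(iteratedDeriv 2 φ t).re) (𝓝[>] 0) atTop) (s : ℝ) :
    Tendsto (fun t : ℝ => (χ ((t + s / √(iteratedDeriv 2 φ t).re : ℝ) : ℂ)).re / (χ t).re)
      (𝓝[>] 0) (𝓝 1) := by
  rw [tendsto_iff_norm_sub_tendsto_zero]
  refine squeeze_zero' (Eventually.of_forall fun _ => norm_nonneg _) ?_
    ((tendsto_const_nhds (x := (C + 1) * |s|)).div_atTop hδ)
  filter_upwards [H.eventually_abs_div_lt_delta hδ s, Ioc_mem_nhdsGT H.T_pos] with t h1 ht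
  have hχ := H.chi_pos t ht
  have hn : ‖((s / √(iteratedDeriv 2 φ t).re : ℝ) : ℂ)‖ = |s| / √(iteratedDeriv 2 φ t).re := by
    rw [Complex.norm_real, Real.norm_eq_abs, abs_div, abs_of_nonneg (Real.sqrt_nonneg _)]
  have h2 := (Complex.abs_re_le_norm _).trans (H.norm_chi_sub_le ht (hn.trans_lt h1))
  rw [hn, ← Complex.ofReal_add, Complex.sub_re] at h2
  rw [div_sub_one hχ.ne', norm_div, Real.norm_of_nonneg hχ.le, div_le_iff₀ hχ, Real.norm_eq_abs]
  refine h2.trans (le_of_eq ?_)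
  have := (H.δ_pos t ht).ne'
  have := (Real.sqrt_pos.2 (H.deriv2_pos t ht)).ne'
  field_simp

lemma tendsto_phi_sub (H : InghamLocal D T C k δ φ χ)
    (hδ : Tendsto (fun t : ℝ => δ t * √(iteratedDeriv 2 φ t).re) (𝓝[>] 0) atTop) (s : ℝ) :
    Tendsto (fun t : ℝ => (φ ((t + s / √(iteratedDeriv 2 φ t).re : ℝ) : ℂ)).re - (φ t).re -
      (deriv φ t).re * (s / √(iteratedDeriv 2 φ t).re)) (𝓝[>] 0) (𝓝 (s ^ 2 / 2)) := by
  rw [tendsto_iff_norm_sub_tendsto_zero]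
  refine squeeze_zero' (Eventually.of_forall fun _ => norm_nonneg _) ?_
    ((tendsto_const_nhds (x := (C + 1) * (|s| + 1) * s ^ 2)).div_atTop hδ)
  filter_upwards [H.eventually_abs_div_lt_delta hδ (|s| + 1), Ioc_mem_nhdsGT H.T_pos] with t h1 ht
  rw [abs_of_nonneg (by positivity)] at h1
  have hp := H.deriv2_pos t ht
  have hsp := Real.sqrt_pos.2 hp
  have hδ0 := H.δ_pos t ht
  have hC := H.one_le_C
  have hn : ‖((s / √(iteratedDeriv 2 φ t).re : ℝ) : ℂ)‖ = |s| / √(iteratedDeriv 2 φ t).re := by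
    rw [Complex.norm_real, Real.norm_eq_abs, abs_div, abs_of_nonneg (Real.sqrt_nonneg _)]
  have h2 := H.norm_phi_sub_taylor_le ht (a := iteratedDeriv 2 φ t)
    (ε := (C + 1) * (iteratedDeriv 2 φ t).re / δ t * ((|s| + 1) / √(iteratedDeriv 2 φ t).re))
    h1.le (fun z hz => (H.norm_deriv2_sub_le ht (hz.trans h1)).trans (by gcongr))
    (z := ((s / √(iteratedDeriv 2 φ t).re : ℝ) : ℂ)) (by rw [hn]; gcongr; linarith)
  have h3 := (Complex.abs_re_le_norm _).trans h2
  rw [hn, ← Complex.ofReal_add, Complex.sub_re, Complex.sub_re, Complex.sub_re,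
    Complex.re_mul_ofReal] at h3
  have h4 : (iteratedDeriv 2 φ t * ((s / √(iteratedDeriv 2 φ t).re : ℝ) : ℂ) ^ 2 / 2).re =
      s ^ 2 / 2 := by
    rw [← Complex.ofReal_pow, ← Complex.ofReal_ofNat, Complex.div_ofReal_re,
      Complex.re_mul_ofReal, div_pow, Real.sq_sqrt hp.le]
    field_simp
  rw [h4] at h3
  refine h3.trans (le_of_eq ?_)
  rw [div_pow, sq_abs]
  have h5 := Real.sq_sqrt hp.le
  set q := √(iteratedDeriv 2 φ t).re
  rw [← h5]
  field_simp

lemma tendsto_norm_ratio (H : InghamLocal D T C k δ φ χ)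
    (hfa : Tendsto (fun t : ℝ => ‖f t‖ / ((χ t).re * Real.exp (φ t).re)) (𝓝[>] 0) (𝓝 1))
    (hδ : Tendsto (fun t : ℝ => δ t * √(iteratedDeriv 2 φ t).re) (𝓝[>] 0) atTop) (s : ℝ) :
    Tendsto (fun t : ℝ => ‖f ((t + s / √(iteratedDeriv 2 φ t).re : ℝ) : ℂ)‖ / ‖f t‖ *
      Real.exp (-(deriv φ t).re * (s / √(iteratedDeriv 2 φ t).re)))
      (𝓝[>] 0) (𝓝 (Real.exp (s ^ 2 / 2))) := by
  have hadd := H.tendsto_add_div_sqrt hδ s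
  have h1 := (((hfa.comp hadd).div hfa one_ne_zero).mul (H.tendsto_chi_ratio hδ s)).mul
    ((Real.continuous_exp.tendsto _).comp (H.tendsto_phi_sub hδ s))
  rw [div_one, one_mul, one_mul] at h1
  refine h1.congr' ?_
  filter_upwards [Ioc_mem_nhdsGT H.T_pos, hadd.eventually (Ioc_mem_nhdsGT H.T_pos)] with t ht ht'
  have h2 := (H.chi_pos t ht).ne'
  have h3 := (H.chi_pos _ ht').ne'
  simp only [Pi.div_apply, Function.comp_apply]
  rw [sub_sub, Real.exp_sub, Real.exp_add, neg_mul, Real.exp_neg]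
  have h4 := (Real.exp_pos (φ t).re).ne'
  have h5 := (Real.exp_pos (φ ((t + s / √(iteratedDeriv 2 φ t).re : ℝ) : ℂ)).re).ne'
  have h6 := (Real.exp_pos ((deriv φ t).re * (s / √(iteratedDeriv 2 φ t).re))).ne'
  field_simp

end InghamLocal

namespace InghamLocal

variable {D : Set ℂ} {T C k : ℝ} {δ : ℝ → ℝ} {φ χ f : ℂ → ℂ}

lemma hasDerivAt_re_chi (H : InghamLocal D T C k δ φ χ) {t : ℝ} (ht : t ∈ Ioc 0 T) :
    HasDerivAt (fun r : ℝ => (χ r).re) (deriv χ t).re t :=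
  (H.hasDerivAt_chi (H.mem ht)).real_of_complex

/-- Once `δ φ'` is large, the size of `χ e^φ` decays to the right of `t` at a rate proportional to
`-φ'(t)`. -/
lemma chi_mul_exp_phi_le (H : InghamLocal D T C k δ φ χ) {T' L : ℝ} (hT' : T' ≤ T)
    (hlarge : ∀ r ∈ Ioc 0 T', 2 * (C + 1) ≤ δ r * -(deriv φ r).re) {t w : ℝ} (ht : 0 < t)
    (htw : t ≤ w) (hwL : w ≤ L * t) (hw : w ≤ T') :
    (χ w).re * Real.exp (φ w).re ≤ (χ t).re * Real.exp (φ t).re *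
      Real.exp (-((1 / L) ^ k / 2 * -(deriv φ t).re * (w - t))) := by
  have hL : 0 < L := by
    by_contra! hcon
    nlinarith
  set a : ℝ := (1 / L) ^ k / 2 * -(deriv φ t).re with ha
  have hIcc : ∀ r ∈ Icc t w, r ∈ Ioc 0 T := fun r hr =>
    ⟨ht.trans_le hr.1, (hr.2.trans hw).trans hT'⟩
  have hder : ∀ r ∈ Icc t w, HasDerivAt (fun r : ℝ => (χ r).re * Real.exp ((φ r).re + a * r))
      ((deriv χ r).re * Real.exp ((φ r).re + a * r) +
        (χ r).re * (Real.exp ((φ r).re + a * r) * ((deriv φ r).re + a * 1))) r := fun r hr =>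
    (H.hasDerivAt_re_chi (hIcc r hr)).mul
      ((H.hasDerivAt_re_phi (hIcc r hr)).add ((hasDerivAt_id r).const_mul a)).exp
  have hanti : AntitoneOn (fun r : ℝ => (χ r).re * Real.exp ((φ r).re + a * r)) (Icc t w) := by
    refine antitoneOn_of_deriv_nonpos (convex_Icc _ _)
      (fun r hr => (hder r hr).continuousAt.continuousWithinAt)
      (fun r hr => (hder r (interior_subset hr)).differentiableAt.differentiableWithinAt)
      fun r hr => ?_
    have hr := interior_subset hr
    rw [(hder r hr).deriv]
    have hrm := hIcc r hr
    have hχ := H.chi_pos r hrm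
    have hδ := H.δ_pos r hrm
    have h1 : (deriv χ r).re ≤ (χ r).re * (-(deriv φ r).re / 2) := by
      refine ((Complex.re_le_norm _).trans (H.norm_deriv_chi_le hrm)).trans ?_
      rw [div_le_iff₀ hδ]
      have := mul_le_mul_of_nonneg_left (hlarge r ⟨hrm.1, hr.2.trans hw⟩) hχ.le
      linarith
    have h2 : a ≤ -(deriv φ r).re / 2 := by
      have h3 := H.deriv_growth t r ht hr.1 hrm.2
      have h4 : (1 / L) ^ k ≤ (t / r) ^ k := by
        refine Real.rpow_le_rpow (by positivity) ?_ H.k_pos.le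
        rw [div_le_div_iff₀ hL hrm.1]
        linarith [hr.2]
      have h5 := mul_le_mul_of_nonneg_left h4 (neg_pos.2 (H.deriv_neg t ⟨ht, hr.1.trans hrm.2⟩)).le
      rw [ha]
      linarith
    have h6 : (deriv χ r).re * Real.exp ((φ r).re + a * r) +
        (χ r).re * (Real.exp ((φ r).re + a * r) * ((deriv φ r).re + a * 1)) =
        Real.exp ((φ r).re + a * r) * ((deriv χ r).re - (χ r).re * (-(deriv φ r).re / 2) +
          (χ r).re * (a - -(deriv φ r).re / 2)) := by ring
    rw [h6]
    refine mul_nonpos_of_nonneg_of_nonpos (Real.exp_pos _).le ?_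
    have := mul_nonpos_of_nonneg_of_nonpos hχ.le (sub_nonpos.2 h2)
    linarith
  have h7 := hanti ⟨le_rfl, htw⟩ ⟨htw, le_rfl⟩ htw
  simp only [Real.exp_add] at h7
  have h8 : Real.exp (-(a * (w - t))) = Real.exp (a * t) / Real.exp (a * w) := by
    rw [← Real.exp_sub]; ring_nf
  rw [h8, ← mul_div_assoc, le_div_iff₀ (Real.exp_pos _)]
  linarith

lemma eventually_norm_sector_le (H : InghamLocal D T C k δ φ χ)
    (hfa : Tendsto (fun t : ℝ => ‖f t‖ / ((χ t).re * Real.exp (φ t).re)) (𝓝[>] 0) (𝓝 1))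
    (hδ : Tendsto (fun t : ℝ => δ t * √(iteratedDeriv 2 φ t).re) (𝓝[>] 0) atTop)
    {Δ : ℝ} (hΔ : 0 < Δ)
    (hf : ∃ C ρ : ℝ, 0 < C ∧ 0 < ρ ∧ ∀ z : ℂ, 0 < z.re → |z.im| ≤ Δ * z.re → ‖z‖ < ρ →
      ‖f z‖ ≤ C * ‖χ ((‖z‖ : ℝ) : ℂ)‖ * Real.exp ((φ ((‖z‖ : ℝ) : ℂ)).re)) :
    ∃ C' c' : ℝ, 0 < c' ∧ ∀ᶠ t : ℝ in 𝓝[>] 0, ∀ ξ : ℝ, |ξ| ≤ Δ →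
      ‖f (t - (ξ * t : ℝ) * Complex.I)‖ / ‖f t‖ ≤
        C' * Real.exp (-c' * (t * √(iteratedDeriv 2 φ t).re * ξ) ^ 2) := by
  obtain ⟨C₁, ρ, hC₁, hρ, hf⟩ := hf
  have hk := H.k_pos
  have hκ : 0 < (1 / (1 + Δ)) ^ k := Real.rpow_pos_of_pos (by positivity) k
  refine ⟨2 * C₁, (1 / (1 + Δ)) ^ k / 2 / (k * (2 + Δ)), by positivity, ?_⟩
  obtain ⟨T', hT', hlarge⟩ := mem_nhdsGT_iff_exists_Ioc_subset.1
    (((H.tendsto_delta_mul_deriv hδ).eventually_ge_atTop (2 * (C + 1))).and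
      (Ioc_mem_nhdsGT H.T_pos))
  have hT'0 : (0:ℝ) < T' := hT'
  have hT'T : T' ≤ T := (hlarge ⟨hT'0, le_rfl⟩).2.2
  filter_upwards [Ioc_mem_nhdsGT (show 0 < T' / (1 + Δ) by positivity),
    Ioo_mem_nhdsGT (show 0 < ρ / (1 + Δ) by positivity),
    hfa.eventually (lt_mem_nhds (by norm_num : (1 / 2 : ℝ) < 1))] with t ht1 ht2 hft ξ hξ
  have ht0 : 0 < t := ht1.1
  have htT' : (1 + Δ) * t ≤ T' := by
    have := ht1.2
    rw [le_div_iff₀ (by positivity)] at this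
    linarith
  have htρ : (1 + Δ) * t < ρ := by
    have := ht2.2
    rw [lt_div_iff₀ (by positivity)] at this
    linarith
  have htm : t ∈ Ioc 0 T := ⟨ht0, by nlinarith⟩
  have hχ := H.chi_pos t htm
  rw [lt_div_iff₀ (by positivity)] at hft
  have hft0 : 0 < ‖f t‖ := lt_of_le_of_lt (by positivity) hft
  set z : ℂ := t - (ξ * t : ℝ) * Complex.I with hz
  have hzre : z.re = t := by simp [hz]
  have hzim : z.im = -(ξ * t) := by simp [hz]
  set w : ℝ := ‖z‖ with hw
  have hw0 : 0 ≤ w := norm_nonneg _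
  have hwsq : w ^ 2 = t ^ 2 + (ξ * t) ^ 2 := by
    rw [hw, Complex.sq_norm, Complex.normSq_apply, hzre, hzim]; ring
  have htw : t ≤ w := by nlinarith [sq_nonneg (ξ * t)]
  have hwt : w ≤ (1 + Δ) * t := by
    have h1 := Complex.norm_le_abs_re_add_abs_im z
    rw [hzre, hzim, abs_neg, abs_mul, abs_of_pos ht0] at h1
    nlinarith
  have hwt2 : ξ ^ 2 * t / (2 + Δ) ≤ w - t := by
    rw [div_le_iff₀ (by positivity)]
    have h1 : (w - t) * (w + t) = ξ ^ 2 * t * t := by linear_combination hwsq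
    have h2 : (w - t) * (w + t) ≤ (w - t) * ((2 + Δ) * t) :=
      mul_le_mul_of_nonneg_left (by linarith) (by linarith)
    rw [h1] at h2
    nlinarith
  have hwm : w ∈ Ioc 0 T := ⟨by linarith, by linarith⟩
  have h1 := hf z (by rw [hzre]; exact ht0) (by
    rw [hzre, hzim, abs_neg, abs_mul, abs_of_pos ht0]; gcongr) (by linarith)
  have h2 := H.chi_mul_exp_phi_le hT'T (fun r hr => (hlarge hr).1) ht0 htw hwt (hwt.trans htT')
  rw [H.norm_chi hwm] at h1
  have h3 : (1 / (1 + Δ)) ^ k / 2 / (k * (2 + Δ)) * (t * √(iteratedDeriv 2 φ t).re * ξ) ^ 2 ≤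
      (1 / (1 + Δ)) ^ k / 2 * -(deriv φ t).re * (w - t) := by
    have h4 := H.deriv2_le t htm
    have h5 := H.deriv_neg t htm
    rw [mul_pow, mul_pow, Real.sq_sqrt (H.deriv2_pos t htm).le]
    calc _ = (1 / (1 + Δ)) ^ k / 2 * (t * (iteratedDeriv 2 φ t).re / k) *
          (ξ ^ 2 * t / (2 + Δ)) := by field_simp
      _ ≤ (1 / (1 + Δ)) ^ k / 2 * -(deriv φ t).re * (w - t) := by
        have h6 : t * (iteratedDeriv 2 φ t).re / k ≤ -(deriv φ t).re := by
          rw [div_le_iff₀ hk]; linarith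
        have : 0 ≤ -(deriv φ t).re := by linarith
        gcongr
  rw [div_le_iff₀ hft0]
  calc ‖f z‖ ≤ C₁ * ((χ w).re * Real.exp (φ w).re) := by linarith
    _ ≤ C₁ * ((χ t).re * Real.exp (φ t).re *
        Real.exp (-((1 / (1 + Δ)) ^ k / 2 / (k * (2 + Δ)) *
          (t * √(iteratedDeriv 2 φ t).re * ξ) ^ 2))) :=
      mul_le_mul_of_nonneg_left (h2.trans (mul_le_mul_of_nonneg_left
        (Real.exp_le_exp.2 (neg_le_neg h3)) (by positivity))) hC₁.le
    _ ≤ C₁ * (2 * ‖f t‖ * Real.exp (-((1 / (1 + Δ)) ^ k / 2 / (k * (2 + Δ)) *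
          (t * √(iteratedDeriv 2 φ t).re * ξ) ^ 2))) :=
      mul_le_mul_of_nonneg_left (mul_le_mul_of_nonneg_right (by linarith)
        (Real.exp_pos _).le) hC₁.le
    _ = _ := by rw [neg_mul]; ring

end InghamLocal

section Laplace

variable {ν : Measure ℝ} {f : ℂ → ℂ}

lemma differentiableOn_laplace (hInt : ∀ t : ℝ, 0 < t → Integrable (fun u => Real.exp (-t * u)) ν)
    (hf : ∀ z : ℂ, 0 < z.re → f z = ∫ u : ℝ, Complex.exp (-z * u) ∂ν) :
    DifferentiableOn ℂ f {z | 0 < z.re} := by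
  have hsub : Iio 0 ⊆ interior (ProbabilityTheory.integrableExpSet id ν) := by
    refine interior_maximal (fun t ht => ?_) isOpen_Iio
    have := hInt (-t) (neg_pos.2 ht)
    simpa [ProbabilityTheory.integrableExpSet] using this
  have h1 : DifferentiableOn ℂ (fun z => ProbabilityTheory.complexMGF id ν (-z)) {z | 0 < z.re} :=
    ProbabilityTheory.differentiableOn_complexMGF.comp (by fun_prop) fun z hz =>
      hsub (by simpa using hz)
  refine h1.congr fun z hz => ?_
  rw [hf z hz, ProbabilityTheory.complexMGF]
  rfl

lemma laplace_ofReal (hf : ∀ z : ℂ, 0 < z.re → f z = ∫ u : ℝ, Complex.exp (-z * u) ∂ν)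
    {t : ℝ} (ht : 0 < t) : f t = ((∫ u, Real.exp (-t * u) ∂ν : ℝ) : ℂ) := by
  rw [hf t (by simpa using ht), ← integral_complex_ofReal]
  congr 1
  ext u
  push_cast
  rfl

lemma norm_laplace_ofReal (hf : ∀ z : ℂ, 0 < z.re → f z = ∫ u : ℝ, Complex.exp (-z * u) ∂ν)
    {t : ℝ} (ht : 0 < t) : ‖f t‖ = ∫ u, Real.exp (-t * u) ∂ν := by
  rw [laplace_ofReal hf ht, Complex.norm_real, Real.norm_of_nonneg]
  exact integral_nonneg fun u => (Real.exp_pos _).le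

lemma norm_laplace_mul_exp_le
    (hInt : ∀ t : ℝ, 0 < t → Integrable (fun u => Real.exp (-t * u)) ν)
    (hf : ∀ z : ℂ, 0 < z.re → f z = ∫ u : ℝ, Complex.exp (-z * u) ∂ν)
    {t b : ℝ} (hb : b < t) (x : ℝ) {z : ℂ} (hz : |z.re| ≤ b) :
    ‖f (t + z)‖ * Real.exp (x * z.re) ≤
      ‖f ((t + b : ℝ) : ℂ)‖ * Real.exp (x * b) + ‖f ((t + -b : ℝ) : ℂ)‖ * Real.exp (x * -b) := by
  have hb0 : 0 ≤ b := (abs_nonneg _).trans hz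
  obtain ⟨hz1, hz2⟩ := abs_le.1 hz
  have hre : ((t : ℂ) + z).re = t + z.re := by simp
  rw [norm_laplace_ofReal hf (by linarith : 0 < t + b),
    norm_laplace_ofReal hf (by linarith : 0 < t + -b), hf _ (by rw [hre]; linarith)]
  have h1 : ‖∫ u : ℝ, Complex.exp (-(t + z) * u) ∂ν‖ ≤ ∫ u, Real.exp (-(t + z.re) * u) ∂ν := by
    refine (norm_integral_le_integral_norm _).trans (le_of_eq ?_)
    congr 1
    ext u
    rw [Complex.norm_exp]
    simp
  refine (mul_le_mul_of_nonneg_right h1 (Real.exp_pos _).le).trans ?_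
  rw [← integral_mul_const, ← integral_mul_const, ← integral_mul_const,
    ← integral_add ((hInt _ (by linarith)).mul_const _) ((hInt _ (by linarith)).mul_const _)]
  refine integral_mono ((hInt _ (by linarith)).mul_const _)
    (((hInt _ (by linarith)).mul_const _).add ((hInt _ (by linarith)).mul_const _)) fun u => ?_
  simp only [← Real.exp_add]
  rcases le_total u x with h | h
  · refine le_add_of_le_of_nonneg (Real.exp_le_exp.2 ?_) (Real.exp_pos _).le
    nlinarith
  · refine le_add_of_nonneg_of_le (Real.exp_pos _).le (Real.exp_le_exp.2 ?_)
    nlinarith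

/-- The law of `t (U - x)` when `U` follows the exponentially tilted measure `e^{-tu} dν(u)`,
normalised. -/
def laplaceTilt (ν : Measure ℝ) (t x : ℝ) : Measure ℝ :=
  (ν.tilted fun u => -t * u).map fun u => t * (u - x)

lemma isProbabilityMeasure_laplaceTilt [NeZero ν] {t : ℝ}
    (hInt : Integrable (fun u => Real.exp (-t * u)) ν) (x : ℝ) :
    IsProbabilityMeasure (laplaceTilt ν t x) := by
  have := isProbabilityMeasure_tilted hInt
  exact Measure.isProbabilityMeasure_map (by fun_prop)

lemma charFun_laplaceTilt (hf : ∀ z : ℂ, 0 < z.re → f z = ∫ u : ℝ, Complex.exp (-z * u) ∂ν)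
    {t : ℝ} (ht : 0 < t) (x ξ : ℝ) : charFun (laplaceTilt ν t x) ξ =
      f (t - (ξ * t : ℝ) * Complex.I) / f t * Complex.exp (-((ξ * t * x : ℝ) * Complex.I)) := by
  rw [laplaceTilt, charFun_apply_real, integral_map (by fun_prop) (by fun_prop), integral_tilted,
    hf (t - (ξ * t : ℝ) * Complex.I) (by simpa using ht), laplace_ofReal hf ht, ← integral_div,
    ← integral_mul_const]
  congr 1
  ext u
  rw [Complex.real_smul, Complex.ofReal_div, div_mul_eq_mul_div, div_mul_eq_mul_div,
    Complex.ofReal_exp, ← Complex.exp_add, ← Complex.exp_add]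
  congr 2
  push_cast
  ring

lemma setIntegral_exp_laplaceTilt
    (hf : ∀ z : ℂ, 0 < z.re → f z = ∫ u : ℝ, Complex.exp (-z * u) ∂ν)
    {t : ℝ} (ht : 0 < t) (x : ℝ) {S : Set ℝ} (hS : MeasurableSet S) :
    ∫ u in S, Real.exp u ∂laplaceTilt ν t x =
      Real.exp (-(t * x)) * ν.real ((fun u => t * (u - x)) ⁻¹' S) / ‖f t‖ := by
  have hm : MeasurableSet ((fun u => t * (u - x)) ⁻¹' S) := (by fun_prop : Measurable _) hS
  rw [laplaceTilt, setIntegral_map hS (by fun_prop) (by fun_prop), setIntegral_tilted' _ _ hm,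
    norm_laplace_ofReal hf ht]
  have : ∀ u : ℝ, (Real.exp (-t * u) / ∫ u, Real.exp (-t * u) ∂ν) • Real.exp (t * (u - x)) =
      Real.exp (-(t * x)) / ∫ u, Real.exp (-t * u) ∂ν := fun u => by
    rw [smul_eq_mul, div_mul_eq_mul_div, ← Real.exp_add]
    ring_nf
  simp_rw [this]
  rw [setIntegral_const, smul_eq_mul]
  ring

end Laplace

section LocalLimit

variable {ν : Measure ℝ} {f : ℂ → ℂ} {t σ x : ℕ → ℝ}

lemma laplace_eq_norm (hf : ∀ z : ℂ, 0 < z.re → f z = ∫ u : ℝ, Complex.exp (-z * u) ∂ν)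
    {r : ℝ} (hr : 0 < r) : f r = (‖f r‖ : ℂ) := by
  rw [norm_laplace_ofReal hf hr, laplace_ofReal hf hr]

lemma tendsto_charFun_laplaceTilt
    (hInt : ∀ t : ℝ, 0 < t → Integrable (fun u => Real.exp (-t * u)) ν)
    (hf : ∀ z : ℂ, 0 < z.re → f z = ∫ u : ℝ, Complex.exp (-z * u) ∂ν)
    (ht : ∀ n, 0 < t n) (hσ : ∀ᶠ n in atTop, 0 < σ n)
    (hN : Tendsto (fun n => t n * σ n) atTop atTop)
    (hreal : ∀ s : ℝ, Tendsto (fun n => ‖f ((t n + s / σ n : ℝ) : ℂ)‖ / ‖f (t n)‖ *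
      Real.exp (x n * (s / σ n))) atTop (𝓝 (Real.exp (s ^ 2 / 2)))) (y : ℝ) :
    Tendsto (fun n => charFun (laplaceTilt ν (t n) (x n)) (y / (t n * σ n))) atTop
      (𝓝 (Real.exp (-y ^ 2 / 2) : ℂ)) := by
  set R : ℝ := 2 * |y| + 1 with hR
  have hR0 : 0 < R := by positivity
  set G : ℕ → ℂ → ℂ := fun n s =>
    f (t n + s / σ n) / f (t n) * Complex.exp (x n * (s / σ n)) with hG
  have hpos : ∀ᶠ n in atTop, ∀ s : ℝ, |s| ≤ R → 0 < t n + s / σ n := by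
    filter_upwards [hσ, hN.eventually_gt_atTop R] with n hn hn' s hs
    have : t n + s / σ n = (t n * σ n + s) / σ n := by field_simp
    rw [this]
    exact div_pos (by linarith [(abs_le.1 hs).1]) hn
  have hK : ∀ᶠ n in atTop, DifferentiableOn ℂ (fun s => G n s - Complex.exp (s ^ 2 / 2))
      (Metric.ball 0 R) ∧ ∀ s ∈ Metric.ball (0 : ℂ) R,
        ‖G n s - Complex.exp (s ^ 2 / 2)‖ ≤ 3 * Real.exp (R ^ 2 / 2) + 1 := by
    have hRe : ∀ s ∈ Metric.ball (0 : ℂ) R, |s.re| ≤ R := fun s hs =>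
      (Complex.abs_re_le_norm s).trans (mem_ball_zero_iff.1 hs).le
    filter_upwards [hσ, hpos,
      (hreal R).eventually_le_const (lt_add_of_pos_right _ (half_pos one_pos)),
      (hreal (-R)).eventually_le_const (lt_add_of_pos_right _ (half_pos one_pos))]
      with n hn hn' h1 h2
    have hmem : ∀ s ∈ Metric.ball (0 : ℂ) R, 0 < ((t n : ℂ) + s / σ n).re := fun s hs => by
      simpa using hn' s.re (hRe s hs)
    refine ⟨DifferentiableOn.sub (DifferentiableOn.mul ?_ (by fun_prop)) (by fun_prop),
      fun s hs => ?_⟩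
    · exact ((differentiableOn_laplace hInt hf).comp (by fun_prop) hmem).div_const _
    · have hs1 : ‖Complex.exp (s ^ 2 / 2)‖ ≤ Real.exp (R ^ 2 / 2) := by
        rw [Complex.norm_exp]
        refine Real.exp_le_exp.2 ((Complex.re_le_norm _).trans ?_)
        rw [norm_div, norm_pow, Complex.norm_ofNat]
        gcongr
        exact (mem_ball_zero_iff.1 hs).le
      have hb : R / σ n < t n := by
        have := hn' (-R) (by rw [abs_neg, abs_of_pos hR0])
        rw [neg_div] at this
        linarith
      have hb' : |(s / σ n : ℂ).re| ≤ R / σ n := by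
        rw [Complex.div_ofReal_re, abs_div, abs_of_pos hn]
        gcongr
        exact hRe s hs
      have h3 := norm_laplace_mul_exp_le hInt hf hb (x n) hb'
      have h4 : ‖G n s‖ ≤ 2 * Real.exp (R ^ 2 / 2) + 1 := by
        have h5 : ‖G n s‖ = ‖f (t n + s / σ n)‖ * Real.exp (x n * (s / σ n : ℂ).re) / ‖f (t n)‖ := by
          rw [hG, norm_mul, norm_div, Complex.norm_exp, Complex.re_ofReal_mul]
          ring
        rw [neg_sq] at h2
        rw [neg_div] at h2
        rw [h5]
        refine (div_le_div_of_nonneg_right h3 (norm_nonneg _)).trans ?_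
        rw [add_div, mul_div_right_comm, mul_div_right_comm]
        linarith
      linarith [norm_sub_le (G n s) (Complex.exp (s ^ 2 / 2))]
  have hs : ∀ s : ℝ, s ≠ 0 → |s| < R →
      Tendsto (fun n => G n s - Complex.exp ((s : ℂ) ^ 2 / 2)) atTop (𝓝 0) := fun s _ hsR => by
    rw [← sub_self (Complex.exp ((s : ℂ) ^ 2 / 2))]
    refine Tendsto.sub_const ?_ _
    have := (Complex.continuous_ofReal.tendsto _).comp (hreal s)
    rw [Complex.ofReal_exp] at this
    push_cast at this
    refine this.congr' ?_
    filter_upwards [hpos] with n hn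
    simp only [Function.comp_apply, hG]
    have e1 : f ((t n : ℂ) + s / σ n) = (‖f ((t n + s / σ n : ℝ) : ℂ)‖ : ℂ) := by
      rw [← laplace_eq_norm hf (hn s hsR.le)]
      push_cast
      rfl
    rw [e1]
    conv_rhs => rw [laplace_eq_norm hf (ht n)]
    push_cast
    simp
  have hfin := tendsto_zero_of_tendsto_ofReal (z := -(y * Complex.I)) hR0 hK hs (by
    rw [norm_neg, norm_mul, Complex.norm_I, Complex.norm_real, Real.norm_eq_abs]
    linarith)
  have h5 := hfin.add_const (Complex.exp ((-(y * Complex.I)) ^ 2 / 2))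
  simp only [sub_add_cancel, zero_add] at h5
  have e : Complex.exp ((-(y * Complex.I)) ^ 2 / 2) = (Real.exp (-y ^ 2 / 2) : ℂ) := by
    rw [neg_sq, mul_pow, Complex.I_sq]
    push_cast
    ring_nf
  rw [e] at h5
  refine h5.congr' ?_
  filter_upwards [hσ] with n hn
  rw [charFun_laplaceTilt hf (ht n), hG]
  have ht0 : (t n : ℂ) ≠ 0 := by exact_mod_cast (ht n).ne'
  have hs0 : (σ n : ℂ) ≠ 0 := by exact_mod_cast hn.ne'
  have e1 : (t n : ℂ) - (y / (t n * σ n) * t n : ℝ) * Complex.I = t n + -(y * Complex.I) / σ n := by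
    push_cast
    field_simp
    ring
  have e2 : -((y / (t n * σ n) * t n * x n : ℝ) * Complex.I) = x n * (-(y * Complex.I) / σ n) := by
    push_cast
    field_simp
  rw [e1, e2]

/-- The local limit theorem for the tilted laws: the part of `ν` below `x` is governed by the
Gaussian density at the origin. -/
lemma tendsto_mul_measureReal_div [NeZero ν]
    (hInt : ∀ t : ℝ, 0 < t → Integrable (fun u => Real.exp (-t * u)) ν)
    (hf : ∀ z : ℂ, 0 < z.re → f z = ∫ u : ℝ, Complex.exp (-z * u) ∂ν)
    (ht : ∀ n, 0 < t n) (hσ : ∀ᶠ n in atTop, 0 < σ n)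
    (hN : Tendsto (fun n => t n * σ n) atTop atTop)
    (hreal : ∀ s : ℝ, Tendsto (fun n => ‖f ((t n + s / σ n : ℝ) : ℂ)‖ / ‖f (t n)‖ *
      Real.exp (x n * (s / σ n))) atTop (𝓝 (Real.exp (s ^ 2 / 2))))
    (hsec : ∀ Δ : ℝ, 0 < Δ → ∃ C c : ℝ, 0 < c ∧ ∀ᶠ n in atTop, ∀ ξ : ℝ, |ξ| ≤ Δ →
      ‖f (t n - (ξ * t n : ℝ) * Complex.I)‖ / ‖f (t n)‖ ≤
        C * Real.exp (-c * (t n * σ n * ξ) ^ 2))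
    {S : Set ℝ} (hS : MeasurableSet S) (hS1 : Iio 0 ⊆ S) (hS2 : S ⊆ Iic 0) :
    Tendsto (fun n => t n * σ n * (Real.exp (-(t n * x n)) *
      ν.real ((fun u => t n * (u - x n)) ⁻¹' S) / ‖f (t n)‖)) atTop (𝓝 (√(2 * Real.pi))⁻¹) := by
  have : ∀ n, IsProbabilityMeasure (laplaceTilt ν (t n) (x n)) := fun n =>
    isProbabilityMeasure_laplaceTilt (hInt _ (ht n)) _
  refine (tendsto_mul_setIntegral_exp hN (tendsto_charFun_laplaceTilt hInt hf ht hσ hN hreal)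
    (fun Δ hΔ => ?_) hS hS1 hS2).congr fun n => ?_
  · obtain ⟨C, c, hc, h⟩ := hsec Δ hΔ
    refine ⟨C, c, hc, h.mono fun n hn ξ hξ => ?_⟩
    rw [charFun_laplaceTilt hf (ht n), norm_mul, norm_div, ← neg_mul, ← Complex.ofReal_neg,
      Complex.norm_exp_ofReal_mul_I, mul_one]
    exact hn ξ hξ
  · rw [setIntegral_exp_laplaceTilt hf (ht n) _ hS]

end LocalLimit

namespace InghamLocal

variable {D : Set ℂ} {T C k : ℝ} {δ : ℝ → ℝ} {φ χ f : ℂ → ℂ} {ν : Measure ℝ}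

lemma tendsto_mul_measureReal_div (H : InghamLocal D T C k δ φ χ) [NeZero ν]
    (hInt : ∀ t : ℝ, 0 < t → Integrable (fun u => Real.exp (-t * u)) ν)
    (hf : ∀ z : ℂ, 0 < z.re → f z = ∫ u : ℝ, Complex.exp (-z * u) ∂ν)
    (hfa : Tendsto (fun t : ℝ => ‖f t‖ / ((χ t).re * Real.exp (φ t).re)) (𝓝[>] 0) (𝓝 1))
    (hsec : ∀ Δ : ℝ, 0 < Δ → ∃ C ρ : ℝ, 0 < C ∧ 0 < ρ ∧ ∀ z : ℂ, 0 < z.re →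
      |z.im| ≤ Δ * z.re → ‖z‖ < ρ →
      ‖f z‖ ≤ C * ‖χ ((‖z‖ : ℝ) : ℂ)‖ * Real.exp ((φ ((‖z‖ : ℝ) : ℂ)).re))
    {S : Set ℝ} (hS : MeasurableSet S) (hS1 : Iio 0 ⊆ S) (hS2 : S ⊆ Iic 0) :
    Tendsto (fun t : ℝ => t * √(iteratedDeriv 2 φ t).re * (Real.exp (-(t * -(deriv φ t).re)) *
      ν.real ((fun u => t * (u - -(deriv φ t).re)) ⁻¹' S) / ‖f t‖)) (𝓝[>] 0)
      (𝓝 (√(2 * Real.pi))⁻¹) := by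
  have hδ := H.tendsto_delta_mul_sqrt
    (H.eventually_le_mul_deriv2 (differentiableOn_laplace hInt hf) hfa (hsec 1 one_pos))
  have hσ : ∀ᶠ t : ℝ in 𝓝[>] 0, 0 < √(iteratedDeriv 2 φ t).re := by
    filter_upwards [Ioc_mem_nhdsGT H.T_pos] with t ht
    exact Real.sqrt_pos.2 (H.deriv2_pos t ht)
  refine tendsto_of_seq_tendsto fun t ht => ?_
  obtain ⟨m, hm⟩ := (ht.eventually self_mem_nhdsWithin).exists_forall_of_atTop
  rw [← tendsto_add_atTop_iff_nat m]
  have ht' : Tendsto (fun n => t (n + m)) atTop (𝓝[>] 0) := (tendsto_add_atTop_iff_nat m).2 ht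
  refine _root_.tendsto_mul_measureReal_div (t := fun n => t (n + m))
    (σ := fun n => √(iteratedDeriv 2 φ (t (n + m))).re) (x := fun n => -(deriv φ (t (n + m))).re)
    hInt hf (fun n => hm _ (Nat.le_add_left _ _)) (ht'.eventually hσ)
    ((H.tendsto_mul_sqrt hδ).comp ht') (fun s => (H.tendsto_norm_ratio hfa hδ s).comp ht')
    (fun Δ hΔ => ?_) hS hS1 hS2
  obtain ⟨C', c', hc', h⟩ := H.eventually_norm_sector_le hfa hδ hΔ (hsec Δ hΔ)
  exact ⟨C', c', hc', ht'.eventually h⟩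

end InghamLocal

lemma Monotone.stieltjesFunction_measureReal_bounds {A : ℝ → ℝ} (hA : Monotone A)
    (hA0 : ∀ x ≤ 0, A x = 0) {x : ℝ} (hx : 0 < x) :
    (hA.stieltjesFunction.measure.restrict (Ici 0)).real (Iio x) ≤ A x ∧
      A x ≤ (hA.stieltjesFunction.measure.restrict (Ici 0)).real (Iic x) := by
  have hfun : (hA.stieltjesFunction : ℝ → ℝ) = Function.rightLim A :=
    funext hA.stieltjesFunction_eq
  have h0 : Function.leftLim hA.stieltjesFunction 0 = 0 := by
    rw [hfun, leftLim_rightLim (hA.tendsto_leftLim _)]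
    refine leftLim_eq_of_tendsto (tendsto_const_nhds.congr' ?_)
    filter_upwards [self_mem_nhdsWithin] with y hy
    rw [hA0 y (le_of_lt hy)]
  have hA0' : A 0 = 0 := hA0 0 le_rfl
  constructor
  · rw [measureReal_restrict_apply measurableSet_Iio, inter_comm, Ici_inter_Iio, measureReal_def,
      StieltjesFunction.measure_Ico, h0, sub_zero, hfun, leftLim_rightLim (hA.tendsto_leftLim _)]
    rw [ENNReal.toReal_ofReal']
    exact max_le (hA.leftLim_le le_rfl) (hA0' ▸ hA hx.le)
  · rw [measureReal_restrict_apply measurableSet_Iic, inter_comm, Ici_inter_Iic, measureReal_def,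
      StieltjesFunction.measure_Icc, h0, sub_zero, hfun]
    have := hA.le_rightLim (le_refl x)
    rwa [ENNReal.toReal_ofReal ((hA0' ▸ hA hx.le : (0:ℝ) ≤ A x).trans this)]

namespace InghamLocal

variable {D : Set ℂ} {T C k : ℝ} {δ : ℝ → ℝ} {φ χ f : ℂ → ℂ} {ν : Measure ℝ}

/-- The asymptotics of `A (-φ' t)` as `t → 0⁺`, for any function `A` squeezed between the two
versions of the distribution function of `ν`. -/
lemma tendsto_distribution_div (H : InghamLocal D T C k δ φ χ) [NeZero ν]
    (hInt : ∀ t : ℝ, 0 < t → Integrable (fun u => Real.exp (-t * u)) ν)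
    (hf : ∀ z : ℂ, 0 < z.re → f z = ∫ u : ℝ, Complex.exp (-z * u) ∂ν)
    (hfa : Tendsto (fun t : ℝ => ‖f t‖ / ((χ t).re * Real.exp (φ t).re)) (𝓝[>] 0) (𝓝 1))
    (hsec : ∀ Δ : ℝ, 0 < Δ → ∃ C ρ : ℝ, 0 < C ∧ 0 < ρ ∧ ∀ z : ℂ, 0 < z.re →
      |z.im| ≤ Δ * z.re → ‖z‖ < ρ →
      ‖f z‖ ≤ C * ‖χ ((‖z‖ : ℝ) : ℂ)‖ * Real.exp ((φ ((‖z‖ : ℝ) : ℂ)).re))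
    {A : ℝ → ℝ} (hA : ∀ x : ℝ, 0 < x → ν.real (Iio x) ≤ A x ∧ A x ≤ ν.real (Iic x)) :
    Tendsto (fun t : ℝ => A (-(deriv φ t).re) /
      ((χ t).re * Real.exp ((φ t).re + -(deriv φ t).re * t) /
        (t * √(2 * Real.pi * (iteratedDeriv 2 φ t).re)))) (𝓝[>] 0) (𝓝 1) := by
  have h1 := H.tendsto_mul_measureReal_div hInt hf hfa hsec measurableSet_Iio subset_rfl
    Iio_subset_Iic_self
  have h2 := H.tendsto_mul_measureReal_div hInt hf hfa hsec measurableSet_Iic Iio_subset_Iic_self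
    subset_rfl
  have hmem : ∀ᶠ t : ℝ in 𝓝[>] 0, t ∈ Ioc 0 T := Ioc_mem_nhdsGT H.T_pos
  have h3 : Tendsto (fun t : ℝ => t * √(iteratedDeriv 2 φ t).re *
      (Real.exp (-(t * -(deriv φ t).re)) * A (-(deriv φ t).re) / ‖f t‖)) (𝓝[>] 0)
      (𝓝 (√(2 * Real.pi))⁻¹) := by
    refine tendsto_of_tendsto_of_tendsto_of_le_of_le' h1 h2 ?_ ?_
    · filter_upwards [hmem] with t ht
      have ht0 := ht.1
      gcongr
      refine le_trans (le_of_eq ?_) (hA _ (neg_pos.2 (H.deriv_neg t ht))).1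
      congr 1
      ext u
      simp [mul_neg_iff, ht0, ht0.not_gt]
      constructor <;> intro <;> linarith
    · filter_upwards [hmem] with t ht
      have ht0 := ht.1
      gcongr
      refine (hA _ (neg_pos.2 (H.deriv_neg t ht))).2.trans (le_of_eq ?_)
      congr 1
      ext u
      simp [mul_nonpos_iff, ht0.le, ht0.not_ge]
      constructor <;> intro <;> linarith
  have h4 := (h3.mul_const √(2 * Real.pi)).mul hfa
  rw [inv_mul_cancel₀ (by positivity), one_mul] at h4
  refine h4.congr' ?_
  filter_upwards [hmem, hfa.eventually_ne one_ne_zero] with t ht hft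
  have hf0 : ‖f t‖ ≠ 0 := fun h => hft (by rw [h, zero_div])
  have hχ := H.chi_pos t ht
  have hP := Real.sqrt_pos.2 (H.deriv2_pos t ht)
  have ht0 := ht.1
  have hpi : 0 < √(2 * Real.pi) := by positivity
  rw [Real.sqrt_mul (by positivity : 0 ≤ 2 * Real.pi), Real.exp_add, Real.exp_neg,
    mul_comm t (-(deriv φ t).re)]
  field_simp

end InghamLocal

/-- An inverse of `g` near `+∞` tends to the only point where `g` can be unbounded. -/
lemma tendsto_inverse_nhdsGT_zero {g ψ : ℝ → ℝ} {h : ℝ} (hg : ContinuousOn g (Ioc 0 h))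
    (hψ : ∀ᶠ x in atTop, 0 < ψ x ∧ ψ x ≤ h ∧ g (ψ x) = x) : Tendsto ψ atTop (𝓝[>] 0) := by
  refine tendsto_nhdsWithin_iff.2 ⟨?_, hψ.mono fun x hx => hx.1⟩
  refine tendsto_order.2 ⟨fun a ha => hψ.mono fun x hx => ha.trans hx.1, fun ε hε => ?_⟩
  obtain ⟨M, hM⟩ := (isCompact_Icc (a := ε) (b := h)).bddAbove_image
    (hg.mono fun y hy => ⟨hε.trans_le hy.1, hy.2⟩)
  filter_upwards [hψ, eventually_gt_atTop M] with x hx hxM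
  by_contra! hcon
  have := hM (mem_image_of_mem g ⟨hcon, hx.2.1⟩)
  linarith [hx.2.2]

/-- Ingham's Tauberian theorem, real-axis variant (Theorem 1' of Ingham). `A : ℝ → ℝ` is weakly increasing with `A = 0` on `(-∞,0]`
(representing a weakly increasing function on `[0,∞)` with `A(0) = 0`), and
`f(z) = ∫_0^∞ e^{-zu} dA(u)` is the Lebesgue–Stieltjes integral with respect to `A`. -/
theorem ingham_tauberian_real_axis
    (D : Set ℂ) (hDopen : IsOpen D) (hDconn : IsConnected D)
    (h : ℝ) (hh : 0 < h) (hD : ∀ t : ℝ, 0 < t → t ≤ h → (t : ℂ) ∈ D)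
    -- δ(t) is the distance from t to the complement of D
    (δ : ℝ → ℝ) (hδ : ∀ t : ℝ, 0 < t → t ≤ h → δ t = Metric.infDist (t : ℂ) Dᶜ)
    (φ χ : ℂ → ℂ)
    -- (a) φ and χ are holomorphic on D, and positive on (0,h]
    (hφdiff : DifferentiableOn ℂ φ D) (hχdiff : DifferentiableOn ℂ χ D)
    (hφpos : ∀ t : ℝ, 0 < t → t ≤ h → (φ (t : ℂ)).im = 0 ∧ 0 < (φ (t : ℂ)).re)
    (hχpos : ∀ t : ℝ, 0 < t → t ≤ h → (χ (t : ℂ)).im = 0 ∧ 0 < (χ (t : ℂ)).re)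
    -- (b) -t φ'(t) → ∞ as t → 0⁺
    (hb : Tendsto (fun t : ℝ => -t * (deriv φ (t : ℂ)).re) (𝓝[>] (0:ℝ)) atTop)
    -- (c) -δ(t) φ'(t) / (t √(φ''(t))) → ∞ as t → 0⁺
    (hc : Tendsto (fun t : ℝ =>
        -δ t * (deriv φ (t : ℂ)).re / (t * Real.sqrt ((iteratedDeriv 2 φ (t : ℂ)).re)))
      (𝓝[>] (0:ℝ)) atTop)
    -- (d) φ''(t+z) = O(φ''(t)) and χ(t+z) = O(χ(t)) uniformly over |z| < δ(t) as t → 0⁺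
    (hd : ∃ C t₀ : ℝ, 0 < t₀ ∧ ∀ t : ℝ, 0 < t → t ≤ t₀ → ∀ z : ℂ, ‖z‖ < δ t →
        ‖iteratedDeriv 2 φ ((t : ℂ) + z)‖ ≤ C * ‖iteratedDeriv 2 φ (t : ℂ)‖ ∧
        ‖χ ((t : ℂ) + z)‖ ≤ C * ‖χ (t : ℂ)‖)
    (A : ℝ → ℝ) (hAmono : Monotone A) (hA0 : ∀ x : ℝ, x ≤ 0 → A x = 0)
    (f : ℂ → ℂ)
    (hfdef : ∀ z : ℂ, 0 < z.re →
        f z = ∫ u in Ici (0:ℝ), Complex.exp (-z * u) ∂hAmono.stieltjesFunction.measure)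
    -- f(z) exists for Re(z) > 0
    (hfint : ∀ z : ℂ, 0 < z.re →
        IntegrableOn (fun u : ℝ => Complex.exp (-z * u)) (Ici (0:ℝ))
          hAmono.stieltjesFunction.measure)
    -- additionally, -t^k φ'(t) decreases to 0 as t → 0⁺, for some fixed k ∈ ℝ
    (hk : ∃ k : ℝ, MonotoneOn (fun t : ℝ => -(t ^ k) * (deriv φ (t : ℂ)).re) (Ioc (0:ℝ) h) ∧
        Tendsto (fun t : ℝ => -(t ^ k) * (deriv φ (t : ℂ)).re) (𝓝[>] (0:ℝ)) (𝓝 0))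
    -- (i') f(t) ~ χ(t) e^{φ(t)} as t → 0⁺ along the positive reals
    (hi' : Tendsto (fun t : ℝ => f (t : ℂ) / (χ (t : ℂ) * Complex.exp (φ (t : ℂ))))
      (𝓝[>] (0:ℝ)) (𝓝 1))
    -- (ii) for each Δ > 0, f(z) = O(χ(|z|) e^{φ(|z|)}) as z → 0 with |Im z| ≤ Δ Re z
    (hii : ∀ Δ : ℝ, 0 < Δ → ∃ C ρ : ℝ, 0 < C ∧ 0 < ρ ∧ ∀ z : ℂ, 0 < z.re →
        |z.im| ≤ Δ * z.re → ‖z‖ < ρ →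
        ‖f z‖ ≤ C * ‖χ ((‖z‖ : ℝ) : ℂ)‖ * Real.exp ((φ ((‖z‖ : ℝ) : ℂ)).re))
    -- ψ is the inverse function of -φ'
    (ψ : ℝ → ℝ)
    (hψ : ∀ᶠ x in atTop, 0 < ψ x ∧ ψ x ≤ h ∧ -(deriv φ ((ψ x : ℝ) : ℂ)).re = x) :
    Tendsto (fun x : ℝ => A x /
        ((χ ((ψ x : ℝ) : ℂ)).re * Real.exp ((φ ((ψ x : ℝ) : ℂ)).re + x * ψ x) /
          (ψ x * Real.sqrt (2 * Real.pi * (iteratedDeriv 2 φ ((ψ x : ℝ) : ℂ)).re))))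
      atTop (𝓝 1) := by
  obtain ⟨k, hk, -⟩ := hk
  obtain ⟨T, C, -, H⟩ := exists_inghamLocal hDopen hh hD hδ hφdiff hχdiff hφpos hχpos hb hc hd hk
  set ν := hAmono.stieltjesFunction.measure.restrict (Ici 0)
  have hfa : Tendsto (fun t : ℝ => ‖f t‖ / ((χ t).re * Real.exp (φ t).re)) (𝓝[>] 0) (𝓝 1) := by
    rw [← norm_one (α := ℂ)]
    refine hi'.norm.congr' ?_
    filter_upwards [Ioc_mem_nhdsGT H.T_pos] with t ht
    rw [norm_div, norm_mul, Complex.norm_exp, H.norm_chi ht]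
  have hInt : ∀ t : ℝ, 0 < t → Integrable (fun u => Real.exp (-t * u)) ν := fun t ht => by
    refine ((hfint t (by simpa using ht)).norm).congr (Eventually.of_forall fun u => ?_)
    simp [Complex.norm_exp]
  have : NeZero ν := ⟨fun h0 => by
    obtain ⟨t, ht, ht'⟩ := ((hfa.eventually_ne one_ne_zero).and self_mem_nhdsWithin).exists
    rw [hfdef t (by simpa using ht'), h0] at ht
    simp at ht⟩
  have hψ0 : Tendsto ψ atTop (𝓝[>] 0) := by
    refine tendsto_inverse_nhdsGT_zero (g := fun t => -(deriv φ t).re) ?_ hψ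
    refine (Complex.continuous_re.comp_continuousOn ?_).neg
    exact (hφdiff.deriv hDopen).continuousOn.comp (by fun_prop) fun t ht => hD t ht.1 ht.2
  refine ((H.tendsto_distribution_div hInt hfdef hfa hii fun x hx =>
    hAmono.stieltjesFunction_measureReal_bounds hA0 hx).comp hψ0).congr' ?_
  filter_upwards [hψ] with x hx
  simp only [Function.comp_apply, hx.2.2]

end
end

section
/- Define A(n) = 0 for n = 0 and A(n) = e^{2 m^{3/2}} m^{-1/4} whenever m^3 \le n < (m+1)^3 with m \ge 1, and let F(q) = \sum_{n \ge 0} A(n) q^n. Then F(e^{-t}) \sim \frac{2\sqrt{\pi}}{3} \cdot \frac{e^{1/t}}{t} as t \to 0^+. -/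
open Filter Topology Set

open MeasureTheory

/-- The `m`-th block of the generating function at `t = s ^ 6`, divided by `s * exp (1 / t)`
and written in the rescaled variable `m * s ^ 4`. -/
noncomputable def rescaledBlock (s : ℝ) (m : ℕ) : ℝ :=
  (m * s ^ 4) ^ (-(1/4) : ℝ) * Real.exp (-((√(m * s ^ 4) ^ 3 - 1) / s ^ 3) ^ 2) *
    (1 - Real.exp (-s ^ 6 * ((m + 1) ^ 3 - m ^ 3)))

lemma rescaledBlock_zero (s : ℝ) : rescaledBlock s 0 = 0 := by
  have : (0:ℝ) ^ (-(1/4) : ℝ) = 0 := Real.zero_rpow (by norm_num)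
  simp only [rescaledBlock, Nat.cast_zero, zero_mul, this]

/-- The index sampled at the rescaled position `y`. -/
noncomputable def sampleIndex (s y : ℝ) : ℕ := ⌊s⁻¹ * ((s ^ 3)⁻¹ + y)⌋₊

lemma hasSum_integral_comp_floor {h : ℕ → ℝ} (h0 : h 0 = 0)
    (hi : Integrable (fun x : ℝ => h ⌊x⌋₊)) : HasSum h (∫ x : ℝ, h ⌊x⌋₊) := by
  have hmem : ∀ (n : ℕ) (x : ℝ), x ∈ Ico (n:ℝ) (n + 1) → ⌊x⌋₊ = n := fun n x hx =>
    (Nat.floor_eq_iff (n.cast_nonneg.trans hx.1)).2 hx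
  have key := hasSum_integral_iUnion (μ := volume) (f := fun x : ℝ => h ⌊x⌋₊)
    (s := fun n : ℕ => Ico (n:ℝ) (n + 1)) (fun _ => measurableSet_Ico)
    (fun i j hij => Set.disjoint_left.2 fun x hx hx' =>
      hij ((hmem i x hx).symm.trans (hmem j x hx')))
    hi.integrableOn
  rw [setIntegral_eq_integral_of_forall_compl_eq_zero] at key
  · have hterm : ∀ n : ℕ, ∫ x in Ico (n:ℝ) (n + 1), h ⌊x⌋₊ = h n := fun n => by
      rw [setIntegral_congr_fun measurableSet_Ico
        (g := fun _ => h n) (fun x hx => by simp only [hmem n x hx])]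
      simp
    simpa only [hterm] using key
  · intro x hx
    have hx0 : x < 0 := by
      by_contra! hx0
      exact hx (mem_iUnion.2 ⟨⌊x⌋₊, Nat.floor_le hx0, Nat.lt_floor_add_one x⟩)
    simp only [Nat.floor_of_nonpos hx0.le, h0]

/-- The deviation of a sampled index from the saddle point, in the rescaled variable. -/
lemma abs_sub_sampleIndex_le {s y : ℝ} (hs : 0 < s) (hy : 0 ≤ (s ^ 3)⁻¹ + y) :
    |y - (s * sampleIndex s y - (s ^ 3)⁻¹)| ≤ s := by
  have hx : 0 ≤ s⁻¹ * ((s ^ 3)⁻¹ + y) := by positivity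
  have h1 : s * (sampleIndex s y : ℝ) ≤ s * (s⁻¹ * ((s ^ 3)⁻¹ + y)) :=
    mul_le_mul_of_nonneg_left (Nat.floor_le hx) hs.le
  have h2 : s * (s⁻¹ * ((s ^ 3)⁻¹ + y)) ≤ s * ((sampleIndex s y : ℝ) + 1) :=
    mul_le_mul_of_nonneg_left (Nat.lt_floor_add_one _).le hs.le
  rw [mul_inv_cancel_left₀ hs.ne'] at h1 h2
  rw [abs_le]
  constructor <;> linarith

lemma sqrt_cube_sub_one_div {s : ℝ} (hs : 0 < s) (m : ℕ) :
    (√(m * s ^ 4) ^ 3 - 1) / s ^ 3 = (s * m - (s ^ 3)⁻¹) *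
      ((√(m * s ^ 4) ^ 2 + √(m * s ^ 4) + 1) / (√(m * s ^ 4) + 1)) := by
  have hw : 0 ≤ √(m * s ^ 4) := Real.sqrt_nonneg _
  have hw2 : √(m * s ^ 4) ^ 2 = m * s ^ 4 := Real.sq_sqrt (by positivity)
  generalize √(m * s ^ 4) = w at *
  have h1 : s * m - (s ^ 3)⁻¹ = (w ^ 2 - 1) / s ^ 3 := by
    rw [hw2]; field_simp
  rw [h1]
  field_simp
  ring

lemma rpow_neg_quarter_le {s : ℝ} (hs : 0 < s) (hs1 : s ≤ 1) {m : ℕ} (hm : 1 ≤ m) :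
    (m * s ^ 4) ^ (-(1/4) : ℝ) ≤ 2 * (1 + |s * m - (s ^ 3)⁻¹|) := by
  have hm' : (1:ℝ) ≤ m := by exact_mod_cast hm
  have hpow : ∀ x : ℝ, 0 < x → (x ^ 4) ^ (-(1/4) : ℝ) = x⁻¹ := fun x hx => by
    rw [← Real.rpow_natCast, ← Real.rpow_mul hx.le, ← Real.rpow_neg_one]
    norm_num
  rcases le_total ((1/2 : ℝ) ^ 4) (m * s ^ 4) with h | h
  · have h1 := Real.rpow_le_rpow_of_nonpos (by norm_num) h (by norm_num : (-(1/4) : ℝ) ≤ 0)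
    rw [hpow _ (by norm_num)] at h1
    have := abs_nonneg (s * m - (s ^ 3)⁻¹)
    norm_num at h1 ⊢
    linarith
  · have h1 := Real.rpow_le_rpow_of_nonpos (by positivity)
      (le_mul_of_one_le_left (by positivity) hm' : s ^ 4 ≤ m * s ^ 4)
      (by norm_num : (-(1/4) : ℝ) ≤ 0)
    rw [hpow _ hs] at h1
    have h2 : s⁻¹ ≤ (s ^ 3)⁻¹ :=
      inv_anti₀ (by positivity) (pow_le_of_le_one hs.le hs1 (by norm_num))
    have h3 : s * m ≤ (1/16) * (s ^ 3)⁻¹ := by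
      rw [← div_eq_mul_inv, le_div_iff₀ (by positivity)]
      nlinarith
    have h4 := neg_abs_le (s * m - (s ^ 3)⁻¹)
    have h5 : 0 < s⁻¹ := by positivity
    linarith

lemma one_add_mul_exp_le {d y : ℝ} (h : |y - d| ≤ 1) :
    (1 + |d|) * Real.exp (-d ^ 2) ≤ Real.exp 1 * Real.exp (-(1/4) * y ^ 2) := by
  calc (1 + |d|) * Real.exp (-d ^ 2) ≤ Real.exp |d| * Real.exp (-d ^ 2) := by
        gcongr
        linarith [Real.add_one_le_exp |d|]
    _ = Real.exp (|d| - d ^ 2) := by rw [← Real.exp_add]; ring_nf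
    _ ≤ Real.exp (1 + -(1/4) * y ^ 2) := by
        gcongr
        have h1 := sq_abs d
        have h2 : (y - d) ^ 2 ≤ 1 := by
          rw [← sq_abs]
          exact pow_le_one₀ (abs_nonneg _) h
        nlinarith [sq_nonneg (|d| - 1), sq_nonneg (y - 2 * d)]
    _ = _ := Real.exp_add _ _

lemma block_factor_mem_Icc (s : ℝ) (m : ℕ) :
    1 - Real.exp (-s ^ 6 * ((m + 1) ^ 3 - (m:ℝ) ^ 3)) ∈ Icc (0:ℝ) 1 := by
  have h1 : -s ^ 6 * ((m + 1) ^ 3 - (m:ℝ) ^ 3) ≤ 0 := by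
    have h6 : 0 ≤ s ^ 6 := by positivity
    have : 0 ≤ ((m + 1) ^ 3 - (m:ℝ) ^ 3) := by
      ring_nf
      positivity
    nlinarith
  have h2 := Real.exp_le_one_iff.2 h1
  have h3 := Real.exp_pos (-s ^ 6 * ((m + 1) ^ 3 - (m:ℝ) ^ 3))
  constructor <;> linarith

lemma norm_rescaledBlock_le {s : ℝ} (hs : 0 < s) (hs1 : s ≤ 1) (y : ℝ) :
    ‖rescaledBlock s (sampleIndex s y)‖ ≤
      2 * Real.exp 1 * Real.exp (-(1/4) * y ^ 2) := by
  rcases Nat.eq_zero_or_pos (sampleIndex s y) with h0 | hm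
  · rw [h0, rescaledBlock_zero, norm_zero]
    positivity
  have hy : 0 ≤ (s ^ 3)⁻¹ + y := by
    by_contra! hy
    exact hm.ne' (Nat.floor_of_nonpos (mul_nonpos_of_nonneg_of_nonpos (by positivity) hy.le))
  have hdev := (abs_sub_sampleIndex_le hs hy).trans hs1
  generalize sampleIndex s y = m at *
  have hf := block_factor_mem_Icc s m
  have hexp : Real.exp (-((√(m * s ^ 4) ^ 3 - 1) / s ^ 3) ^ 2) ≤
      Real.exp (-(s * m - (s ^ 3)⁻¹) ^ 2) := by
    rw [sqrt_cube_sub_one_div hs, mul_pow]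
    gcongr
    have hw : 0 ≤ √(m * s ^ 4) := Real.sqrt_nonneg _
    refine le_mul_of_one_le_right (sq_nonneg _) (one_le_pow₀ ?_)
    rw [le_div_iff₀ (by positivity)]
    nlinarith
  have hnn : 0 ≤ (m * s ^ 4) ^ (-(1/4) : ℝ) := by positivity
  rw [rescaledBlock, Real.norm_of_nonneg (mul_nonneg (by positivity) hf.1)]
  calc _ ≤ (m * s ^ 4) ^ (-(1/4) : ℝ) *
        Real.exp (-((√(m * s ^ 4) ^ 3 - 1) / s ^ 3) ^ 2) :=
        mul_le_of_le_one_right (by positivity) hf.2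
    _ ≤ 2 * (1 + |s * m - (s ^ 3)⁻¹|) * Real.exp (-(s * m - (s ^ 3)⁻¹) ^ 2) :=
        mul_le_mul (rpow_neg_quarter_le hs hs1 hm) hexp (by positivity) (by positivity)
    _ ≤ _ := by
        have := one_add_mul_exp_le hdev
        linarith

lemma measurable_rescaledBlock_sampleIndex (s : ℝ) :
    Measurable (fun y => rescaledBlock s (sampleIndex s y)) :=
  (measurable_from_nat (f := rescaledBlock s)).comp
    (Nat.measurable_floor.comp (by fun_prop))

lemma integrable_gaussian_majorant :
    Integrable (fun y : ℝ => 2 * Real.exp 1 * Real.exp (-(1/4) * y ^ 2)) :=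
  (integrable_exp_neg_mul_sq (by norm_num)).const_mul _

lemma integrable_rescaledBlock_sampleIndex {s : ℝ} (hs : 0 < s) (hs1 : s ≤ 1) :
    Integrable (fun y => rescaledBlock s (sampleIndex s y)) :=
  integrable_gaussian_majorant.mono'
    (measurable_rescaledBlock_sampleIndex s).aestronglyMeasurable
    (ae_of_all _ (norm_rescaledBlock_le hs hs1))

lemma hasSum_rescaledBlock {s : ℝ} (hs : 0 < s) (hs1 : s ≤ 1) :
    HasSum (fun m => s * rescaledBlock s m) (∫ y, rescaledBlock s (sampleIndex s y)) := by
  have hint := (integrable_rescaledBlock_sampleIndex hs hs1).comp_add_left (-(s ^ 3)⁻¹)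
  simp only [sampleIndex, add_neg_cancel_left] at hint
  rw [integrable_comp_mul_left_iff (fun x => rescaledBlock s ⌊x⌋₊) (inv_ne_zero hs.ne')] at hint
  have hsum := (hasSum_integral_comp_floor (rescaledBlock_zero s) hint).mul_left s
  unfold sampleIndex
  rwa [integral_add_left_eq_self (fun z => rescaledBlock s ⌊s⁻¹ * z⌋₊),
    Measure.integral_comp_mul_left (fun x => rescaledBlock s ⌊x⌋₊), inv_inv, abs_of_pos hs,
    smul_eq_mul]

lemma tendsto_rescaledBlock_sampleIndex (y : ℝ) :
    Tendsto (fun s => rescaledBlock s (sampleIndex s y)) (𝓝[>] 0)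
      (𝓝 (Real.exp (-(9/4) * y ^ 2))) := by
  have hs0 : Tendsto (fun s : ℝ => s) (𝓝[>] 0) (𝓝 0) := nhdsWithin_le_nhds
  have hpos : ∀ᶠ s : ℝ in 𝓝[>] 0, 0 < s := self_mem_nhdsWithin
  have hinv : Tendsto (fun s : ℝ => (s ^ 3)⁻¹) (𝓝[>] 0) atTop := by
    simpa [Function.comp_def] using (tendsto_pow_atTop (α := ℝ) (n := 3) (by norm_num)).comp
      tendsto_inv_nhdsGT_zero
  have hdev : Tendsto (fun s => s * (sampleIndex s y : ℝ) - (s ^ 3)⁻¹) (𝓝[>] 0) (𝓝 y) := by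
    have h1 : Tendsto (fun s => y - (s * (sampleIndex s y : ℝ) - (s ^ 3)⁻¹)) (𝓝[>] 0) (𝓝 0) := by
      refine squeeze_zero_norm' ?_ hs0
      filter_upwards [hpos, hinv.eventually_ge_atTop (-y)] with s hs hy
      exact abs_sub_sampleIndex_le hs (by linarith)
    simpa using (tendsto_const_nhds (x := y)).sub h1
  have hr : Tendsto (fun s => (sampleIndex s y : ℝ) * s ^ 4) (𝓝[>] 0) (𝓝 1) := by
    have h1 := ((hs0.pow 3).mul hdev).const_add 1
    norm_num at h1
    refine h1.congr' ?_
    filter_upwards [hpos] with s hs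
    field_simp
    ring
  have hw : Tendsto (fun s => √((sampleIndex s y : ℝ) * s ^ 4)) (𝓝[>] 0) (𝓝 1) := by
    simpa using hr.sqrt
  have hpow : Tendsto (fun s => ((sampleIndex s y : ℝ) * s ^ 4) ^ (-(1/4) : ℝ))
      (𝓝[>] 0) (𝓝 1) := by
    simpa using hr.rpow_const (p := (-(1/4) : ℝ)) (Or.inl one_ne_zero)
  have hcube : Tendsto (fun s => (√((sampleIndex s y : ℝ) * s ^ 4) ^ 3 - 1) / s ^ 3)
      (𝓝[>] 0) (𝓝 (y * (3/2))) := by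
    have h1 := hdev.mul ((((hw.pow 2).add hw).add_const 1).div (hw.add_const 1) (by norm_num))
    rw [show ((1:ℝ) ^ 2 + 1 + 1) / (1 + 1) = 3 / 2 by norm_num] at h1
    refine h1.congr' ?_
    filter_upwards [hpos] with s hs
    exact (sqrt_cube_sub_one_div hs _).symm
  have hexp : Tendsto
      (fun s => Real.exp (-((√((sampleIndex s y : ℝ) * s ^ 4) ^ 3 - 1) / s ^ 3) ^ 2))
      (𝓝[>] 0) (𝓝 (Real.exp (-(9/4) * y ^ 2))) := by
    have h1 := (Real.continuous_exp.tendsto _).comp (hcube.pow 2).neg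
    rwa [show -(y * (3/2)) ^ 2 = -(9/4) * y ^ 2 by ring] at h1
  have hfac : Tendsto (fun s => 1 - Real.exp (-s ^ 6 *
      (((sampleIndex s y : ℝ) + 1) ^ 3 - (sampleIndex s y : ℝ) ^ 3))) (𝓝[>] 0) (𝓝 1) := by
    have h1 : Tendsto (fun s : ℝ => ((sampleIndex s y : ℝ) * s ^ 4) ^ 2 * s⁻¹ ^ 2)
        (𝓝[>] 0) atTop :=
      (hr.pow 2).pos_mul_atTop (by norm_num)
        ((tendsto_pow_atTop (by norm_num)).comp tendsto_inv_nhdsGT_zero)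
    have h2 : Tendsto (fun s : ℝ => s ^ 6 *
        (((sampleIndex s y : ℝ) + 1) ^ 3 - (sampleIndex s y : ℝ) ^ 3)) (𝓝[>] 0) atTop := by
      refine tendsto_atTop_mono' _ ?_ h1
      filter_upwards [hpos] with s hs
      have h3 : ((sampleIndex s y : ℝ) * s ^ 4) ^ 2 * s⁻¹ ^ 2 =
          s ^ 6 * (sampleIndex s y : ℝ) ^ 2 := by
        field_simp
      rw [h3]
      gcongr
      nlinarith [(sampleIndex s y).cast_nonneg (α := ℝ)]
    have h3 := (Real.tendsto_exp_neg_atTop_nhds_zero.comp h2).const_sub 1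
    simpa [Function.comp_def] using h3
  simpa [rescaledBlock] using (hpow.mul hexp).mul hfac

lemma tendsto_integral_rescaledBlock :
    Tendsto (fun s => ∫ y, rescaledBlock s (sampleIndex s y)) (𝓝[>] 0)
      (𝓝 (2 * √Real.pi / 3)) := by
  have hlim : ∫ y : ℝ, Real.exp (-(9/4) * y ^ 2) = 2 * √Real.pi / 3 := by
    rw [integral_gaussian, Real.sqrt_div Real.pi_pos.le,
      show (9/4 : ℝ) = (3/2) ^ 2 by norm_num, Real.sqrt_sq (by norm_num)]
    ring
  rw [← hlim]
  refine tendsto_integral_filter_of_dominated_convergence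
    (fun y => 2 * Real.exp 1 * Real.exp (-(1/4) * y ^ 2))
    (Eventually.of_forall fun s => (measurable_rescaledBlock_sampleIndex s).aestronglyMeasurable)
    ?_ integrable_gaussian_majorant (ae_of_all _ tendsto_rescaledBlock_sampleIndex)
  filter_upwards [Ioc_mem_nhdsGT (zero_lt_one (α := ℝ))] with s hs
  exact ae_of_all _ (norm_rescaledBlock_le hs.1 hs.2)

lemma mul_rescaledBlock_eq {s : ℝ} (hs : 0 < s) (m : ℕ) :
    s * rescaledBlock s m = Real.exp (-(1 / s ^ 6)) *
      (Real.exp (2 * (m:ℝ) ^ ((3:ℝ)/2)) * (m:ℝ) ^ (-(1/4) : ℝ) *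
        (Real.exp (-s ^ 6 * m ^ 3) - Real.exp (-s ^ 6 * (m + 1) ^ 3))) := by
  have hm : (0:ℝ) ≤ m := m.cast_nonneg
  have hq : ((m:ℝ) * s ^ 4) ^ (-(1/4) : ℝ) = (m:ℝ) ^ (-(1/4) : ℝ) * s⁻¹ := by
    rw [Real.mul_rpow hm (by positivity), ← Real.rpow_natCast s, ← Real.rpow_mul hs.le,
      ← Real.rpow_neg_one]
    norm_num
  have hw : √((m:ℝ) * s ^ 4) = √m * s ^ 2 := by
    rw [Real.sqrt_mul hm, show s ^ 4 = (s ^ 2) ^ 2 by ring, Real.sqrt_sq (by positivity)]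
  have h32 : (m:ℝ) ^ ((3:ℝ)/2) = √m ^ 3 := by
    rw [Real.sqrt_eq_rpow, ← Real.rpow_natCast, ← Real.rpow_mul hm]
    norm_num
  have hsq : (m:ℝ) ^ 3 = (√m ^ 3) ^ 2 := by
    rw [← pow_mul, mul_comm 3 2, pow_mul, Real.sq_sqrt hm]
  have hexp : Real.exp (-((√(m * s ^ 4) ^ 3 - 1) / s ^ 3) ^ 2) =
      Real.exp (-(1 / s ^ 6)) * Real.exp (2 * (m:ℝ) ^ ((3:ℝ)/2)) *
        Real.exp (-s ^ 6 * m ^ 3) := by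
    rw [← Real.exp_add, ← Real.exp_add, hw, h32, hsq]
    congr 1
    field_simp
    ring
  have hsplit : Real.exp (-s ^ 6 * (m + 1) ^ 3) =
      Real.exp (-s ^ 6 * m ^ 3) * Real.exp (-s ^ 6 * ((m + 1) ^ 3 - (m:ℝ) ^ 3)) := by
    rw [← Real.exp_add]
    ring_nf
  rw [rescaledBlock, hq, hexp, hsplit]
  field_simp

lemma hasSum_of_hasSum_cube_blocks {f : ℕ → ℝ} (hf : ∀ n, 0 ≤ f n) {S : ℝ}
    (h : HasSum (fun m => ∑ n ∈ Finset.Ico (m ^ 3) ((m + 1) ^ 3), f n) S) : HasSum f S := by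
  rw [hasSum_iff_tendsto_nat_of_nonneg hf]
  have hmono : Monotone fun n => ∑ i ∈ Finset.range n, f i := fun a b hab =>
    Finset.sum_le_sum_of_subset_of_nonneg (Finset.range_mono hab) fun i _ _ => hf i
  rw [tendsto_iff_tendsto_subseq_of_monotone hmono (tendsto_pow_atTop (n := 3) (by norm_num))]
  refine h.tendsto_sum_nat.congr fun M => ?_
  induction M with
  | zero => simp
  | succ M ih =>
    rw [Finset.sum_range_succ, ih]
    exact Finset.sum_range_add_sum_Ico f (Nat.pow_le_pow_left M.le_succ 3)

lemma tendsto_div_one_sub_exp_neg :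
    Tendsto (fun t : ℝ => t / (1 - Real.exp (-t))) (𝓝[>] 0) (𝓝 1) := by
  have h : HasDerivAt (fun t : ℝ => 1 - Real.exp (-t)) 1 0 := by
    simpa using ((hasDerivAt_neg (0:ℝ)).exp).const_sub 1
  have h1 := (hasDerivAt_iff_tendsto_slope.1 h).mono_left
    (nhdsWithin_mono 0 (s := Ioi 0) fun x (hx : 0 < x) => hx.ne')
  have h2 := h1.inv₀ one_ne_zero
  simpa [slope_def_field] using h2

/-- For the Avakumović–Karamata coefficients `A(0) = 0`,
`A(n) = e^{2m^{3/2}} m^{-1/4}` for `m³ ≤ n < (m+1)³` (`m ≥ 1`), the generating function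
satisfies `F(e^{-t}) ~ (2√π/3) e^{1/t}/t` as `t → 0⁺`. -/
theorem AK_generating_function_asymptotic (A : ℕ → ℝ) (hA0 : A 0 = 0)
    (hA : ∀ m n : ℕ, 1 ≤ m → m ^ 3 ≤ n → n < (m + 1) ^ 3 →
      A n = Real.exp (2 * (m:ℝ) ^ ((3:ℝ)/2)) * (m:ℝ) ^ (-(1/4) : ℝ)) :
    Tendsto (fun t : ℝ => (∑' n : ℕ, A n * Real.exp (-t * n)) /
        (2 * Real.sqrt Real.pi / 3 * Real.exp (1/t) / t)) (𝓝[>] (0:ℝ)) (𝓝 1) := by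
  have hA' : ∀ m n : ℕ, m ^ 3 ≤ n → n < (m + 1) ^ 3 →
      A n = Real.exp (2 * (m:ℝ) ^ ((3:ℝ)/2)) * (m:ℝ) ^ (-(1/4) : ℝ) := by
    intro m n h1 h2
    rcases Nat.eq_zero_or_pos m with rfl | hm
    · obtain rfl : n = 0 := by simpa using h2
      have : (0:ℝ) ^ (-(1/4) : ℝ) = 0 := Real.zero_rpow (by norm_num)
      rw [hA0, Nat.cast_zero, this, mul_zero]
    · exact hA m n hm h1 h2
  have hblock : ∀ n : ℕ, ∃ m : ℕ, m ^ 3 ≤ n ∧ n < (m + 1) ^ 3 := fun n => by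
    induction n with
    | zero => exact ⟨0, by norm_num⟩
    | succ n ih =>
      obtain ⟨m, h1, h2⟩ := ih
      rcases (Nat.succ_le_of_lt h2).lt_or_eq with h | h
      · exact ⟨m, h1.trans n.le_succ, h⟩
      · exact ⟨m + 1, h.ge, h.trans_lt (Nat.pow_lt_pow_left (by omega) (by norm_num))⟩
  have hAnn : ∀ n, 0 ≤ A n := fun n => by
    obtain ⟨m, h1, h2⟩ := hblock n
    rw [hA' m n h1 h2]
    positivity
  have hF : ∀ s : ℝ, 0 < s → s ≤ 1 → ∑' n : ℕ, A n * Real.exp (-s ^ 6 * n) =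
      Real.exp (1 / s ^ 6) * (∫ y, rescaledBlock s (sampleIndex s y)) /
        (1 - Real.exp (-s ^ 6)) := by
    intro s hs hs1
    have hs6 : 0 < s ^ 6 := by positivity
    refine (hasSum_of_hasSum_cube_blocks
      (fun n => mul_nonneg (hAnn n) (Real.exp_pos _).le) ?_).tsum_eq
    refine (((hasSum_rescaledBlock hs hs1).mul_left (Real.exp (1 / s ^ 6))).div_const
      (1 - Real.exp (-s ^ 6))).congr_fun fun m => ?_
    have hne : Real.exp (-s ^ 6) ≠ 1 := (Real.exp_lt_one_iff.2 (by linarith)).ne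
    have hpow : ∀ n : ℕ, Real.exp (-s ^ 6 * n) = Real.exp (-s ^ 6) ^ n := fun n => by
      rw [mul_comm, Real.exp_nat_mul]
    rw [Finset.sum_congr rfl (g := fun n => Real.exp (2 * (m:ℝ) ^ ((3:ℝ)/2)) *
      (m:ℝ) ^ (-(1/4) : ℝ) * Real.exp (-s ^ 6) ^ n) fun n hn => by
        rw [hA' m n (Finset.mem_Ico.1 hn).1 (Finset.mem_Ico.1 hn).2, hpow],
      ← Finset.mul_sum, geom_sum_Ico' hne (Nat.pow_le_pow_left m.le_succ 3), ← hpow, ← hpow,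
      mul_rescaledBlock_eq hs, ← mul_assoc (Real.exp (1 / s ^ 6)), ← Real.exp_add,
      add_neg_cancel, Real.exp_zero, one_mul, mul_div_assoc]
    push_cast
    rfl
  have hroot : Tendsto (fun t : ℝ => t ^ (1/6 : ℝ)) (𝓝[>] 0) (𝓝[>] 0) := by
    refine tendsto_nhdsWithin_iff.2 ⟨?_, ?_⟩
    · have h := (Real.continuousAt_rpow_const (0:ℝ) (1/6) (Or.inr (by norm_num))).tendsto
      rw [Real.zero_rpow (by norm_num)] at h
      exact h.mono_left nhdsWithin_le_nhds
    · filter_upwards [self_mem_nhdsWithin] with t ht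
      exact Real.rpow_pos_of_pos ht _
  have hpi : 2 * √Real.pi / 3 ≠ 0 := by positivity
  have hlim := tendsto_div_one_sub_exp_neg.mul
    ((tendsto_integral_rescaledBlock.comp hroot).div_const (2 * √Real.pi / 3))
  rw [div_self hpi, one_mul] at hlim
  refine hlim.congr' ?_
  filter_upwards [Ioc_mem_nhdsGT (zero_lt_one (α := ℝ))] with t ht
  have ht0 : 0 < t := ht.1
  have hs6 : (t ^ (1/6 : ℝ)) ^ 6 = t := by
    rw [← Real.rpow_natCast, ← Real.rpow_mul ht0.le]
    norm_num
  have h := hF (t ^ (1/6 : ℝ)) (Real.rpow_pos_of_pos ht0 _)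
    (Real.rpow_le_one ht0.le ht.2 (by norm_num))
  rw [hs6] at h
  rw [h, Function.comp_apply]
  have h1 : Real.exp (1 / t) ≠ 0 := (Real.exp_pos _).ne'
  have h2 : 1 - Real.exp (-t) ≠ 0 :=
    (sub_pos.2 (Real.exp_lt_one_iff.2 (by linarith))).ne'
  field_simp
end

section
/- As t \to 0^+, \sum_{m \ge 1} m^{-1/4} e^{2 m^{3/2} - m^3 t} \sim \frac{2\sqrt{\pi}}{3} e^{1/t}. -/
open Filter Topology Set MeasureTheory

/-- The summand at `x`, with parameter `t = a⁻⁶` and the factor `e^{1/t}` removed. -/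
noncomputable def normalizedTerm (a x : ℝ) : ℝ :=
  x ^ (-(1/4) : ℝ) * Real.exp (-((x ^ ((3:ℝ)/2) - a ^ 6) ^ 2 / a ^ 6))

/-- The normalized summand, times `a`, in the coordinates `z = (x - a⁴)/a`, `q = x/a⁴`. -/
noncomputable def rescaledTerm (z q : ℝ) : ℝ :=
  q ^ (-(1/4) : ℝ) * Real.exp (-(z * ((q + √q + 1) / (√q + 1))) ^ 2)

lemma mul_normalizedTerm_eq {a x : ℝ} (ha : 0 < a) (hx : 0 < x) :
    a * normalizedTerm a x = rescaledTerm ((x - a ^ 4) / a) (x / a ^ 4) := by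
  unfold normalizedTerm rescaledTerm
  have hpow : (x / a ^ 4) ^ (-(1/4) : ℝ) = a * x ^ (-(1/4) : ℝ) := by
    rw [Real.div_rpow hx.le (by positivity), ← Real.rpow_natCast a 4, ← Real.rpow_mul ha.le,
      show ((4:ℕ):ℝ) * (-(1/4) : ℝ) = -1 by norm_num, Real.rpow_neg_one]
    field_simp
  have hsqrt : √(x / a ^ 4) = √x / a ^ 2 := by
    rw [Real.sqrt_div hx.le, show a ^ 4 = (a ^ 2) ^ 2 by ring, Real.sqrt_sq (by positivity)]
  have hthree : x ^ ((3:ℝ)/2) = √x ^ 3 := by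
    rw [Real.sqrt_eq_rpow, ← Real.rpow_natCast (x ^ ((1:ℝ)/2)) 3, ← Real.rpow_mul hx.le]
    norm_num
  rw [hpow, hsqrt, hthree, mul_assoc]
  congr 3
  obtain ⟨r, hr, rfl⟩ : ∃ r : ℝ, 0 < r ∧ x = r ^ 2 :=
    ⟨√x, Real.sqrt_pos.2 hx, (Real.sq_sqrt hx.le).symm⟩
  rw [Real.sqrt_sq hr.le]
  have hne : r + a ^ 2 ≠ 0 := by positivity
  have hne' : r / a ^ 2 + 1 ≠ 0 := by positivity
  have : (r ^ 2 - a ^ 4) / a * ((r ^ 2 / a ^ 4 + r / a ^ 2 + 1) / (r / a ^ 2 + 1))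
      = (r ^ 3 - a ^ 6) / a ^ 3 := by
    field_simp
    ring
  rw [this, div_pow, ← pow_mul]

lemma rescaledTerm_nonneg {z q : ℝ} (hq : 0 ≤ q) : 0 ≤ rescaledTerm z q :=
  mul_nonneg (Real.rpow_nonneg hq _) (Real.exp_pos _).le

lemma rescaledTerm_le {a z q : ℝ} (ha : 1 ≤ a) (hq : q = 1 + z / a ^ 3) (hqa : 1 / a ^ 4 ≤ q) :
    rescaledTerm z q ≤ 8 * Real.exp (-(z ^ 2 / 4)) := by
  have ha0 : 0 < a := by linarith
  have hq0 : 0 < q := lt_of_lt_of_le (by positivity) hqa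
  have hfactor : q ^ (-(1/4) : ℝ) ≤ 2 + 2 * |z| := by
    rcases le_total (1/16) q with h | h
    · calc q ^ (-(1/4) : ℝ) ≤ ((1/2 : ℝ) ^ (4:ℕ)) ^ (-(1/4) : ℝ) :=
            Real.rpow_le_rpow_of_nonpos (by norm_num) (by norm_num; linarith) (by norm_num)
        _ = 2 := by
            rw [← Real.rpow_natCast, ← Real.rpow_mul (by norm_num)]
            norm_num [Real.rpow_neg_one]
        _ ≤ _ := by linarith [abs_nonneg z]
    · have hle : q ^ (-(1/4) : ℝ) ≤ a := by
        calc q ^ (-(1/4) : ℝ) ≤ (a ^ (-4 : ℝ)) ^ (-(1/4) : ℝ) := by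
              refine Real.rpow_le_rpow_of_nonpos (by positivity) ?_ (by norm_num)
              rw [Real.rpow_neg ha0.le, ← one_div]
              exact_mod_cast hqa
          _ = a := by
              rw [← Real.rpow_mul ha0.le]
              norm_num
      have hz : z = (q - 1) * a ^ 3 := by
        rw [hq]
        field_simp
        ring
      have ha3 : a ≤ a ^ 3 := le_self_pow₀ ha (by norm_num)
      have hneg : -z ≤ |z| := neg_le_abs z
      nlinarith [pow_pos ha0 3]
  have hratio : 3 / 4 ≤ (q + √q + 1) / (√q + 1) := by
    rw [le_div_iff₀ (by positivity)]
    nlinarith [Real.sqrt_nonneg q]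
  have hsq : 9 / 16 * z ^ 2 ≤ (z * ((q + √q + 1) / (√q + 1))) ^ 2 := by
    rw [mul_pow]
    nlinarith [sq_nonneg z, mul_le_mul hratio hratio (by norm_num) (by linarith)]
  have hpoly : 2 + 2 * |z| ≤ 8 * Real.exp (5 / 16 * z ^ 2) := by
    nlinarith [Real.add_one_le_exp (5 / 16 * z ^ 2), sq_abs z, sq_nonneg (|z| - 1)]
  calc rescaledTerm z q ≤ (8 * Real.exp (5 / 16 * z ^ 2)) * Real.exp (-(9 / 16 * z ^ 2)) := by
        unfold rescaledTerm
        gcongr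
        exact hfactor.trans hpoly
    _ = 8 * Real.exp (-(z ^ 2 / 4)) := by
        rw [mul_assoc, ← Real.exp_add]
        ring_nf

lemma tendsto_rescaledTerm {ι : Type*} {l : Filter ι} {z q : ι → ℝ} {y : ℝ}
    (hz : Tendsto z l (𝓝 y)) (hq : Tendsto q l (𝓝 1)) :
    Tendsto (fun i => rescaledTerm (z i) (q i)) l (𝓝 (Real.exp (-(9/4) * y ^ 2))) := by
  have hs : Tendsto (fun i => √(q i)) l (𝓝 1) := by
    simpa using hq.sqrt
  have hp : Tendsto (fun i => q i ^ (-(1/4) : ℝ)) l (𝓝 (1 ^ (-(1/4) : ℝ))) :=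
    hq.rpow_const (Or.inl one_ne_zero)
  have hr := ((hq.add hs).add_const 1).div (hs.add_const 1) (by norm_num)
  have he := (Real.continuous_exp.tendsto _).comp ((hz.mul hr).pow 2).neg
  have h := hp.mul he
  rw [Real.one_rpow, one_mul,
    show -(y * ((1 + 1 + 1) / (1 + 1))) ^ 2 = -(9/4) * y ^ 2 by ring] at h
  exact h

/-- A series is the integral over `[0, ∞)` of the associated step function. -/
lemma hasSum_integral_floor {g : ℕ → ℝ}
    (hg : IntegrableOn (fun x : ℝ => g ⌊x⌋₊) (Ici 0)) :
    HasSum g (∫ x in Ici (0:ℝ), g ⌊x⌋₊) := by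
  have hunion : (⋃ n : ℕ, Ico (n:ℝ) (n + 1)) = Ici 0 := by
    ext x
    simp only [mem_iUnion, mem_Ico, mem_Ici]
    exact ⟨fun ⟨n, hn, _⟩ => n.cast_nonneg.trans hn,
      fun hx => ⟨⌊x⌋₊, Nat.floor_le hx, Nat.lt_floor_add_one x⟩⟩
  have hdisj : Pairwise (Function.onFun Disjoint fun n : ℕ => Ico (n:ℝ) (n + 1)) := by
    intro m n hmn
    refine Set.disjoint_left.2 fun x hm hn => hmn ?_
    rw [← (Nat.floor_eq_iff (m.cast_nonneg.trans hm.1)).2 hm,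
      (Nat.floor_eq_iff (n.cast_nonneg.trans hn.1)).2 hn]
  have h := hasSum_integral_iUnion (μ := volume) (fun _ => measurableSet_Ico) hdisj
    (hunion ▸ hg)
  rw [hunion] at h
  have hg' : ∀ n : ℕ, ∫ x in Ico (n:ℝ) (n + 1), g ⌊x⌋₊ = g n := fun n => by
    rw [setIntegral_congr_fun (g := fun _ => g n) measurableSet_Ico fun x hx => by
      simp only [(Nat.floor_eq_iff (n.cast_nonneg.trans hx.1)).2 hx]]
    simp
  simpa only [hg'] using h

/-- The step function of the normalized series, recentred at `a⁴` and rescaled by `a`. -/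
noncomputable def rescaledStep (a y : ℝ) : ℝ :=
  (Ici (0:ℝ)).indicator (fun x => a * normalizedTerm a (⌊x⌋₊ + 1)) (a ^ 4 + a * y)

lemma measurable_rescaledStep (a : ℝ) : Measurable (rescaledStep a) := by
  have h : Measurable (fun x : ℝ => a * normalizedTerm a (⌊x⌋₊ + 1)) :=
    (measurable_from_nat (f := fun n : ℕ => a * normalizedTerm a (n + 1))).comp Nat.measurable_floor
  exact (h.indicator measurableSet_Ici).comp (by fun_prop)

lemma abs_floor_coordinate_sub_le {a y : ℝ} (ha : 0 < a) (hy : 0 ≤ a ^ 4 + a * y) :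
    |((⌊a ^ 4 + a * y⌋₊ : ℝ) + 1 - a ^ 4) / a - y| ≤ 1 / a := by
  have h1 := Nat.floor_le hy
  have h2 := Nat.lt_floor_add_one (a ^ 4 + a * y)
  rw [show ((⌊a ^ 4 + a * y⌋₊ : ℝ) + 1 - a ^ 4) / a - y
    = ((⌊a ^ 4 + a * y⌋₊ : ℝ) + 1 - (a ^ 4 + a * y)) / a by field_simp; ring, abs_div,
    abs_of_pos ha]
  gcongr
  rw [abs_le]
  constructor <;> linarith

lemma norm_rescaledStep_le {a : ℝ} (ha : 1 ≤ a) (y : ℝ) :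
    ‖rescaledStep a y‖ ≤ 8 * Real.exp (1/4) * Real.exp (-(1/8) * y ^ 2) := by
  have ha0 : 0 < a := by linarith
  unfold rescaledStep
  by_cases hy : a ^ 4 + a * y ∈ Ici (0:ℝ)
  · rw [indicator_of_mem hy]
    have hd := abs_floor_coordinate_sub_le ha0 hy
    have hn : (0:ℝ) ≤ ⌊a ^ 4 + a * y⌋₊ := Nat.cast_nonneg _
    rw [mul_normalizedTerm_eq ha0 (by positivity),
      Real.norm_of_nonneg (rescaledTerm_nonneg (by positivity))]
    refine (rescaledTerm_le ha (by field_simp; ring) (by gcongr; linarith)).trans ?_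
    rw [mul_assoc, ← Real.exp_add]
    have hd1 := hd.trans ((div_le_one ha0).2 ha)
    set z := ((⌊a ^ 4 + a * y⌋₊ : ℝ) + 1 - a ^ 4) / a
    have hsq : (z - y) ^ 2 ≤ 1 := (sq_le_one_iff_abs_le_one _).2 hd1
    gcongr
    nlinarith [sq_nonneg (2 * z - y)]
  · rw [indicator_of_notMem hy, norm_zero]
    positivity

lemma integrable_gaussian_dominant :
    Integrable fun y : ℝ => 8 * Real.exp (1/4) * Real.exp (-(1/8) * y ^ 2) :=
  (integrable_exp_neg_mul_sq (by norm_num)).const_mul _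

lemma tendsto_rescaledStep (y : ℝ) :
    Tendsto (fun a => rescaledStep a y) atTop (𝓝 (Real.exp (-(9/4) * y ^ 2))) := by
  have hpos : ∀ᶠ a : ℝ in atTop, 0 < a ∧ 0 ≤ a ^ 4 + a * y := by
    filter_upwards [eventually_ge_atTop 1, eventually_ge_atTop (-y)] with a h1 h2
    refine ⟨by linarith, ?_⟩
    have : a ≤ a ^ 3 := le_self_pow₀ h1 (by norm_num)
    nlinarith [mul_nonneg (show (0:ℝ) ≤ a by linarith) (show 0 ≤ a ^ 3 + y by linarith)]
  have hz : Tendsto (fun a : ℝ => ((⌊a ^ 4 + a * y⌋₊ : ℝ) + 1 - a ^ 4) / a) atTop (𝓝 y) := by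
    rw [tendsto_iff_norm_sub_tendsto_zero]
    refine squeeze_zero' (Eventually.of_forall fun _ => norm_nonneg _) ?_
      (tendsto_const_nhds.div_atTop tendsto_id : Tendsto (fun a : ℝ => 1 / a) atTop (𝓝 0))
    filter_upwards [hpos] with a ha using abs_floor_coordinate_sub_le ha.1 ha.2
  have hq : Tendsto (fun a : ℝ => ((⌊a ^ 4 + a * y⌋₊ : ℝ) + 1) / a ^ 4) atTop (𝓝 1) := by
    have h := (hz.div_atTop (tendsto_pow_atTop (α := ℝ) (n := 3) (by norm_num))).const_add 1
    rw [add_zero] at h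
    refine h.congr' ?_
    filter_upwards [hpos] with a ha
    have := ha.1.ne'
    field_simp
    ring
  refine (tendsto_rescaledTerm hz hq).congr' ?_
  filter_upwards [hpos] with a ha
  rw [rescaledStep, indicator_of_mem (mem_Ici.2 ha.2), mul_normalizedTerm_eq ha.1 (by positivity)]

lemma tendsto_integral_rescaledStep :
    Tendsto (fun a => ∫ y, rescaledStep a y) atTop (𝓝 (2 * √Real.pi / 3)) := by
  have h := tendsto_integral_filter_of_dominated_convergence
    (F := rescaledStep) (f := fun y => Real.exp (-(9/4) * y ^ 2)) (l := atTop) (μ := volume) _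
    (Eventually.of_forall fun a => (measurable_rescaledStep a).aestronglyMeasurable)
    ((eventually_ge_atTop 1).mono fun a ha => Eventually.of_forall (norm_rescaledStep_le ha))
    integrable_gaussian_dominant (Eventually.of_forall tendsto_rescaledStep)
  rw [integral_gaussian, show Real.pi / (9/4) = Real.pi * (2/3) ^ 2 by ring,
    Real.sqrt_mul Real.pi_pos.le, Real.sqrt_sq (by norm_num)] at h
  convert h using 2
  ring

lemma tsum_normalizedTerm {a : ℝ} (ha : 1 ≤ a) :
    ∑' n : ℕ, normalizedTerm a (n + 1) = ∫ y, rescaledStep a y := by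
  have ha0 : 0 < a := by linarith
  have hint : Integrable (rescaledStep a) :=
    integrable_gaussian_dominant.mono' (measurable_rescaledStep a).aestronglyMeasurable
      (Eventually.of_forall (norm_rescaledStep_le ha))
  set H : ℝ → ℝ := (Ici (0:ℝ)).indicator fun x => a * normalizedTerm a (⌊x⌋₊ + 1) with hH
  have hstep : rescaledStep a = fun y => H (a ^ 4 + a * y) := rfl
  have hHint : IntegrableOn (fun x : ℝ => a * normalizedTerm a (⌊x⌋₊ + 1)) (Ici 0) := by
    rw [← integrable_indicator_iff measurableSet_Ici, ← hH]
    rw [hstep, integrable_comp_mul_left_iff (fun x => H (a ^ 4 + x)) ha0.ne'] at hint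
    exact (hint.comp_add_left (-(a ^ 4))).congr
      (Eventually.of_forall fun x => congrArg H (add_neg_cancel_left _ x))
  have hsum := (hasSum_integral_floor (g := fun n => a * normalizedTerm a (n + 1)) hHint).tsum_eq
  rw [tsum_mul_left, ← integral_indicator measurableSet_Ici] at hsum
  rw [hstep, Measure.integral_comp_mul_left (fun x => H (a ^ 4 + x)) a,
    integral_add_left_eq_self H, hH, ← hsum, abs_of_pos (inv_pos.2 ha0), smul_eq_mul,
    inv_mul_cancel_left₀ ha0.ne']

lemma summand_eq_exp_mul_normalizedTerm {a t x : ℝ} (ht : 0 < t) (hat : a ^ 6 = 1 / t)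
    (hx : 0 < x) :
    x ^ (-(1/4) : ℝ) * Real.exp (2 * x ^ ((3:ℝ)/2) - x ^ 3 * t)
      = Real.exp (1 / t) * normalizedTerm a x := by
  have hcube : x ^ 3 = (x ^ ((3:ℝ)/2)) ^ 2 := by
    rw [← Real.rpow_natCast (x ^ ((3:ℝ)/2)) 2, ← Real.rpow_mul hx.le,
      ← Real.rpow_natCast]
    norm_num
  rw [normalizedTerm, hat, mul_left_comm, ← Real.exp_add, hcube]
  congr 2
  field_simp
  ring

/-- As `t → 0⁺`, `∑_{m≥1} m^{-1/4} e^{2m^{3/2} - m³t} ~ (2√π/3) e^{1/t}`. -/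
theorem sum_asymptotic_two_sqrt_pi_over_three :
    Tendsto (fun t : ℝ =>
        (∑' m : ℕ, ((m:ℝ) + 1) ^ (-(1/4) : ℝ) *
            Real.exp (2 * ((m:ℝ) + 1) ^ ((3:ℝ)/2) - ((m:ℝ) + 1) ^ 3 * t)) /
          (2 * Real.sqrt Real.pi / 3 * Real.exp (1/t)))
      (𝓝[>] (0:ℝ)) (𝓝 1) := by
  have ha : Tendsto (fun t : ℝ => t⁻¹ ^ ((1:ℝ)/6)) (𝓝[>] 0) atTop :=
    (tendsto_rpow_atTop (by norm_num)).comp tendsto_inv_nhdsGT_zero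
  have hc : 2 * √Real.pi / 3 ≠ 0 := by positivity
  have h := (tendsto_integral_rescaledStep.comp ha).div_const (2 * √Real.pi / 3)
  rw [div_self hc] at h
  refine h.congr' ?_
  filter_upwards [ha.eventually_ge_atTop 1, self_mem_nhdsWithin] with t h1 ht
  have ht0 : 0 < t := ht
  have hat : (t⁻¹ ^ ((1:ℝ)/6)) ^ 6 = 1 / t := by
    rw [← Real.rpow_natCast, ← Real.rpow_mul (by positivity)]
    norm_num
  rw [tsum_congr fun m : ℕ =>
      summand_eq_exp_mul_normalizedTerm ht0 hat (show (0:ℝ) < (m:ℝ) + 1 by positivity),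
    tsum_mul_left, tsum_normalizedTerm h1, Function.comp_apply, mul_comm (Real.exp _),
    mul_div_mul_right _ _ (Real.exp_pos _).ne']
end

section
/- For every a \in \mathbb{R} with a \notin -\mathbb{N}_0 and every complex w with Re(w) > 0, \operatorname{Log}(1/w) - \sum_{m \ge 0} \frac{e^{-w(m+a)}}{m+a} + C_a = \sum_{n \ge 0} \frac{B_{n+1}(a)\,(-w)^{n+1}}{(n+1)\,(n+1)!}, where the series on the right converges (for all sufficiently small |w|, and by analytic continuation equality holds for all Re(w) > 0 where both sides are defined). -/
open Filter Topology Set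

noncomputable section

/-- The `n`-th Bernoulli polynomial, evaluated at a real number. -/
def bernoulliPoly (n : ℕ) (x : ℝ) : ℝ :=
  Polynomial.eval x ((Polynomial.bernoulli n).map (algebraMap ℚ ℝ))

/-- The constant `C_a = (1-a) ∑_{m≥0} 1/((m+a)(m+1))`. -/
def Cconst (a : ℝ) : ℝ := (1 - a) * ∑' m : ℕ, 1 / (((m : ℝ) + a) * ((m : ℝ) + 1))

theorem bernoulliPoly_ofReal (n : ℕ) (x : ℝ) :
    (bernoulliPoly n x : ℂ) = Polynomial.aeval (x : ℂ) (Polynomial.bernoulli n) := by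
  have h := Polynomial.aeval_algebraMap_apply ℂ x (Polynomial.bernoulli n)
  simp only [Complex.coe_algebraMap] at h
  rw [h, bernoulliPoly, Polynomial.eval_map_algebraMap]

theorem sum_bernoulliPoly (n : ℕ) (x : ℝ) :
    ∑ k ∈ Finset.range (n + 1), ((n + 1).choose k : ℝ) * bernoulliPoly k x = (n + 1) * x ^ n := by
  have h := congrArg (fun p => Polynomial.eval x (p.map (algebraMap ℚ ℝ)))
    (Polynomial.sum_bernoulli n)
  simpa [Polynomial.map_sum, Polynomial.eval_finsetSum, Polynomial.smul_eq_C_mul,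
    Polynomial.map_mul, bernoulliPoly, add_mul] using h

theorem sum_bernoulliPoly_div_factorial (n : ℕ) (x : ℝ) :
    ∑ k ∈ Finset.range (n + 1),
      bernoulliPoly k x / (k.factorial : ℝ) / ((n + 1 - k).factorial : ℝ) =
        x ^ n / (n.factorial : ℝ) := by
  have h := sum_bernoulliPoly n x
  have hn : ((n + 1).factorial : ℝ) ≠ 0 := by positivity
  have e : ∑ k ∈ Finset.range (n + 1),
      bernoulliPoly k x / (k.factorial : ℝ) / ((n + 1 - k).factorial : ℝ) =
      (∑ k ∈ Finset.range (n + 1), ((n + 1).choose k : ℝ) * bernoulliPoly k x) /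
        ((n + 1).factorial : ℝ) := by
    rw [Finset.sum_div]
    refine Finset.sum_congr rfl fun k hk => ?_
    rw [Nat.cast_choose ℝ (by simp at hk; omega : k ≤ n + 1)]
    field_simp
  rw [e, h, Nat.factorial_succ]
  push_cast
  field_simp

theorem abs_bernoulliPoly_div_factorial_le (n : ℕ) (x : ℝ) :
    |bernoulliPoly n x / (n.factorial : ℝ)| ≤ 2 * Real.exp |x| * 2 ^ n := by
  induction n using Nat.strong_induction_on with
  | _ n ih =>
    have h := sum_bernoulliPoly_div_factorial n x
    rw [Finset.sum_range_succ] at h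
    simp only [Nat.add_sub_cancel_left, Nat.factorial_one, Nat.cast_one, div_one] at h
    have h1 : |x ^ n / (n.factorial : ℝ)| ≤ Real.exp |x| := by
      rw [abs_div, abs_pow, Nat.abs_cast]
      exact Real.pow_div_factorial_le_exp _ (abs_nonneg x) n
    have h2 : |∑ k ∈ Finset.range n,
        bernoulliPoly k x / (k.factorial : ℝ) / ((n + 1 - k).factorial : ℝ)| ≤
        ∑ k ∈ Finset.range n, Real.exp |x| * 2 ^ k := by
      refine (Finset.abs_sum_le_sum_abs _ _).trans (Finset.sum_le_sum fun k hk => ?_)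
      have hk' := Finset.mem_range.mp hk
      have h3 : (2 : ℝ) ≤ ((n + 1 - k).factorial : ℝ) := by
        exact_mod_cast (Nat.factorial_le (show 2 ≤ n + 1 - k by omega))
      rw [abs_div, Nat.abs_cast, div_le_iff₀ (by positivity)]
      have := ih k hk'
      have h4 : 0 ≤ Real.exp |x| * 2 ^ k := by positivity
      nlinarith
    rw [← Finset.mul_sum, geom_sum_eq (by norm_num)] at h2
    rw [abs_le] at *
    have := Real.exp_pos |x|
    constructor <;> nlinarith

theorem tsum_bernoulliPoly_mul_exp_sub_one (a : ℝ) (s : ℂ)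
    (hs : Summable fun n : ℕ => ‖(bernoulliPoly n a : ℂ) / (n.factorial : ℂ) * s ^ n‖) :
    (∑' n : ℕ, (bernoulliPoly n a : ℂ) / (n.factorial : ℂ) * s ^ n) * (Complex.exp s - 1) =
      s * Complex.exp (a * s) := by
  have hexp : ∀ z : ℂ, HasSum (fun n : ℕ => z ^ n / (n.factorial : ℂ)) (Complex.exp z) := by
    intro z
    rw [Complex.exp_eq_exp_ℂ]
    exact NormedSpace.expSeries_div_hasSum_exp z
  have hE : HasSum (fun n : ℕ => PowerSeries.coeff n (PowerSeries.exp ℂ - 1) * s ^ n)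
      (Complex.exp s - 1) := by
    have h0 : HasSum (fun n : ℕ => if n = 0 then (1 : ℂ) else 0) 1 := hasSum_ite_eq 0 1
    refine (funext fun n => ?_ : _ = fun n : ℕ => _) ▸ (hexp s).sub h0
    rcases n with _ | n
    · simp
    · simp [PowerSeries.coeff_exp, PowerSeries.coeff_one]
      ring
  have hEn : Summable fun n : ℕ => ‖PowerSeries.coeff n (PowerSeries.exp ℂ - 1) * s ^ n‖ :=
    hE.summable.norm
  rw [← hE.tsum_eq, tsum_mul_tsum_eq_tsum_sum_antidiagonal_of_summable_norm hs hEn]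
  have key := Polynomial.bernoulli_generating_function (a : ℂ)
  have hR : HasSum (fun n : ℕ => PowerSeries.coeff n
      (PowerSeries.X * PowerSeries.rescale (a : ℂ) (PowerSeries.exp ℂ)) * s ^ n)
      (s * Complex.exp (a * s)) := by
    rw [← hasSum_nat_add_iff' 1]
    simp only [PowerSeries.coeff_succ_X_mul, Finset.sum_range_one, PowerSeries.coeff_zero_X_mul,
      zero_mul, sub_zero]
    refine (funext fun n => ?_ : _ = fun n : ℕ => _) ▸ (hexp (a * s)).mul_left s
    simp [PowerSeries.coeff_rescale, PowerSeries.coeff_exp]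
    ring
  rw [← hR.tsum_eq]
  refine tsum_congr fun n => ?_
  rw [← key, PowerSeries.coeff_mul, Finset.sum_mul]
  refine Finset.sum_congr rfl fun p hp => ?_
  rw [← Finset.HasAntidiagonal.mem_antidiagonal.mp hp, bernoulliPoly_ofReal, PowerSeries.coeff_mk]
  simp [pow_add, Rat.smul_def]
  ring

theorem natCast_add_ofReal_ne_zero {a : ℝ} (ha : ∀ k : ℕ, a ≠ -(k : ℝ)) (m : ℕ) :
    (m : ℂ) + (a : ℂ) ≠ 0 := fun h => ha m <| by
  have : (m : ℝ) + a = 0 := by exact_mod_cast h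
  linarith

theorem norm_exp_neg_ofReal_mul_lt_one {w : ℂ} (hw : 0 < w.re) {t : ℝ} (ht : 0 < t) :
    ‖Complex.exp (-(t * w))‖ < 1 := by
  have := mul_pos ht hw
  simpa [Complex.norm_exp] using this

theorem summable_norm_mul_pow_of_summable_div_succ {c : ℕ → ℂ}
    (hc : Summable fun n : ℕ => c n / ((n : ℂ) + 1)) {r : ℝ} (h0 : 0 ≤ r) (h1 : r < 1) :
    Summable fun n : ℕ => ‖c n‖ * r ^ n := by
  obtain ⟨K, hK⟩ := hc.norm.tendsto_atTop_zero.bddAbove_range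
  have hs : Summable fun n : ℕ => K * (((n : ℝ) + 1) * r ^ n) := by
    have h2 := summable_pow_mul_geometric_of_norm_lt_one 1
      (show ‖r‖ < 1 by rwa [Real.norm_of_nonneg h0])
    have h3 := summable_geometric_of_lt_one h0 h1
    refine ((h2.add h3).congr fun n => ?_).mul_left K
    ring
  refine hs.of_nonneg_of_le (fun n => by positivity) fun n => ?_
  have h4 : ‖c n / ((n : ℂ) + 1)‖ ≤ K := hK ⟨n, rfl⟩
  have h5 : ‖(n : ℂ) + 1‖ = (n : ℝ) + 1 := by
    exact_mod_cast Complex.norm_natCast (n + 1)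
  rw [norm_div, h5, div_le_iff₀ (by positivity)] at h4
  rw [← mul_assoc]
  gcongr

theorem continuousOn_tsum_div_succ_mul_pow {c : ℕ → ℂ}
    (hc : Summable fun n : ℕ => c n / ((n : ℂ) + 1)) :
    ContinuousOn (fun t : ℝ => ∑' n : ℕ, c n / ((n : ℂ) + 1) * (t : ℂ) ^ (n + 1)) (Icc 0 1) := by
  refine continuousOn_tsum (fun n => by fun_prop) hc.norm fun n t ht => ?_
  rw [norm_mul, norm_pow, Complex.norm_real, Real.norm_of_nonneg ht.1]
  exact mul_le_of_le_one_right (norm_nonneg _) (pow_le_one₀ ht.1 ht.2)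

theorem hasDerivAt_tsum_div_succ_mul_pow {c : ℕ → ℂ}
    (hc : Summable fun n : ℕ => c n / ((n : ℂ) + 1)) {t : ℝ} (ht : t ∈ Ioo (0 : ℝ) 1) :
    HasDerivAt (fun t : ℝ => ∑' n : ℕ, c n / ((n : ℂ) + 1) * (t : ℂ) ^ (n + 1))
      (∑' n : ℕ, c n * (t : ℂ) ^ n) t := by
  obtain ⟨r, hr, hr1⟩ := exists_between ht.2
  have hr0 : 0 < r := ht.1.trans hr
  refine hasDerivAt_tsum_of_isPreconnected
    (g := fun (n : ℕ) (t : ℝ) => c n / ((n : ℂ) + 1) * (t : ℂ) ^ (n + 1))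
    (g' := fun (n : ℕ) (t : ℝ) => c n * (t : ℂ) ^ n) (t := Ioo (-r) r) (y₀ := 0)
    (summable_norm_mul_pow_of_summable_div_succ hc hr0.le hr1) isOpen_Ioo isPreconnected_Ioo
    (fun n y _ => ?_) (fun n y hy => ?_) ⟨by linarith, hr0⟩ ?_ ⟨by linarith [ht.1], hr⟩
  · have h := ((hasDerivAt_pow (n + 1) (y : ℂ)).comp_ofReal).const_mul (c n / ((n : ℂ) + 1))
    refine h.congr_deriv ?_
    have : (n : ℂ) + 1 ≠ 0 := Nat.cast_add_one_ne_zero n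
    push_cast
    field_simp
  · rw [norm_mul, norm_pow, Complex.norm_real]
    gcongr
    exact (abs_lt.mpr hy).le
  · simp

theorem hasDerivAt_tsum_exp_neg_mul_div {w : ℂ} (hw : 0 < w.re) {a : ℝ}
    (ha : ∀ k : ℕ, a ≠ -(k : ℝ)) {t : ℝ} (ht : 0 < t) :
    HasDerivAt (fun t : ℝ => ∑' m : ℕ,
      Complex.exp (-(t * w) * ((m : ℂ) + (a : ℂ))) / ((m : ℂ) + (a : ℂ)))
      (-w * Complex.exp (-(t * w) * a) / (1 - Complex.exp (-(t * w)))) t := by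
  obtain ⟨ε, hε, hεt⟩ := exists_between ht
  have hq : Real.exp (-(ε * w.re)) < 1 := by
    rw [Real.exp_lt_one_iff]
    nlinarith
  have hgeo := summable_geometric_of_lt_one (Real.exp_pos _).le hq
  have hterm : ∀ (s : ℝ) (m : ℕ), Complex.exp (-(s * w) * ((m : ℂ) + (a : ℂ))) =
      Complex.exp (-(s * w) * a) * Complex.exp (-(s * w)) ^ m := by
    intro s m
    rw [← Complex.exp_nat_mul, ← Complex.exp_add]
    congr 1
    ring
  have hnorm : ∀ s : ℝ, ‖Complex.exp (-(s * w))‖ = Real.exp (-(s * w.re)) := by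
    intro s
    rw [Complex.norm_exp]
    simp
  have hd : HasDerivAt (fun t : ℝ => ∑' m : ℕ,
      Complex.exp (-(t * w) * ((m : ℂ) + (a : ℂ))) / ((m : ℂ) + (a : ℂ)))
      (∑' m : ℕ, -w * (Complex.exp (-(t * w) * a) * Complex.exp (-(t * w)) ^ m)) t := by
    refine hasDerivAt_tsum_of_isPreconnected
      (g := fun (m : ℕ) (t : ℝ) =>
        Complex.exp (-(t * w) * ((m : ℂ) + (a : ℂ))) / ((m : ℂ) + (a : ℂ)))
      (g' := fun (m : ℕ) (t : ℝ) =>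
        -w * (Complex.exp (-(t * w) * a) * Complex.exp (-(t * w)) ^ m))
      (t := Ioo ε (t + 1)) (y₀ := t)
      (hgeo.mul_left (‖w‖ * Real.exp ((t + 1) * w.re * |a|))) isOpen_Ioo isPreconnected_Ioo
      (fun n y _ => ?_) (fun n y hy => ?_) ⟨hεt, by linarith⟩ ?_ ⟨hεt, by linarith⟩
    · rw [← hterm]
      have h1 : HasDerivAt (fun y : ℝ => -((y : ℂ) * w) * ((n : ℂ) + (a : ℂ)))
          (-(1 * w) * ((n : ℂ) + (a : ℂ))) y :=
        by
          simpa using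
            ((((hasDerivAt_id y).ofReal_comp).mul_const w).neg).mul_const ((n : ℂ) + (a : ℂ))
      refine HasDerivAt.congr_deriv (h1.cexp.div_const ((n : ℂ) + (a : ℂ))) ?_
      have := natCast_add_ofReal_ne_zero ha n
      field_simp
    · rw [norm_mul, norm_neg, norm_mul, norm_pow, hnorm, mul_assoc]
      have hy0 : 0 < y := hε.trans hy.1
      gcongr
      · rw [Complex.norm_exp]
        gcongr
        have h1 : (-((y : ℂ) * w) * a).re = y * w.re * (-a) := by simp
        rw [h1]
        have h2 := neg_le_abs a
        have h3 := abs_nonneg a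
        have h4 := hy.2
        exact (mul_le_mul_of_nonneg_left h2 (by positivity)).trans (by gcongr)
      · exact hy.1.le
    · have hs : Summable fun m : ℕ => ‖Complex.exp (-(t * w) * a)‖ *
          Real.exp (-(t * w.re)) ^ m * ‖((m : ℂ) + a)⁻¹‖ := by
        have hlim : Tendsto (fun m : ℕ => ‖((m : ℂ) + a)⁻¹‖) atTop (𝓝 0) := by
          have h1 : Tendsto (fun m : ℕ => ((m : ℝ) + a)⁻¹) atTop (𝓝 0) :=
            (tendsto_atTop_add_const_right _ a tendsto_natCast_atTop_atTop).inv_tendsto_atTop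
          have h2 := h1.norm
          rw [norm_zero] at h2
          refine h2.congr fun m => ?_
          rw [← Complex.norm_real]
          push_cast
          rfl
        obtain ⟨K, hK⟩ := hlim.bddAbove_range
        have hg := (summable_geometric_of_lt_one (Real.exp_pos (-(t * w.re))).le
          (by rw [Real.exp_lt_one_iff]; nlinarith)).mul_left ‖Complex.exp (-(t * w) * a)‖
        refine (hg.mul_right K).of_nonneg_of_le (fun m => by positivity) fun m => ?_
        gcongr
        exact hK ⟨m, rfl⟩
      refine Summable.of_norm (hs.congr fun m => ?_)
      rw [hterm, norm_div, norm_mul, norm_pow, hnorm, norm_inv, div_eq_mul_inv]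
  refine hd.congr_deriv ?_
  rw [tsum_mul_left, tsum_mul_left,
    tsum_geometric_of_norm_lt_one (norm_exp_neg_ofReal_mul_lt_one hw ht)]
  ring

theorem summable_one_div_add_mul_add_one (a : ℝ) :
    Summable fun m : ℕ => 1 / (((m : ℝ) + a) * ((m : ℝ) + 1)) := by
  have h1 : Tendsto (fun m : ℕ => (m : ℝ) + a) atTop atTop :=
    tendsto_atTop_add_const_right _ a tendsto_natCast_atTop_atTop
  have hs : Summable fun m : ℕ => 2 * (1 / ((m : ℝ)) ^ 2) :=
    (Real.summable_one_div_nat_pow.mpr one_lt_two).mul_left 2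
  refine Summable.of_norm_bounded_eventually_nat hs ?_
  filter_upwards [tendsto_natCast_atTop_atTop.eventually_ge_atTop (2 * |a|),
    eventually_gt_atTop 0] with m hm hm0
  have hm0' : (0 : ℝ) < m := by exact_mod_cast hm0
  have h2 : (m : ℝ) / 2 ≤ m + a := by linarith [neg_abs_le a]
  have h3 : 0 < (m : ℝ) + a := by linarith
  rw [Real.norm_of_nonneg (by positivity)]
  calc 1 / (((m : ℝ) + a) * ((m : ℝ) + 1)) ≤ 1 / ((m : ℝ) / 2 * m) := by
        gcongr
        linarith
    _ = 2 * (1 / (m : ℝ) ^ 2) := by field_simp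

theorem tsum_exp_neg_mul_div {w : ℂ} (hw : 0 < w.re) {a : ℝ}
    (ha : ∀ k : ℕ, a ≠ -(k : ℝ)) {t : ℝ} (ht : 0 < t) :
    ∑' m : ℕ, Complex.exp (-(t * w) * ((m : ℂ) + (a : ℂ))) / ((m : ℂ) + (a : ℂ)) =
      Complex.exp (-(t * w) * a) *
        ((∑' m : ℕ, ((1 - a) * (1 / (((m : ℝ) + a) * ((m : ℝ) + 1))) : ℝ) *
            Complex.exp (-(t * w)) ^ m) +
          Complex.exp (t * w) * -Complex.log (1 - Complex.exp (-(t * w)))) := by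
  have hq := norm_exp_neg_ofReal_mul_lt_one hw ht
  have hlog := (Complex.hasSum_taylorSeries_neg_log' hq).mul_left (Complex.exp (t * w))
  have hs : Summable fun m : ℕ => ((1 - a) * (1 / (((m : ℝ) + a) * ((m : ℝ) + 1))) : ℝ) *
      Complex.exp (-(t * w)) ^ m := by
    refine Summable.of_norm_bounded
      ((summable_one_div_add_mul_add_one a).mul_left (1 - a)).norm fun m => ?_
    rw [norm_mul, norm_pow, Complex.norm_real]
    exact mul_le_of_le_one_right (norm_nonneg _) (pow_le_one₀ (norm_nonneg _) hq.le)
  rw [← ((hs.hasSum.add hlog).mul_left (Complex.exp (-(t * w) * a))).tsum_eq]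
  refine tsum_congr fun m => ?_
  have h1 := natCast_add_ofReal_ne_zero ha m
  have h2 : (m : ℂ) + 1 ≠ 0 := Nat.cast_add_one_ne_zero m
  have h3 : Complex.exp (-(t * w) * ((m : ℂ) + (a : ℂ))) =
      Complex.exp (-(t * w) * a) * Complex.exp (-(t * w)) ^ m := by
    rw [← Complex.exp_nat_mul, ← Complex.exp_add]
    congr 1
    ring
  have h4 : Complex.exp (t * w) * Complex.exp (-(t * w)) ^ (m + 1) =
      Complex.exp (-(t * w)) ^ m := by
    rw [pow_succ', ← mul_assoc, ← Complex.exp_add]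
    simp
  rw [h3, ← mul_div_assoc (Complex.exp (t * w)), h4]
  push_cast
  field_simp
  ring

theorem tendsto_tsum_mul_exp_pow {w : ℂ} (hw : 0 < w.re) (a : ℝ) :
    Tendsto (fun t : ℝ => ∑' m : ℕ, ((1 - a) * (1 / (((m : ℝ) + a) * ((m : ℝ) + 1))) : ℝ) *
      Complex.exp (-(t * w)) ^ m) (𝓝[>] 0) (𝓝 (Cconst a : ℂ)) := by
  have hC : (Cconst a : ℂ) =
      ∑' m : ℕ, (((1 - a) * (1 / (((m : ℝ) + a) * ((m : ℝ) + 1))) : ℝ) : ℂ) := by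
    rw [Cconst, ← tsum_mul_left, Complex.ofReal_tsum]
  rw [hC]
  refine tendsto_tsum_of_dominated_convergence
    ((summable_one_div_add_mul_add_one a).mul_left (1 - a)).norm (fun m => ?_) ?_
  · have h : Continuous fun t : ℝ =>
        (((1 - a) * (1 / (((m : ℝ) + a) * ((m : ℝ) + 1))) : ℝ) : ℂ) *
          Complex.exp (-(t * w)) ^ m := by fun_prop
    have h0 := (h.tendsto 0).mono_left (nhdsWithin_le_nhds (s := Ioi 0))
    simpa using h0
  · filter_upwards [self_mem_nhdsWithin] with t ht m
    have hq := norm_exp_neg_ofReal_mul_lt_one hw ht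
    rw [norm_mul, norm_pow, Complex.norm_real]
    exact mul_le_of_le_one_right (norm_nonneg _) (pow_le_one₀ (norm_nonneg _) hq.le)

theorem tendsto_inv_mul_exp_mul_sub_one (z : ℂ) :
    Tendsto (fun t : ℝ => (t : ℂ)⁻¹ * (Complex.exp (t * z) - 1)) (𝓝[>] 0) (𝓝 z) := by
  have h1 : HasDerivAt (fun t : ℝ => Complex.exp (t * z)) z 0 := by
    have h2 : HasDerivAt (fun t : ℝ => (t : ℂ) * z) (1 * z) 0 := by
      simpa using ((hasDerivAt_id (0 : ℝ)).ofReal_comp).mul_const z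
    simpa using h2.cexp
  have h3 := h1.tendsto_slope_zero_right
  simpa [Complex.real_smul] using h3

theorem tendsto_log_one_sub_exp_sub_log {w : ℂ} (hw : 0 < w.re) :
    Tendsto (fun t : ℝ => Complex.log (1 - Complex.exp (-(t * w))) - Real.log t)
      (𝓝[>] 0) (𝓝 (Complex.log w)) := by
  have h1 : Tendsto (fun t : ℝ => (t : ℂ)⁻¹ * (1 - Complex.exp (-(t * w)))) (𝓝[>] 0) (𝓝 w) := by
    have h := (tendsto_inv_mul_exp_mul_sub_one (-w)).neg
    rw [neg_neg] at h
    refine h.congr fun t => ?_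
    rw [mul_neg]
    ring
  have h2 := h1.clog (Or.inl hw)
  refine h2.congr' ?_
  filter_upwards [self_mem_nhdsWithin] with t ht
  have ht' : (0 : ℝ) < t := ht
  have hne : 1 - Complex.exp (-(t * w)) ≠ 0 := by
    intro h
    have := norm_exp_neg_ofReal_mul_lt_one hw ht'
    rw [← sub_eq_zero.mp h] at this
    simp at this
  rw [← Complex.ofReal_inv, Complex.log_ofReal_mul (inv_pos.mpr ht') hne, Real.log_inv]
  push_cast
  ring

theorem tendsto_exp_sub_one_mul_log {w : ℂ} (hw : 0 < w.re) (z : ℂ) :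
    Tendsto (fun t : ℝ => (Complex.exp (t * z) - 1) *
      Complex.log (1 - Complex.exp (-(t * w)))) (𝓝[>] 0) (𝓝 0) := by
  have h0 : Tendsto (fun t : ℝ => (t : ℂ)) (𝓝[>] 0) (𝓝 0) :=
    (Complex.continuous_ofReal.tendsto 0).mono_left nhdsWithin_le_nhds
  have h1 : Tendsto (fun t : ℝ => ((Real.log t * t : ℝ) : ℂ)) (𝓝[>] 0) (𝓝 0) := by
    have h := tendsto_log_mul_rpow_nhdsGT_zero zero_lt_one
    simp only [Real.rpow_one] at h
    exact (Complex.continuous_ofReal.tendsto 0).comp h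
  have h2 := (tendsto_inv_mul_exp_mul_sub_one z).mul
    ((h0.mul (tendsto_log_one_sub_exp_sub_log hw)).add h1)
  simp only [zero_mul, add_zero, mul_zero] at h2
  refine h2.congr' ?_
  filter_upwards [self_mem_nhdsWithin] with t ht
  have ht' : (t : ℂ) ≠ 0 := by exact_mod_cast (show (0 : ℝ) < t from ht).ne'
  push_cast
  field_simp
  ring

theorem tendsto_log_sub_tsum_exp_nhdsGT_zero {w : ℂ} (hw : 0 < w.re) {a : ℝ}
    (ha : ∀ k : ℕ, a ≠ -(k : ℝ)) :
    Tendsto (fun t : ℝ => -(Real.log t + Complex.log w) - (∑' m : ℕ,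
      Complex.exp (-(t * w) * ((m : ℂ) + (a : ℂ))) / ((m : ℂ) + (a : ℂ))) + (Cconst a : ℂ))
      (𝓝[>] 0) (𝓝 0) := by
  have h1 : Tendsto (fun t : ℝ => Complex.exp (-(t * w) * a)) (𝓝[>] 0) (𝓝 1) := by
    have h : Continuous fun t : ℝ => Complex.exp (-(t * w) * a) := by fun_prop
    have h0 := (h.tendsto 0).mono_left (nhdsWithin_le_nhds (s := Ioi 0))
    simpa using h0
  have h2 := (((tendsto_log_one_sub_exp_sub_log hw).add
    (tendsto_exp_sub_one_mul_log hw (w * (1 - a)))).sub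
      (h1.mul (tendsto_tsum_mul_exp_pow hw a))).add_const ((Cconst a : ℂ) - Complex.log w)
  have h3 : Complex.log w + 0 - 1 * (Cconst a : ℂ) + ((Cconst a : ℂ) - Complex.log w) = 0 := by
    ring
  rw [h3] at h2
  refine h2.congr' ?_
  filter_upwards [self_mem_nhdsWithin] with t ht
  have h4 : Complex.exp (t * (w * (1 - a))) =
      Complex.exp (-(t * w) * a) * Complex.exp (t * w) := by
    rw [← Complex.exp_add]
    congr 1
    ring
  rw [tsum_exp_neg_mul_div hw ha ht, h4]
  ring

/-- The identity
`Log(1/w) - ∑_{m≥0} e^{-w(m+a)}/(m+a) + C_a = ∑_{n≥0} B_{n+1}(a)(-w)^{n+1}/((n+1)(n+1)!)`: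
the right-hand series converges for all sufficiently small `|w|`, and the equality holds
for all `w` with `Re(w) > 0` for which the right-hand series converges. -/
theorem log_digamma_series_identity (a : ℝ) (ha : ∀ k : ℕ, a ≠ -(k : ℝ)) :
    (∃ ρ > (0:ℝ), ∀ w : ℂ, ‖w‖ < ρ → Summable (fun n : ℕ =>
      (bernoulliPoly (n + 1) a : ℂ) * (-w) ^ (n + 1) /
        (((n : ℂ) + 1) * ((n + 1).factorial : ℂ)))) ∧
    ∀ w : ℂ, 0 < w.re →
      Summable (fun n : ℕ => (bernoulliPoly (n + 1) a : ℂ) * (-w) ^ (n + 1) /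
        (((n : ℂ) + 1) * ((n + 1).factorial : ℂ))) →
      Complex.log (1 / w) -
          (∑' m : ℕ, Complex.exp (-w * ((m : ℂ) + (a : ℂ))) / ((m : ℂ) + (a : ℂ))) +
          (Cconst a : ℂ) =
        ∑' n : ℕ, (bernoulliPoly (n + 1) a : ℂ) * (-w) ^ (n + 1) /
          (((n : ℂ) + 1) * ((n + 1).factorial : ℂ)) := by
  have hsmall : ∃ ρ > (0 : ℝ), ∀ w : ℂ, ‖w‖ < ρ → Summable (fun n : ℕ =>
      (bernoulliPoly (n + 1) a : ℂ) * (-w) ^ (n + 1) /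
        (((n : ℂ) + 1) * ((n + 1).factorial : ℂ))) := by
    refine ⟨1 / 2, by norm_num, fun w hw => ?_⟩
    have hg : Summable fun n : ℕ => 2 * Real.exp |a| * (2 * ‖w‖) ^ (n + 1) :=
      (((summable_nat_add_iff 1).mpr (summable_geometric_of_lt_one (by positivity)
        (by linarith : 2 * ‖w‖ < 1)))).mul_left _
    refine Summable.of_norm_bounded hg fun n => ?_
    have h1 := abs_bernoulliPoly_div_factorial_le (n + 1) a
    have h2 : ‖(n : ℂ) + 1‖ = (n : ℝ) + 1 := by exact_mod_cast Complex.norm_natCast (n + 1)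
    rw [abs_div, Nat.abs_cast] at h1
    rw [norm_div, norm_mul, norm_mul, h2, norm_pow, norm_neg, Complex.norm_real,
      Complex.norm_natCast, Real.norm_eq_abs]
    calc |bernoulliPoly (n + 1) a| * ‖w‖ ^ (n + 1) / (((n : ℝ) + 1) * ((n + 1).factorial : ℝ))
        = |bernoulliPoly (n + 1) a| / ((n + 1).factorial : ℝ) * ‖w‖ ^ (n + 1) / ((n : ℝ) + 1) := by
          field_simp
      _ ≤ |bernoulliPoly (n + 1) a| / ((n + 1).factorial : ℝ) * ‖w‖ ^ (n + 1) :=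
          div_le_self (by positivity) (by linarith [n.cast_nonneg (α := ℝ)])
      _ ≤ 2 * Real.exp |a| * 2 ^ (n + 1) * ‖w‖ ^ (n + 1) := by gcongr
      _ = 2 * Real.exp |a| * (2 * ‖w‖) ^ (n + 1) := by rw [mul_pow]; ring
  refine ⟨hsmall, fun w hw hsum => ?_⟩
  set c : ℕ → ℂ := fun n =>
    (bernoulliPoly (n + 1) a : ℂ) / ((n + 1).factorial : ℂ) * (-w) ^ (n + 1) with hc
  have hterm : ∀ n : ℕ, (bernoulliPoly (n + 1) a : ℂ) * (-w) ^ (n + 1) /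
      (((n : ℂ) + 1) * ((n + 1).factorial : ℂ)) = c n / ((n : ℂ) + 1) := by
    intro n
    rw [hc, mul_comm ((n : ℂ) + 1), ← div_div, mul_div_right_comm]
  simp only [hterm] at hsum ⊢
  set f : ℝ → ℂ := fun t => -(Real.log t + Complex.log w) - (∑' m : ℕ,
    Complex.exp (-(t * w) * ((m : ℂ) + (a : ℂ))) / ((m : ℂ) + (a : ℂ))) + (Cconst a : ℂ)
  set g : ℝ → ℂ := fun t => ∑' n : ℕ, c n / ((n : ℂ) + 1) * (t : ℂ) ^ (n + 1)
  have hf : ∀ t : ℝ, 0 < t → HasDerivAt f (-(t : ℂ)⁻¹ -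
      -w * Complex.exp (-(t * w) * a) / (1 - Complex.exp (-(t * w)))) t := by
    intro t ht
    have h1 := ((Real.hasDerivAt_log ht.ne').ofReal_comp.add_const (Complex.log w)).neg
    rw [Complex.ofReal_inv] at h1
    exact (h1.sub (hasDerivAt_tsum_exp_neg_mul_div hw ha ht)).add_const _
  have hg : ∀ t ∈ Ioo (0 : ℝ) 1, HasDerivAt g (-(t : ℂ)⁻¹ -
      -w * Complex.exp (-(t * w) * a) / (1 - Complex.exp (-(t * w)))) t := by
    intro t ht
    refine (hasDerivAt_tsum_div_succ_mul_pow hsum ht).congr_deriv ?_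
    have ht0 : (t : ℂ) ≠ 0 := by exact_mod_cast ht.1.ne'
    have hct : ∀ n : ℕ, (bernoulliPoly (n + 1) a : ℂ) / ((n + 1).factorial : ℂ) *
        (-(t * w)) ^ (n + 1) = t * (c n * (t : ℂ) ^ n) := by
      intro n
      rw [hc, ← mul_neg, mul_pow]
      ring
    have hnorm : Summable fun n : ℕ =>
        ‖(bernoulliPoly n a : ℂ) / (n.factorial : ℂ) * (-(t * w)) ^ n‖ := by
      rw [← summable_nat_add_iff 1]
      refine ((summable_norm_mul_pow_of_summable_div_succ hsum ht.1.le ht.2).mul_left t).congr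
        fun n => ?_
      rw [hct, norm_mul (t : ℂ), norm_mul (c n) ((t : ℂ) ^ n), norm_pow (t : ℂ), Complex.norm_real,
        Real.norm_of_nonneg ht.1.le]
    have hgen := tsum_bernoulliPoly_mul_exp_sub_one a (-(t * w)) hnorm
    have hne : 1 - Complex.exp (-(t * w)) ≠ 0 := by
      intro h
      have := norm_exp_neg_ofReal_mul_lt_one hw ht.1
      rw [← sub_eq_zero.mp h] at this
      simp at this
    rw [hnorm.of_norm.tsum_eq_zero_add] at hgen
    simp only [hct, tsum_mul_left] at hgen
    have h0 : bernoulliPoly 0 a = 1 := by simp [bernoulliPoly]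
    simp only [h0, pow_zero, Nat.factorial_zero, Nat.cast_one, Complex.ofReal_one, div_one,
      mul_one] at hgen
    rw [mul_comm (a : ℂ)] at hgen
    simp only [neg_mul] at hgen ⊢
    field_simp
    linear_combination -hgen
  have hconst : ∀ ε ∈ Ioo (0 : ℝ) 1, f 1 - g 1 = f ε - g ε := by
    intro ε hε
    refine constant_of_has_deriv_right_zero (f := fun t => f t - g t) (a := ε) (b := 1)
      ?_ (fun x hx => ?_) 1 ⟨hε.2.le, le_rfl⟩
    · refine ContinuousOn.sub (fun x hx => ?_) ?_
      · exact (hf x (hε.1.trans_le hx.1)).continuousAt.continuousWithinAt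
      · exact (continuousOn_tsum_div_succ_mul_pow hsum).mono (Icc_subset_Icc_left hε.1.le)
    · have hx0 := hε.1.trans_le hx.1
      have h := (hf x hx0).sub (hg x ⟨hx0, hx.2⟩)
      rw [sub_self] at h
      exact h.hasDerivWithinAt
  have hg0 : Tendsto g (𝓝[>] 0) (𝓝 0) := by
    have h := ((continuousOn_tsum_div_succ_mul_pow hsum) 0 ⟨le_rfl, zero_le_one⟩).mono
      (Ioc_subset_Icc_self)
    have h1 : g 0 = 0 := by simp [g]
    rw [ContinuousWithinAt, nhdsWithin_Ioc_eq_nhdsGT zero_lt_one] at h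
    rwa [← h1]
  have hlim := (tendsto_log_sub_tsum_exp_nhdsGT_zero hw ha).sub hg0
  rw [sub_zero] at hlim
  have hfg : f 1 - g 1 = 0 := by
    refine tendsto_nhds_unique (tendsto_const_nhds.congr' ?_) hlim
    filter_upwards [Ioo_mem_nhdsGT zero_lt_one] with ε hε
    exact hconst ε hε
  have harg : w.arg ≠ Real.pi := Complex.slitPlane_arg_ne_pi (Or.inl hw)
  rw [one_div, Complex.log_inv w harg]
  simpa [f, g, sub_eq_zero] using hfg

end
end
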